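/- arXiv:1708.00704 — 2 statements merged into one kernel-verified Lean document; each statement's English description precedes it below -/
import Mathlib

section
/- Let G be a 2-connected graph on n vertices with minimum degree at least k, and let C be a locally maximal cycle in G of length c ≤ n-1. If the clique number of the subgraph induced on V(C) is at least c-k+1, then G is isomorphic to W_{n,k,c} or to Z_{n,k,c}. -/
/-
By local maximality, a path on the vertices of the cycle `C`, together with an ear outside `C` that
joins its ends, is no longer than `C`. For a neighbour `x ∈ C` of a component `R` outside `C`,
2-connectedness and the degree condition give a path in `R` from a neighbour of `x` to a vertex
with `d > 0` neighbours on `C` other than `x`, such that the path has at least `k - d` vertices and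
has more unless it spans `R`. It extends to `d` ears at `x`. If the successors on `C` of both ends
of an ear lie in the clique `K`, then rerouting `C` through the ear and the edge between these
successors gives a longer cycle, and the same goes for vertices further along `C` if the ear is
long. Hence ears force vertices of `C` out of `K`, and counting shows that they would force out `k`
of them, unless `x ∈ K` and the path spans `R` and has exactly `k - d` vertices. As `K` omits at
most `k - 1` vertices of `C`, these equalities hold throughout.

If the vertices outside `C` are independent, then every one of them has exactly `k` neighbours, all
in `K`. The omitted vertices are the successors on `C` of all but one of these neighbours, and
rerouting `C` through them shows that they have the same neighbourhood: this is `W`. If two vertices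
outside `C` are adjacent, then the ears are longer, and the omitted vertices form a segment of `C`
between two vertices `x` and `y` of `K`. All components outside `C` are joined to `x` and `y` only,
and the degree condition makes them and the segment into cliques on `k - 1` vertices joined to both
`x` and `y`: this is `Z`.
-/

open SimpleGraph

/-- A graph is 2-connected: at least 3 vertices and deleting any vertex leaves it connected. -/
def TwoConnected {V : Type*} [Fintype V] (G : SimpleGraph V) : Prop :=
  3 ≤ Fintype.card V ∧
    ∀ v : V, (((⊤ : G.Subgraph).deleteVerts {v}).coe).Connected

/-- `p` is a longest cycle of `G`. -/
def IsLongestCycle {V : Type*} (G : SimpleGraph V) {v0 : V} (p : G.Walk v0 v0) : Prop :=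
  p.IsCycle ∧ ∀ (w : V) (q : G.Walk w w), q.IsCycle → q.length ≤ p.length

/-- `R` is the vertex set of a connected component of `G - Cs` (the graph obtained
from `G` by deleting the vertex set `Cs`). -/
def IsCompOutside {V : Type*} (G : SimpleGraph V) (Cs R : Set V) : Prop :=
  R.Nonempty ∧ Disjoint R Cs ∧ (G.induce R).Connected ∧
    ∀ u ∈ R, ∀ v : V, G.Adj u v → v ∈ R ∪ Cs
/-- An edge (of `Sym2 V`) crossing between `Cs` and its complement: it has an endpoint in
`Cs` and an endpoint outside `Cs`. -/
def crossEdge {V : Type*} (Cs : Set V) (e : Sym2 V) : Prop :=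
  (∃ a ∈ e, a ∈ Cs) ∧ (∃ b ∈ e, b ∉ Cs)

open Classical in
/-- The number of edges in the list `l` having exactly one endpoint in `Cs`. -/
noncomputable def crossCount {V : Type*} (Cs : Set V) (l : List (Sym2 V)) : ℕ :=
  l.countP (fun e => decide (crossEdge Cs e))

/-- The cycle `p` is locally maximal in `G`: there is no cycle `q` with `|E(q)| > |E(p)|`
using at most two edges with exactly one endpoint on `p`. -/
def IsLocallyMaximal {V : Type*} (G : SimpleGraph V) {v0 : V} (p : G.Walk v0 v0) : Prop :=
  p.IsCycle ∧ ∀ (w : V) (q : G.Walk w w), q.IsCycle →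
    ¬ (p.length < q.length ∧ crossCount {x | x ∈ p.support} q.edges ≤ 2)

/-- Degree of a vertex, as the cardinality of its neighbour set. -/
noncomputable def degN {V : Type*} (G : SimpleGraph V) (u : V) : ℕ := (G.neighborSet u).ncard

/-- `W_{n,k,c}`: the graph obtained from a clique on `{0, …, c-k}` by joining each of the
remaining `n-(c-k+1)` vertices to the same `k` vertices `{0, …, k-1}` of the clique. -/
def Wgraph (n k c : ℕ) : SimpleGraph (Fin n) :=
  SimpleGraph.fromRel (fun u v =>
    (u.val < c - k + 1 ∧ v.val < c - k + 1) ∨ u.val < k ∨ v.val < k)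

/-- `Z_{n,k,c}`: the union of a clique on `{0, …, c-k}` and `(n-(c-k+1))/(k-1)` cliques
`K_{k+1}`, any two of which share exactly the two fixed vertices `0, 1`. -/
def Zgraph (n k c : ℕ) : SimpleGraph (Fin n) :=
  SimpleGraph.fromRel (fun u v =>
    (u.val < c - k + 1 ∧ v.val < c - k + 1) ∨
    (u.val ≤ 1 ∧ c - k + 1 ≤ v.val) ∨
    (c - k + 1 ≤ u.val ∧ c - k + 1 ≤ v.val ∧
      (u.val - (c - k + 1)) / (k - 1) = (v.val - (c - k + 1)) / (k - 1)))

section Paths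

variable {V : Type*} {G : SimpleGraph V} {s t C D F J R S : Set V} {a b u v x y : V} {m : ℕ}

/-- `s` is the vertex set of a path of `G` from `x` to `y`: paths only matter through their ends
and their vertices, which are kept as a set so that disjointness and size are statements about
sets. -/
def PathOn (G : SimpleGraph V) (s : Set V) (x y : V) : Prop :=
  ∃ p : G.Walk x y, p.IsPath ∧ {u | u ∈ p.support} = s

theorem isPath_append_cons {p : G.Walk x y} {q : G.Walk a b} (hp : p.IsPath) (hq : q.IsPath)
    (h : G.Adj y a) (hd : Disjoint {u | u ∈ p.support} {u | u ∈ q.support}) :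
    (p.append (.cons h q)).IsPath := by
  rw [Walk.isPath_def, Walk.support_append, Walk.support_cons, List.tail_cons, List.nodup_append']
  exact ⟨hp.support_nodup, hq.support_nodup, fun u hu hu' => Set.disjoint_left.1 hd hu hu'⟩

theorem ncard_support_of_isPath {p : G.Walk x y} (hp : p.IsPath) :
    {u | u ∈ p.support}.ncard = p.length + 1 := by
  classical
  rw [← List.coe_toFinset, Set.ncard_coe_finset, List.toFinset_card_of_nodup hp.support_nodup,
    Walk.length_support]

namespace PathOn

theorem singleton (x : V) : PathOn G {x} x x :=
  ⟨.nil, .nil, by simp⟩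

theorem left_mem : PathOn G s x y → x ∈ s := by
  rintro ⟨p, -, rfl⟩
  exact p.start_mem_support

theorem finite : PathOn G s x y → s.Finite := by
  rintro ⟨p, -, rfl⟩
  exact p.support.finite_toSet

theorem ncard_pos (p : PathOn G s x y) : 0 < s.ncard :=
  (Set.ncard_pos p.finite).2 ⟨x, p.left_mem⟩

theorem symm : PathOn G s x y → PathOn G s y x := by
  rintro ⟨p, hp, rfl⟩
  exact ⟨p.reverse, hp.reverse, by simp⟩

theorem right_mem (p : PathOn G s x y) : y ∈ s :=
  p.symm.left_mem

theorem join (p : PathOn G s x y) (q : PathOn G t a b) (h : G.Adj y a) (hd : Disjoint s t) :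
    PathOn G (s ∪ t) x b := by
  obtain ⟨p, hp, rfl⟩ := p
  obtain ⟨q, hq, rfl⟩ := q
  refine ⟨p.append (.cons h q), isPath_append_cons hp hq h hd, ?_⟩
  ext u
  simp only [Walk.support_append, Walk.support_cons, List.tail_cons, List.mem_append,
    Set.mem_ofPred_eq, Set.mem_union]

end PathOn

theorem exists_pathOn_of_connected (hD : (G.induce D).Connected) (hx : x ∈ D) (hy : y ∈ D) :
    ∃ s ⊆ D, PathOn G s x y := by
  obtain ⟨p, hp⟩ := (hD ⟨x, hx⟩ ⟨y, hy⟩).exists_isPath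
  refine ⟨_, ?_, p.map (Embedding.induce (G := G) D).toHom,
    hp.map (f := (Embedding.induce (G := G) D).toHom) Subtype.val_injective, rfl⟩
  intro u hu
  obtain ⟨w, -, rfl⟩ := List.mem_map.1 (Walk.support_map _ p ▸ hu)
  exact w.2

/-- A path with at least `m` vertices, all outside `C`, can be attached to `x` and `y`. -/
def Ear (G : SimpleGraph V) (C : Set V) (x y : V) (m : ℕ) : Prop :=
  ∃ (s : Set V) (a b : V), Disjoint s C ∧ PathOn G s a b ∧ G.Adj x a ∧ G.Adj b y ∧ m ≤ s.ncard

theorem Ear.symm : Ear G C x y m → Ear G C y x m := by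
  rintro ⟨s, a, b, hd, p, hxa, hby, hm⟩
  exact ⟨s, b, a, hd, p.symm, hby.symm, hxa.symm, hm⟩

theorem ear_one (hb : b ∉ C) (hx : G.Adj b x) (hy : G.Adj b y) : Ear G C x y 1 :=
  ⟨{b}, b, b, by simpa using hb, .singleton b, hx.symm, hy, by simp⟩

theorem isCycle_cons_append_cons {p : G.Walk x y} {q : G.Walk b a} (hp : p.IsPath) (hq : q.IsPath)
    (hax : G.Adj a x) (hyb : G.Adj y b) (hd : Disjoint {u | u ∈ p.support} {u | u ∈ q.support})
    (hlen : 0 < p.length + q.length) : (Walk.cons hax (p.append (.cons hyb q))).IsCycle := by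
  have hpq := isPath_append_cons hp hq hyb hd
  refine (Walk.cons_isCycle_iff _ _).2 ⟨hpq, fun h => ?_⟩
  have := hpq.length_eq_one_of_mem_edges (Sym2.eq_swap ▸ h)
  simp only [Walk.length_append, Walk.length_cons] at this
  omega

theorem crossCount_edges_eq_zero (p : G.Walk x y)
    (h : {u | u ∈ p.support} ⊆ C ∨ Disjoint {u | u ∈ p.support} C) :
    crossCount C p.edges = 0 := by
  classical
  refine List.countP_eq_zero.2 fun e he => ?_
  simp only [decide_eq_true_eq]
  rintro ⟨⟨u, hu, huC⟩, w, hw, hwC⟩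
  rcases h with h | h
  · exact hwC (h (Walk.mem_support_of_mem_edges he hw))
  · exact Set.disjoint_left.1 h (Walk.mem_support_of_mem_edges he hu) huC

theorem crossCount_edges_cons_append_cons_le (p : G.Walk x y) (q : G.Walk b a) (hax : G.Adj a x)
    (hyb : G.Adj y b) (hp : {u | u ∈ p.support} ⊆ C) (hq : Disjoint {u | u ∈ q.support} C) :
    crossCount C (Walk.cons hax (p.append (.cons hyb q))).edges ≤ 2 := by
  have hp0 := crossCount_edges_eq_zero p (.inl hp)
  have hq0 := crossCount_edges_eq_zero q (.inr hq)
  unfold crossCount at *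
  rw [Walk.edges_cons, Walk.edges_append, Walk.edges_cons, List.countP_cons, List.countP_append,
    List.countP_cons, hp0, hq0]
  split_ifs <;> omega

theorem IsLocallyMaximal.ncard_add_le {p : G.Walk v v} (hC : IsLocallyMaximal G p)
    (he : Ear G {u | u ∈ p.support} x y m) (hs : s ⊆ {u | u ∈ p.support}) (hp : PathOn G s x y) :
    s.ncard + m ≤ p.length := by
  obtain ⟨t, a, b, hd, q, hxa, hby, hm⟩ := he
  obtain ⟨w, hw, rfl⟩ := hp
  obtain ⟨w', hw', rfl⟩ := q.symm
  by_contra! hlt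
  have h3 := hC.1.three_le_length
  rw [ncard_support_of_isPath hw] at hlt
  rw [ncard_support_of_isPath hw'] at hm
  refine hC.2 _ _ (isCycle_cons_append_cons hw hw' hxa.symm hby.symm (hd.mono_right hs).symm
    (by omega)) ⟨?_, crossCount_edges_cons_append_cons_le w w' _ _ hs hd⟩
  simp only [Walk.length_cons, Walk.length_append]
  omega

theorem exists_isCompOutside (hu : u ∉ S) : ∃ R, u ∈ R ∧ IsCompOutside G S R := by
  set R : Set V := {w | ∃ p : G.Walk u w, Disjoint {z | z ∈ p.support} S}
  have huR : u ∈ R := ⟨.nil, by simpa using hu⟩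
  refine ⟨R, huR, ⟨u, huR⟩, ?_, ?_, ?_⟩
  · exact Set.disjoint_left.2 fun w ⟨p, hp⟩ => Set.disjoint_left.1 hp p.end_mem_support
  · refine induce_connected_of_patches u huR fun {w} ⟨p, hp⟩ => ?_
    refine ⟨{z | z ∈ p.support}, fun z hz => ?_, p.start_mem_support, p.end_mem_support,
      p.connected_induce_support _ _⟩
    classical
    exact ⟨p.takeUntil z hz, hp.mono_left fun _ h => p.support_takeUntil_subset_support hz h⟩
  · rintro w ⟨p, hp⟩ z hwz
    by_cases hz : z ∈ S
    · exact .inr hz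
    · refine .inl ⟨p.concat hwz, Set.disjoint_left.2 fun a ha => ?_⟩
      rw [Set.mem_ofPred_eq, Walk.support_concat, List.mem_append, List.mem_singleton] at ha
      rcases ha with ha | rfl
      exacts [Set.disjoint_left.1 hp ha, hz]

theorem IsCompOutside.disjoint_of_notMem (hR : IsCompOutside G S R) (hF : IsCompOutside G S F)
    (hu : u ∈ F) (huR : u ∉ R) : Disjoint F R := by
  refine Set.disjoint_left.2 fun w hw hwR => ?_
  obtain ⟨p⟩ := hF.2.2.1 ⟨w, hw⟩ ⟨u, hu⟩
  obtain ⟨d, -, hd, hd'⟩ := p.exists_boundary_dart {z | z.1 ∈ R} hwR huR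
  exact (hR.2.2.2 _ hd _ d.adj).elim hd' (Set.disjoint_left.1 hF.2.1 d.snd.2)

theorem IsCompOutside.subset_sdiff (hF : IsCompOutside G (insert v Dᶜ) F) : F ⊆ D \ {v} := by
  have := Set.subset_compl_iff_disjoint_right.2 hF.2.1
  rwa [Set.insert_eq, Set.compl_union, compl_compl, Set.inter_comm] at this

theorem IsCompOutside.mem_of_adj (hF : IsCompOutside G (insert v Dᶜ) F) {w : V} (hu : u ∈ F)
    (hw : w ∈ D) (hwv : w ≠ v) (huw : G.Adj u w) : w ∈ F :=
  (hF.2.2.2 u hu w huw).resolve_right (by simp [hw, hwv])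

theorem IsCompOutside.connected_induce_sdiff (hF : IsCompOutside G (insert v Dᶜ) F)
    (hD : (G.induce D).Connected) (hv : v ∈ D) : (G.induce (D \ F)).Connected := by
  have hvF : v ∉ F := fun h => (hF.subset_sdiff h).2 rfl
  refine (connected_iff_exists_forall_reachable _).2 ⟨⟨v, hv, hvF⟩, fun ⟨w, hw, hwF⟩ => ?_⟩
  suffices ∀ u : D, ∀ hu : u.1 ∉ F, (G.induce (D \ F)).Reachable ⟨v, hv, hvF⟩ ⟨u, u.2, hu⟩ from
    this ⟨w, hw⟩ hwF
  intro u
  induction (reachable_iff_reflTransGen _ _).1 (hD ⟨v, hv⟩ u) with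
  | refl => exact fun _ => .rfl
  | @tail b c _ hbc ih =>
    intro hc
    by_cases hb : b.1 ∈ F
    · have hcv : c.1 = v := by
        by_contra hcv
        exact hc (hF.mem_of_adj hb c.2 hcv hbc)
      simp only [hcv]
      exact .rfl
    · exact (ih hb).trans (Adj.reachable hbc)

theorem IsCompOutside.exists_adj (hF : IsCompOutside G (insert v Dᶜ) F)
    (hD : (G.induce D).Connected) (hv : v ∈ D) : ∃ u ∈ F, G.Adj v u := by
  obtain ⟨u, hu⟩ := hF.1
  have hFD := hF.subset_sdiff
  obtain ⟨p⟩ := hD ⟨u, (hFD hu).1⟩ ⟨v, hv⟩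
  obtain ⟨d, -, hd, hd'⟩ := p.exists_boundary_dart {w | w.1 ∈ F} hu fun h => (hFD h).2 rfl
  refine ⟨_, hd, ?_⟩
  by_contra hne
  refine hd' (hF.mem_of_adj hd d.snd.2 ?_ d.adj)
  rintro h
  exact hne (h ▸ d.adj.symm)

theorem IsCompOutside.of_insert_compl (hF : IsCompOutside G (insert v Dᶜ) F)
    (hJ : IsCompOutside G (insert u Fᶜ) J) (hv : ∀ w ∈ J, ¬ G.Adj v w) :
    IsCompOutside G (insert u Dᶜ) J := by
  have hFD : F ⊆ D := hF.subset_sdiff.trans Set.sdiff_subset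
  refine ⟨hJ.1, hJ.2.1.mono_right ?_, hJ.2.2.1, fun w hw z hwz => ?_⟩
  · gcongr
  · by_cases hz : z ∈ insert u Dᶜ
    · exact .inr hz
    simp only [Set.mem_insert_iff, Set.mem_compl_iff, not_or, not_not] at hz
    refine .inl (hJ.mem_of_adj hw (hF.mem_of_adj (hJ.subset_sdiff hw).1 hz.2 ?_ hwz) hz.1 hwz)
    rintro rfl
    exact hv w hw hwz.symm

end Paths

section LongPath

variable {V : Type*} {G : SimpleGraph V} {t D F J Y : Set V} {b e u v x y : V} {j k : ℕ}

/-- If the set `Y` is contracted to a vertex `y`, then `D` together with `x`, `y` and the edge `xy`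
induces a 2-connected graph. The condition `cut` expresses this for the vertices `v` of `D`: a
component of `D \ {v}` does not become a component when `v` is deleted. -/
structure IsAttached (G : SimpleGraph V) (D : Set V) (x : V) (Y : Set V) : Prop where
  connected : (G.induce D).Connected
  left : ∃ a ∈ D, G.Adj x a
  right : ∃ b ∈ D, (G.neighborSet b ∩ Y).Nonempty
  cut : ∀ v ∈ D, ∀ J, IsCompOutside G (insert v Dᶜ) J →
    (∃ u ∈ J, G.Adj x u) ∨ ∃ u ∈ J, (G.neighborSet u ∩ Y).Nonempty

/-- `D` contains a path from a neighbour of `x` to a vertex `b` with `d > 0` neighbours in `Y`,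
such that the path has at least `k - d` vertices, with equality only if it exhausts `D`. -/
def HasLongPath (G : SimpleGraph V) (D : Set V) (x : V) (Y : Set V) (k : ℕ) : Prop :=
  ∃ s ⊆ D, ∃ a b, PathOn G s a b ∧ G.Adj x a ∧ (G.neighborSet b ∩ Y).Nonempty ∧
    k ≤ s.ncard + (G.neighborSet b ∩ Y).ncard ∧
    (s = D ∨ k < s.ncard + (G.neighborSet b ∩ Y).ncard)

namespace HasLongPath

theorem prepend (h : HasLongPath G F v Y j) (hFD : F ⊆ D) (htD : t ⊆ D \ F) (p : PathOn G t e v)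
    (hxe : G.Adj x e) (hk : k < j + t.ncard) : HasLongPath G D x Y k := by
  obtain ⟨s, hs, a, b, q, hva, hb, hj, -⟩ := h
  have hts : Disjoint t s := Set.disjoint_left.2 fun w hw hw' => (htD hw).2 (hs hw')
  have hcard := Set.ncard_union_eq hts p.finite q.finite
  exact ⟨t ∪ s, Set.union_subset (htD.trans Set.sdiff_subset) (hs.trans hFD), e, b,
    p.join q hva hts, hxe, hb, by omega, .inr (by omega)⟩

theorem prepend_singleton (h : HasLongPath G (D \ {v}) v Y (k - 1)) (hv : v ∈ D)
    (hxv : G.Adj x v) : HasLongPath G D x Y k := by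
  obtain ⟨s, hs, a, b, q, hva, hb, hk, hs'⟩ := h
  have hvs : v ∉ s := fun h => (hs h).2 rfl
  have hcard := Set.ncard_insert_of_notMem hvs q.finite
  refine ⟨insert v s, Set.insert_subset hv (hs.trans Set.sdiff_subset), v, b,
    (PathOn.singleton v).join q hva (by simpa using hvs), hxv, hb, by omega, ?_⟩
  exact hs'.imp (fun h => by rw [h, Set.insert_sdiff_singleton, Set.insert_eq_of_mem hv])
    fun h => by omega

theorem append (h : HasLongPath G F x {v} k) (hFD : F ⊆ D) (htD : t ⊆ D \ F) (p : PathOn G t v b)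
    (hb : (G.neighborSet b ∩ Y).Nonempty) (hY : Y.Finite) : HasLongPath G D x Y k := by
  obtain ⟨s, hs, a, c, q, hxa, ⟨w, hcw, rfl⟩, hk, -⟩ := h
  have hst : Disjoint s t := Set.disjoint_left.2 fun w hw hw' => (htD hw').2 (hs hw)
  have hcard := Set.ncard_union_eq hst q.finite p.finite
  have hc : (G.neighborSet c ∩ {w}).ncard ≤ 1 :=
    (Set.ncard_le_ncard Set.inter_subset_right).trans_eq (Set.ncard_singleton w)
  have hbpos := (Set.ncard_pos (hY.subset Set.inter_subset_right)).2 hb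
  have htpos := p.ncard_pos
  exact ⟨s ∪ t, Set.union_subset (hs.trans hFD) (htD.trans Set.sdiff_subset), a, b,
    q.join p hcw hst, hxa, hb, by omega, .inr (by omega)⟩

end HasLongPath

theorem IsCompOutside.neighborSet_inter_subset (hF : IsCompOutside G (insert v Dᶜ) F) (hu : u ∈ F) :
    G.neighborSet u ∩ insert x (D ∪ Y) ⊆ G.neighborSet u ∩ insert x (insert v (F ∪ Y)) := by
  rintro w ⟨huw, hw⟩
  refine ⟨huw, ?_⟩
  rcases hw with h | h | h
  · exact .inl h
  · by_cases hwv : w = v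
    exacts [.inr (.inl hwv), .inr (.inr (.inl (hF.mem_of_adj hu h hwv huw)))]
  · exact .inr (.inr (.inr h))

namespace IsAttached

theorem of_not_right (h : IsAttached G D x Y) (hv : v ∈ D) (hF : IsCompOutside G (insert v Dᶜ) F)
    (hFY : ∀ u ∈ F, ¬ (G.neighborSet u ∩ Y).Nonempty) : IsAttached G F x {v} where
  connected := hF.2.2.1
  left := (h.cut v hv F hF).resolve_right fun ⟨u, hu, hu'⟩ => hFY u hu hu'
  right := by
    obtain ⟨u, hu, hvu⟩ := hF.exists_adj h.connected hv
    exact ⟨u, hu, v, hvu.symm, rfl⟩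
  cut u hu J hJ := by
    by_cases hvJ : ∃ w ∈ J, G.Adj v w
    · obtain ⟨w, hw, hvw⟩ := hvJ
      exact .inr ⟨w, hw, v, hvw.symm, rfl⟩
    · push Not at hvJ
      have hJD := hF.of_insert_compl hJ hvJ
      exact (h.cut u (hF.subset_sdiff hu).1 J hJD).imp_right fun ⟨w, hw, hw'⟩ =>
        absurd hw' (hFY w (hJ.subset_sdiff hw).1)

theorem of_forall_right (h : IsAttached G D x Y) (hv : v ∈ D)
    (hF : IsCompOutside G (insert v Dᶜ) F)
    (hY : ∀ v ∈ D, ∀ J, IsCompOutside G (insert v Dᶜ) J →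
      ∃ u ∈ J, (G.neighborSet u ∩ Y).Nonempty) : IsAttached G F v Y where
  connected := hF.2.2.1
  left := hF.exists_adj h.connected hv
  right := hY v hv F hF
  cut u hu J hJ := by
    by_cases hvJ : ∃ w ∈ J, G.Adj v w
    · exact .inl hvJ
    · push Not at hvJ
      exact .inr (hY u (hF.subset_sdiff hu).1 J (hF.of_insert_compl hJ hvJ))

variable [Finite V]

theorem hasLongPath_singleton (h : IsAttached G {v} x Y) (hxv : G.Adj x v)
    (hk : k ≤ (G.neighborSet v ∩ insert x ({v} ∪ Y)).ncard) : HasLongPath G {v} x Y k := by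
  obtain ⟨b, rfl, hb⟩ := h.right
  have hsub : G.neighborSet b ∩ insert x ({b} ∪ Y) ⊆ insert x (G.neighborSet b ∩ Y) := by
    rintro w ⟨hbw, rfl | rfl | hw⟩
    exacts [.inl rfl, absurd hbw G.irrefl, .inr ⟨hbw, hw⟩]
  have hcard := (Set.ncard_le_ncard hsub).trans (Set.ncard_insert_le _ _)
  exact ⟨{b}, subset_rfl, b, b, .singleton b, hxv, hb, by rw [Set.ncard_singleton]; omega, .inl rfl⟩

theorem hasLongPath_of_not_right (h : IsAttached G D x Y) (hv : v ∈ D)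
    (hF : IsCompOutside G (insert v Dᶜ) F)
    (hFY : ∀ u ∈ F, ¬ (G.neighborSet u ∩ Y).Nonempty)
    (hk : ∀ u ∈ D, k ≤ (G.neighborSet u ∩ insert x (D ∪ Y)).ncard)
    (ih : (∀ u ∈ F, k ≤ (G.neighborSet u ∩ insert x (F ∪ {v})).ncard) → HasLongPath G F x {v} k) :
    HasLongPath G D x Y k := by
  have hFD : F ⊆ D := hF.subset_sdiff.trans Set.sdiff_subset
  obtain ⟨b, hb, hbY⟩ := h.right
  obtain ⟨t, ht, p⟩ := exists_pathOn_of_connected (hF.connected_induce_sdiff h.connected hv)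
    ⟨hv, fun h => (hF.subset_sdiff h).2 rfl⟩ ⟨hb, fun h => hFY b h hbY⟩
  refine (ih fun u hu => (hk u (hFD hu)).trans (Set.ncard_le_ncard fun w hw => ?_)).append hFD ht p
    hbY (Set.toFinite Y)
  have hwY : w ∉ Y := fun h => hFY u hu ⟨w, hw.1, h⟩
  have := hF.neighborSet_inter_subset hu hw
  simp only [Set.mem_inter_iff, Set.mem_insert_iff, Set.mem_union, Set.mem_singleton_iff] at this ⊢
  tauto

theorem hasLongPath_of_not_left (h : IsAttached G D x Y) (hv : v ∈ D) (hxv : G.Adj x v)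
    (hF : IsCompOutside G (insert v Dᶜ) F) (hFx : ∀ u ∈ F, ¬ G.Adj x u)
    (hk : ∀ u ∈ D, k ≤ (G.neighborSet u ∩ insert x (D ∪ Y)).ncard)
    (ih : (∀ u ∈ F, k ≤ (G.neighborSet u ∩ insert v (F ∪ Y)).ncard) → HasLongPath G F v Y k) :
    HasLongPath G D x Y k := by
  have hFD : F ⊆ D := hF.subset_sdiff.trans Set.sdiff_subset
  refine (ih fun u hu => (hk u (hFD hu)).trans (Set.ncard_le_ncard fun w hw => ?_)).prepend hFD
    (by simpa using ⟨hv, fun h => (hF.subset_sdiff h).2 rfl⟩) (.singleton v) hxv (by simp)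
  refine ⟨hw.1, (hF.neighborSet_inter_subset hu hw).2.resolve_left ?_⟩
  rintro rfl
  exact hFx u hu hw.1.symm

theorem hasLongPath_of_forall_left (h : IsAttached G D x Y) (hv : v ∈ D) (hxv : G.Adj x v)
    (hleft : ∀ F, IsCompOutside G (insert v Dᶜ) F → ∃ u ∈ F, G.Adj x u)
    (hk : ∀ u ∈ D, k ≤ (G.neighborSet u ∩ insert x (D ∪ Y)).ncard)
    (ih : ∀ F, IsCompOutside G (insert v Dᶜ) F →
      (∀ u ∈ F, k - 1 ≤ (G.neighborSet u ∩ insert v (F ∪ Y)).ncard) →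
        HasLongPath G F v Y (k - 1)) :
    HasLongPath G D x Y k := by
  have exists_comp {u} (hu : u ∈ D \ {v}) := exists_isCompOutside (G := G) (u := u)
    (S := insert v Dᶜ) (by simpa [and_comm] using hu)
  rcases (D \ {v}).eq_empty_or_nonempty with hE | ⟨u, hu⟩
  · obtain rfl : D = {v} := (Set.sdiff_eq_empty.1 hE).antisymm (by simpa using hv)
    exact h.hasLongPath_singleton hxv (hk v rfl)
  obtain ⟨F, -, hF⟩ := exists_comp hu
  have hFD : F ⊆ D := hF.subset_sdiff.trans Set.sdiff_subset
  have hlong : HasLongPath G F v Y (k - 1) := ih F hF fun u hu => by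
    have hsub : G.neighborSet u ∩ insert x (insert v (F ∪ Y)) ⊆
        insert x (G.neighborSet u ∩ insert v (F ∪ Y)) := fun w hw => hw.2.imp_right (⟨hw.1, ·⟩)
    have := (hk u (hFD hu)).trans (Set.ncard_le_ncard (hF.neighborSet_inter_subset hu))
    have := (Set.ncard_le_ncard hsub).trans (Set.ncard_insert_le _ _)
    omega
  by_cases hFeq : F = D \ {v}
  · exact (hFeq ▸ hlong).prepend_singleton hv hxv
  obtain ⟨w, hw, hwF⟩ := Set.exists_of_ssubset (hF.subset_sdiff.ssubset_of_ne hFeq)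
  obtain ⟨F', hwF', hF'⟩ := exists_comp hw
  obtain ⟨e, he, hxe⟩ := hleft F' hF'
  have heD : e ∈ D ∧ e ≠ v := hF'.subset_sdiff he
  have heF : e ∉ F := Set.disjoint_left.1 (hF.disjoint_of_notMem hF' hwF' hwF) he
  obtain ⟨t, ht, p⟩ := exists_pathOn_of_connected (hF.connected_induce_sdiff h.connected hv)
    ⟨heD.1, heF⟩ ⟨hv, fun h => (hF.subset_sdiff h).2 rfl⟩
  have ht1 : 1 < t.ncard := (Set.one_lt_ncard_iff p.finite).2 ⟨e, v, p.left_mem, p.right_mem, heD.2⟩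
  exact hlong.prepend hFD ht p hxe (by omega)

/-- As in the Erdős–Gallai theorem on long paths in 2-connected graphs. -/
theorem hasLongPath (h : IsAttached G D x Y)
    (hk : ∀ u ∈ D, k ≤ (G.neighborSet u ∩ insert x (D ∪ Y)).ncard) : HasLongPath G D x Y k := by
  induction hn : D.ncard using Nat.strong_induction_on generalizing D x Y k with
  | _ n ih =>
  have hlt {v F} (hv : v ∈ D) (hF : IsCompOutside G (insert v Dᶜ) F) : F.ncard < n :=
    hn ▸ Set.ncard_lt_ncard (hF.subset_sdiff.trans_ssubset (Set.sdiff_singleton_ssubset.2 hv))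
  by_cases hright : ∀ v ∈ D, ∀ F, IsCompOutside G (insert v Dᶜ) F →
      ∃ u ∈ F, (G.neighborSet u ∩ Y).Nonempty
  · obtain ⟨v, hv, hxv⟩ := h.left
    by_cases hleft : ∀ F, IsCompOutside G (insert v Dᶜ) F → ∃ u ∈ F, G.Adj x u
    · exact h.hasLongPath_of_forall_left hv hxv hleft hk fun F hF hkF =>
        ih _ (hlt hv hF) (h.of_forall_right hv hF hright) hkF rfl
    · push Not at hleft
      obtain ⟨F, hF, hFx⟩ := hleft
      exact h.hasLongPath_of_not_left hv hxv hF hFx hk fun hkF =>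
        ih _ (hlt hv hF) (h.of_forall_right hv hF hright) hkF rfl
  · push Not at hright
    obtain ⟨v, hv, F, hF, hFY⟩ := hright
    have hFY : ∀ u ∈ F, ¬ (G.neighborSet u ∩ Y).Nonempty := by
      simpa [Set.not_nonempty_iff_eq_empty] using hFY
    exact h.hasLongPath_of_not_right hv hF hFY hk fun hkF =>
      ih _ (hlt hv hF) (h.of_not_right hv hF hFY) hkF rfl

end IsAttached

end LongPath

section Cycles

variable {V : Type*} {G : SimpleGraph V} {C K T : Set V} {c k m : ℕ} {v : ℤ → V}
  {i j a b a' b' : ℤ}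

/-- `C` is the vertex set of a cycle of length `c`, traversed by the `c`-periodic sequence `v`. -/
structure CycleParam (G : SimpleGraph V) (C : Set V) (c : ℕ) (v : ℤ → V) : Prop where
  eq_iff (i j : ℤ) : v i = v j ↔ (c : ℤ) ∣ j - i
  adj (i : ℤ) : G.Adj (v i) (v (i + 1))
  mem_iff (w : V) : w ∈ C ↔ ∃ i, v i = w

/-- A cycle, traversed by `v`, whose paths cannot be extended through ears to cycles longer than
`c`, together with a clique `K` missing fewer than `k` of its vertices. -/
structure CliqueCycle (G : SimpleGraph V) (C K : Set V) (c k : ℕ) (v : ℤ → V) : Prop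
    extends CycleParam G C c v where
  ear_le {x y : V} {m : ℕ} {s : Set V} :
    Ear G C x y m → s ⊆ C → PathOn G s x y → s.ncard + m ≤ c
  clique : G.IsClique K
  subset : K ⊆ C
  missing : (C \ K).ncard < k

theorem exists_cycleParam_of_isCycle {u : V} {p : G.Walk u u} (hp : p.IsCycle) :
    ∃ v, CycleParam G {u | u ∈ p.support} p.length v := by
  have hpos : (0 : ℤ) < p.length := by have := hp.three_le_length; omega
  have hlt (i : ℤ) : (i % p.length).toNat < p.length := by
    have := Int.emod_lt_of_pos i hpos
    omega
  have hnonneg (i : ℤ) : 0 ≤ i % p.length := Int.emod_nonneg i hpos.ne'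
  refine ⟨fun i => p.getVert (i % p.length).toNat, fun i j => ⟨fun h => ?_, fun h => ?_⟩,
    fun i => ?_, fun w => ?_⟩
  · have hij := hp.getVert_injOn' (Nat.le_sub_one_of_lt (hlt i)) (Nat.le_sub_one_of_lt (hlt j)) h
    have hi := hnonneg i
    have hj := hnonneg j
    exact Int.ModEq.dvd (show i % p.length = j % p.length by omega)
  · rw [show i % (p.length : ℤ) = j % p.length from Int.modEq_iff_dvd.2 h]
  · have h0 := hnonneg i
    have hi := hlt i
    convert p.adj_getVert_succ hi using 1
    rw [← Int.emod_add_emod]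
    rcases eq_or_ne (i % (p.length : ℤ) + 1) p.length with h | h
    · rw [h, Int.emod_self, show (i % (p.length : ℤ)).toNat + 1 = p.length by omega]
      simp
    · rw [Int.emod_eq_of_lt (by omega) (by omega)]
      congr 1
      omega
  · rw [Set.mem_ofPred_eq, Walk.mem_support_iff_exists_getVert]
    constructor
    · rintro ⟨n, rfl, hn⟩
      rcases hn.eq_or_lt with rfl | hn
      · exact ⟨0, by simp⟩
      · exact ⟨n, by rw [Int.emod_eq_of_lt (by omega) (by omega), Int.toNat_natCast]⟩
    · rintro ⟨i, rfl⟩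
      exact ⟨_, rfl, (hlt i).le⟩

namespace CycleParam

theorem shift (h : CycleParam G C c v) (q : ℤ) : CycleParam G C c fun i => v (q + i) where
  eq_iff i j := by rw [h.eq_iff, add_sub_add_left_eq_sub]
  adj i := by rw [← add_assoc]; exact h.adj _
  mem_iff w := by rw [h.mem_iff, (Equiv.addLeft q).surjective.exists]; rfl

theorem neg (h : CycleParam G C c v) : CycleParam G C c fun i => v (-i) where
  eq_iff i j := by rw [h.eq_iff, ← dvd_neg, neg_sub, sub_neg_eq_add, neg_add_eq_sub]
  adj i := by simpa using (h.adj (-(i + 1))).symm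
  mem_iff w := by rw [h.mem_iff, (Equiv.neg ℤ).surjective.exists]; rfl

theorem mem (h : CycleParam G C c v) (i : ℤ) : v i ∈ C :=
  (h.mem_iff _).2 ⟨i, rfl⟩

theorem nontrivial (h : CycleParam G C c v) : C.Nontrivial :=
  ⟨v 0, h.mem 0, v (0 + 1), h.mem _, (h.adj 0).ne⟩

theorem period_pos [Finite V] (h : CycleParam G C c v) : 0 < c := by
  refine Nat.pos_of_ne_zero fun hc => not_injective_infinite_finite v fun i j hij => ?_
  rw [h.eq_iff, hc, Nat.cast_zero, zero_dvd_iff] at hij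
  omega

theorem add_period (h : CycleParam G C c v) (i : ℤ) : v (i + c) = v i :=
  (h.eq_iff _ _).2 (by simp)

theorem eq_of_eq (h : CycleParam G C c v) (hij : v i = v j) (h1 : j < i + c) (h2 : i < j + c) :
    i = j := by
  have := Int.eq_zero_of_abs_lt_dvd ((h.eq_iff _ _).1 hij) (by rw [abs_lt]; omega)
  omega

theorem injOn_Ico (h : CycleParam G C c v) : Set.InjOn v (Set.Ico a (a + c)) :=
  fun _ hi _ hj hij => h.eq_of_eq hij (by grind) (by grind)

theorem exists_index (h : CycleParam G C c v) (hc : 0 < c) {w : V} (hw : w ∈ C) :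
    ∃ i : ℤ, 0 ≤ i ∧ i < c ∧ v i = w := by
  obtain ⟨i, rfl⟩ := (h.mem_iff w).1 hw
  refine ⟨i % c, Int.emod_nonneg _ (by omega), Int.emod_lt_of_pos _ (by omega), ?_⟩
  rw [h.eq_iff]
  exact Int.dvd_self_sub_emod

theorem image_subset (h : CycleParam G C c v) (P : Set ℤ) : v '' P ⊆ C := by
  rintro _ ⟨i, -, rfl⟩
  exact h.mem i

theorem ncard_image_Icc (h : CycleParam G C c v) (hab : b < a + c) :
    ((v '' Set.Icc a b).ncard : ℤ) = max (b + 1 - a) 0 := by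
  rw [(h.injOn_Ico.mono (Set.Icc_subset_Ico_right hab)).ncard_image,
    ← Finset.coe_Icc, Set.ncard_coe_finset, Int.card_Icc, Int.toNat_eq_max]

theorem disjoint_image_Icc (h : CycleParam G C c v) (hba : b < a') (hb' : b' < a + c) :
    Disjoint (v '' Set.Icc a b) (v '' Set.Icc a' b') := by
  rw [Set.disjoint_left]
  rintro _ ⟨i, ⟨hai, hib⟩, rfl⟩ ⟨j, ⟨haj, hjb⟩, hij⟩
  have := h.eq_of_eq hij (by omega) (by omega)
  omega

theorem pathOn_Icc (h : CycleParam G C c v) (hab : a ≤ b) (hba : b < a + c) :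
    PathOn G (v '' Set.Icc a b) (v a) (v b) := by
  induction b, hab using Int.leInduction with
  | base => simpa using PathOn.singleton (v a)
  | succ b hab ih =>
    have hd := h.disjoint_image_Icc (a := a) (lt_add_one b) hba
    have := (ih (by omega)).join (t := v '' Set.Icc (b + 1) (b + 1))
      (by simpa using PathOn.singleton (v (b + 1))) (h.adj b) hd
    rwa [← Set.image_union, Set.Icc_self, Set.union_singleton,
      Set.insert_Icc_right_eq_Icc_add_one (by omega)] at this

theorem card_filter_mem (h : CycleParam G C c v) (hc : 0 < c) (hT : T ⊆ C)
    [DecidablePred (v · ∈ T)] : {i ∈ Finset.Ico (0 : ℤ) c | v i ∈ T}.card = T.ncard := by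
  have hinj : Set.InjOn v ({i ∈ Finset.Ico (0 : ℤ) c | v i ∈ T} : Finset ℤ) :=
    (h.injOn_Ico (a := 0)).mono fun i hi => by simpa using (Finset.mem_filter.1 hi).1
  rw [← Set.ncard_coe_finset, ← hinj.ncard_image]
  congr 1
  ext w
  constructor
  · rintro ⟨i, hi, rfl⟩
    exact (Finset.mem_filter.1 hi).2
  · intro hw
    obtain ⟨i, h0, hi, rfl⟩ := h.exists_index hc (hT hw)
    exact ⟨i, by simp [h0, hi, hw], rfl⟩

theorem ncard_eq (h : CycleParam G C c v) (hc : 0 < c) : C.ncard = c := by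
  classical
  rw [← h.card_filter_mem hc subset_rfl, Finset.filter_true_of_mem fun i _ => h.mem i]
  simp

theorem finite (h : CycleParam G C c v) (hc : 0 < c) : C.Finite :=
  Set.finite_of_ncard_pos (by rwa [h.ncard_eq hc])

end CycleParam

namespace CliqueCycle

theorem shift (H : CliqueCycle G C K c k v) (q : ℤ) : CliqueCycle G C K c k fun i => v (q + i) :=
  ⟨H.toCycleParam.shift q, H.ear_le, H.clique, H.subset, H.missing⟩

theorem neg (H : CliqueCycle G C K c k v) : CliqueCycle G C K c k fun i => v (-i) :=
  ⟨H.toCycleParam.neg, H.ear_le, H.clique, H.subset, H.missing⟩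

theorem exists_shift (H : CliqueCycle G C K c k v) {x : V} (hx : x ∈ C) :
    ∃ v', CliqueCycle G C K c k v' ∧ v' 0 = x := by
  obtain ⟨i, rfl⟩ := (H.mem_iff x).1 hx
  exact ⟨_, H.shift i, by rw [add_zero]⟩

theorem ear_dist (H : CliqueCycle G C K c k v) (he : Ear G C (v i) (v j) m) (hij : i < j)
    (hji : j < i + c) : i + m + 1 ≤ j := by
  have hpath := H.pathOn_Icc (a := j) (b := i + c) (by omega) (by omega)
  rw [H.add_period] at hpath
  have hle := H.ear_le he (H.image_subset _) hpath.symm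
  have hcard := H.ncard_image_Icc (a := j) (b := i + c) (by omega)
  omega

theorem ear_adj (H : CliqueCycle G C K c k v) (he : Ear G C (v i) (v j) m) (hia : i < a)
    (haj : a ≤ j) (hjb : j < b) (hbi : b ≤ i + c) (hab : G.Adj (v a) (v b)) :
    i + j + m + 2 ≤ a + b := by
  have hbi' := H.pathOn_Icc (a := b) (b := i + c) hbi (by omega)
  rw [H.add_period] at hbi'
  have haj' := H.pathOn_Icc (a := a) (b := j) haj (by omega)
  have hd := (H.disjoint_image_Icc (a := a) (b' := i + c) hjb (by omega)).symm
  have hle := H.ear_le he (Set.union_subset (H.image_subset _) (H.image_subset _))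
    (hbi'.symm.join haj' hab.symm hd)
  rw [Set.ncard_union_eq hd hbi'.finite haj'.finite] at hle
  have hcard := H.ncard_image_Icc (a := b) (b := i + c) (by omega)
  have hcard' := H.ncard_image_Icc (a := a) (b := j) (by omega)
  omega

theorem ear_clique (H : CliqueCycle G C K c k v) (he : Ear G C (v i) (v j) m) (hia : i < a)
    (haj : a ≤ j) (hjb : j < b) (hbi : b ≤ i + c) (ha : v a ∈ K) (hb : v b ∈ K) :
    i + j + m + 2 ≤ a + b := by
  refine H.ear_adj he hia haj hjb hbi (H.clique ha hb fun h => ?_)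
  have := H.eq_of_eq h (by omega) (by omega)
  omega

theorem ear_clique' (H : CliqueCycle G C K c k v) (he : Ear G C (v i) (v j) m) (hai : a < i)
    (hib : i ≤ b) (hbj : b < j) (hja : j ≤ a + c) (ha : v a ∈ K) (hb : v b ∈ K) :
    a + b + m + 2 ≤ i + j := by
  have := H.neg.ear_clique (i := -j) (j := -i) (a := -b) (b := -a) (m := m)
    (by simpa using he.symm) (by omega) (by omega) (by omega) (by omega) (by simpa using hb)
    (by simpa using ha)
  omega

theorem card_lt_of_notMem (H : CliqueCycle G C K c k v) (hc : 0 < c) {P : Finset ℤ}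
    (hP : ∀ i ∈ P, 0 ≤ i ∧ i < c ∧ v i ∉ K) : P.card < k := by
  classical
  refine lt_of_le_of_lt ?_ H.missing
  rw [← H.card_filter_mem hc Set.sdiff_subset]
  refine Finset.card_le_card fun i hi => ?_
  simpa [H.mem i, and_assoc] using hP i hi

theorem mem_of_notMem_finset (H : CliqueCycle G C K c k v) (hc : 0 < c) {P : Finset ℤ}
    (hP : ∀ i ∈ P, 0 ≤ i ∧ i < c ∧ v i ∉ K) (hPk : k ≤ P.card + 1) (h0 : 0 ≤ i) (hi : i < c)
    (hiP : i ∉ P) : v i ∈ K := by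
  by_contra hiK
  have := H.card_lt_of_notMem hc (P := insert i P) (by simpa [h0, hi, hiK] using hP)
  rw [Finset.card_insert_of_notMem hiP] at this
  omega

end CliqueCycle

end Cycles

section EarSystems

variable {V : Type*} {G : SimpleGraph V} {C K : Set V} {c k m : ℕ} {v : ℤ → V} {Q : Finset ℤ}
  {i q q' : ℤ}

/-- The positions, on a cycle of length `c` through `v 0`, of a nonempty set of vertices that are
joined to `v 0` by ears of size `m` and to each other by nontrivial ears. -/
structure EarSystem (G : SimpleGraph V) (C : Set V) (c : ℕ) (v : ℤ → V) (m : ℕ)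
    (Q : Finset ℤ) : Prop where
  pos : 1 ≤ m
  range : ∀ q ∈ Q, 0 < q ∧ q < c
  nonempty : Q.Nonempty
  left : ∀ q ∈ Q, Ear G C (v 0) (v q) m
  pair : ∀ q ∈ Q, ∀ q' ∈ Q, q ≠ q' → Ear G C (v q) (v q') 1

namespace EarSystem

theorem neg (E : EarSystem G C c v m Q) (hv : CycleParam G C c v) :
    EarSystem G C c (fun i => v (-i)) m (Q.image fun q => c - q) := by
  have hneg (q : ℤ) : v (-(c - q)) = v q := by
    rw [← hv.add_period, neg_sub, sub_add_cancel]
  refine ⟨E.pos, ?_, E.nonempty.image _, ?_, ?_⟩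
  · simp only [Finset.forall_mem_image]
    intro q hq
    have := E.range q hq
    omega
  · simp only [Finset.forall_mem_image, hneg, neg_zero]
    exact E.left
  · simp only [Finset.forall_mem_image, hneg]
    exact fun q hq q' hq' hne => E.pair q hq q' hq' fun h => hne (h ▸ rfl)

theorem period_pos (E : EarSystem G C c v m Q) : 0 < c := by
  obtain ⟨q, hq⟩ := E.nonempty
  have := E.range q hq
  omega

theorem bounds (E : EarSystem G C c v m Q) (H : CliqueCycle G C K c k v) (hq : q ∈ Q) :
    m + 1 ≤ q ∧ q + m + 1 ≤ c := by
  have hqc := E.range q hq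
  have hleft := H.ear_dist (E.left q hq) (by omega) (by omega)
  have hright := H.ear_dist (i := q) (j := 0 + c) (m := m)
    (by rw [H.add_period]; exact (E.left q hq).symm) (by omega) (by omega)
  omega

theorem dist (E : EarSystem G C c v m Q) (H : CliqueCycle G C K c k v) (hq : q ∈ Q)
    (hq' : q' ∈ Q) (hlt : q < q') : q + 2 ≤ q' := by
  have hqc := E.range q hq
  have hqc' := E.range q' hq'
  have := H.ear_dist (E.pair q hq q' hq' hlt.ne) hlt (by omega)
  omega

theorem succ_notMem (E : EarSystem G C c v m Q) (H : CliqueCycle G C K c k v) (hq : q ∈ Q)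
    (hq' : q' ∈ Q) (hne : q ≠ q') (hqK : v (q + 1) ∈ K) : v (q' + 1) ∉ K := by
  intro hqK'
  wlog hlt : q < q' generalizing q q'
  · exact this hq' hq hne.symm hqK' hqK (by omega)
  have hqc := E.range q hq
  have hqc' := E.range q' hq'
  have := H.ear_clique (E.pair q hq q' hq' hne) (a := q + 1) (b := q' + 1) (by omega) (by omega)
    (by omega) (by omega) hqK hqK'
  omega

theorem exists_succ_notMem (E : EarSystem G C c v m Q) (H : CliqueCycle G C K c k v) :
    ∃ R : Finset ℤ, (∀ i ∈ R, i - 1 ∈ Q ∧ v i ∉ K) ∧ Q.card ≤ R.card + 1 := by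
  classical
  refine ⟨{q ∈ Q | v (q + 1) ∉ K}.image (· + 1), ?_, ?_⟩
  · simp only [Finset.forall_mem_image, Finset.mem_filter, add_sub_cancel_right]
    exact fun _ h => h
  · have hone : {q ∈ Q | v (q + 1) ∈ K}.card ≤ 1 := by
      rw [Finset.card_le_one]
      simp only [Finset.mem_filter]
      intro q hq q' hq'
      by_contra hne
      exact E.succ_notMem H hq.1 hq'.1 hne hq.2 hq'.2
    rw [Finset.card_image_of_injective _ (add_left_injective 1),
      ← Finset.card_filter_add_card_filter_not (s := Q) (fun q => v (q + 1) ∈ K)]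
    omega

theorem exists_notMem_finset (E : EarSystem G C c v m Q) (H : CliqueCycle G C K c k v)
    (hno : ∀ i : ℤ, 1 ≤ i → i ≤ m → v i ∉ K) :
    ∃ P : Finset ℤ, (∀ i ∈ P, 0 ≤ i ∧ i < c ∧ v i ∉ K) ∧
      (∀ i ∈ P, 1 ≤ i ∧ i ≤ m ∨ i - 1 ∈ Q) ∧ m + Q.card ≤ P.card + 1 := by
  obtain ⟨R, hR, hQR⟩ := E.exists_succ_notMem H
  have hpos := E.pos
  have hRb (i : ℤ) (hi : i ∈ R) : m + 1 < i ∧ i < c := by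
    have := E.bounds H (hR i hi).1
    omega
  refine ⟨Finset.Icc (1 : ℤ) m ∪ R, fun i hi => ?_, fun i hi => ?_, ?_⟩
  · obtain ⟨q, hq⟩ := E.nonempty
    have hb := E.bounds H hq
    rcases Finset.mem_union.1 hi with hi | hi
    · rw [Finset.mem_Icc] at hi
      exact ⟨by omega, by omega, hno i hi.1 hi.2⟩
    · have := hRb i hi
      exact ⟨by omega, this.2, (hR i hi).2⟩
  · exact (Finset.mem_union.1 hi).imp Finset.mem_Icc.1 fun hi => (hR i hi).1
  · rw [Finset.card_union_of_disjoint, Int.card_Icc]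
    · omega
    · refine Finset.disjoint_left.2 fun i hi hiR => ?_
      have := hRb i hiR
      rw [Finset.mem_Icc] at hi
      omega

theorem card_eq (E : EarSystem G C c v m Q) (H : CliqueCycle G C K c k v) (hk : k ≤ m + Q.card)
    (hno : ∀ i : ℤ, 1 ≤ i → i ≤ m → v i ∉ K) : m + Q.card = k := by
  obtain ⟨P, hP, -, hQP⟩ := E.exists_notMem_finset H hno
  have := H.card_lt_of_notMem E.period_pos hP
  omega

theorem mem_of_pred_notMem (E : EarSystem G C c v m Q) (H : CliqueCycle G C K c k v)
    (hk : k ≤ m + Q.card) (hno : ∀ i : ℤ, 1 ≤ i → i ≤ m → v i ∉ K) (h0 : 0 ≤ i) (hi : i < c)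
    (him : ¬(1 ≤ i ∧ i ≤ m)) (hiQ : i - 1 ∉ Q) : v i ∈ K := by
  obtain ⟨P, hP, hPQ, hQP⟩ := E.exists_notMem_finset H hno
  exact H.mem_of_notMem_finset E.period_pos hP (by omega) h0 hi
    fun hiP => (hPQ i hiP).elim him hiQ

theorem mem_zero (E : EarSystem G C c v m Q) (H : CliqueCycle G C K c k v) (hk : k ≤ m + Q.card)
    (hno : ∀ i : ℤ, 1 ≤ i → i ≤ m → v i ∉ K) : v 0 ∈ K := by
  refine E.mem_of_pred_notMem H hk hno le_rfl (by exact_mod_cast E.period_pos) (by omega)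
    fun h => ?_
  have := E.bounds H h
  omega

theorem eq_singleton (E : EarSystem G C c v m Q) (H : CliqueCycle G C K c k v)
    (hk : k ≤ m + Q.card) (hno : ∀ i : ℤ, 1 ≤ i → i ≤ m → v i ∉ K) (hm : 2 ≤ m) :
    Q = {(m : ℤ) + 1} := by
  have hmem {i : ℤ} := E.mem_of_pred_notMem (i := i) H hk hno
  have hlast : v (-1) ∈ K := by
    obtain ⟨q, hq⟩ := E.nonempty
    have hb := E.bounds H hq
    rw [← H.add_period]
    refine hmem (by omega) (by omega) (by omega) fun h => ?_
    have := E.bounds H h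
    omega
  have hback {q b : ℤ} (hq : q ∈ Q) (hbq : b < q) (hqb : q - m ≤ b) : v b ∉ K := by
    intro hb
    have hbd := E.bounds H hq
    have := H.ear_clique' (E.left q hq) (a := -1) (b := b) (by omega) (by omega) hbq (by omega)
      hlast hb
    omega
  have hQK {q : ℤ} (hq : q ∈ Q) : v q ∈ K := by
    have hbd := E.bounds H hq
    refine hmem (by omega) (by omega) (by omega) fun h => ?_
    have := E.dist H h hq (by omega)
    omega
  refine Finset.eq_singleton_iff_nonempty_unique_mem.2 ⟨E.nonempty, fun q hq => ?_⟩
  have hbd := E.bounds H hq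
  by_contra hne
  refine hback hq (b := q - 1) (by omega) (by omega) (hmem (by omega) (by omega) (by omega) ?_)
  exact fun h => hback hq (by omega) (by omega) (hQK h)

theorem mem_iff (E : EarSystem G C c v m Q) (H : CliqueCycle G C K c k v) (hk : k ≤ m + Q.card)
    (hno : ∀ i : ℤ, 1 ≤ i → i ≤ m → v i ∉ K) (hm : 2 ≤ m) (h0 : 0 ≤ i) (hi : i < c) :
    v i ∈ K ↔ ¬(1 ≤ i ∧ i ≤ m) := by
  refine ⟨fun hiK him => hno i him.1 him.2 hiK, fun him => ?_⟩
  have hQ := E.eq_singleton H hk hno hm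
  have hb := E.bounds H (q := m + 1) (by simp [hQ])
  rw [hQ, Finset.card_singleton] at hk
  refine H.mem_of_notMem_finset E.period_pos (P := Finset.Icc 1 (m : ℤ)) (fun j hj => ?_) ?_ h0 hi
    (by rwa [Finset.mem_Icc])
  · rw [Finset.mem_Icc] at hj
    exact ⟨by omega, by omega, hno j hj.1 hj.2⟩
  · rw [Int.card_Icc]
    omega

theorem add_notMem (E : EarSystem G C c v m Q) (H : CliqueCycle G C K c k v) {a j : ℤ}
    (ha : 1 ≤ a) (haK : v a ∈ K) (hq : q ∈ Q) (hj : 1 ≤ j) (haj : a + j ≤ m + 1) :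
    v (q + j) ∉ K := by
  intro hjK
  have hb := E.bounds H hq
  have := H.ear_clique (E.left q hq) (a := a) (b := q + j) (by omega) (by omega) (by omega)
    (by omega) haK hjK
  omega

theorem pred_notMem (E : EarSystem G C c v m Q) (H : CliqueCycle G C K c k v) {b : ℤ}
    (hb : 1 ≤ b) (hbm : b ≤ m) (hbK : v (-b) ∈ K) (hq : q ∈ Q) : v (q - 1) ∉ K := by
  intro hqK
  have hbd := E.bounds H hq
  have := H.ear_clique' (E.left q hq) (a := -b) (b := q - 1) (by omega) (by omega) (by omega)
    (by omega) hbK hqK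
  omega

theorem add_card_lt (E : EarSystem G C c v m Q) (H : CliqueCycle G C K c k v) {a b : ℤ}
    (ha : 1 ≤ a) (ham : a ≤ m) (haK : v a ∈ K) (hmin : ∀ i, 1 ≤ i → i < a → v i ∉ K)
    (hb : 1 ≤ b) (hbm : b ≤ m) (hbK : v (-b) ∈ K) : m + Q.card < k := by
  obtain ⟨q₀, hq₀, hmax⟩ := Finset.exists_max_image Q id E.nonempty
  obtain ⟨q₁, hq₁, hmin'⟩ := Finset.exists_min_image Q id E.nonempty
  simp only [id] at hmax hmin'
  have hb₀ := E.bounds H hq₀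
  have hb₁ := E.bounds H hq₁
  have hle := hmin' q₀ hq₀
  set I := Finset.Icc 1 (a - 1) with hI
  set J := Finset.Icc (q₀ + 2) (q₀ + (m + 1 - a)) with hJ
  set S := Q.image (· + 1) with hS
  have hSmem : ∀ i ∈ S, q₁ + 1 ≤ i ∧ i ≤ q₀ + 1 ∧ v i ∉ K := by
    rw [hS, Finset.forall_mem_image]
    intro q hq
    exact ⟨by simpa using hmin' q hq, by simpa using hmax q hq,
      E.add_notMem H ha haK hq le_rfl (by omega)⟩
  have hJS : Disjoint J S := by grind [Finset.disjoint_left]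
  have hIJS : Disjoint I (J ∪ S) := by grind [Finset.disjoint_left]
  have hpred : q₁ - 1 ∉ I ∪ (J ∪ S) := by grind
  have hlt := H.card_lt_of_notMem E.period_pos (P := insert (q₁ - 1) (I ∪ (J ∪ S))) fun i hi => by
    rcases Finset.mem_insert.1 hi with rfl | hi
    · exact ⟨by omega, by omega, E.pred_notMem H hb hbm hbK hq₁⟩
    rcases Finset.mem_union.1 hi with hi | hi
    · rw [hI, Finset.mem_Icc] at hi
      exact ⟨by omega, by omega, hmin i hi.1 (by omega)⟩
    rcases Finset.mem_union.1 hi with hi | hi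
    · rw [hJ, Finset.mem_Icc] at hi
      have := E.add_notMem H ha haK hq₀ (j := i - q₀) (by omega) (by omega)
      exact ⟨by omega, by omega, by rwa [add_sub_cancel] at this⟩
    · have := hSmem i hi
      exact ⟨by omega, by omega, this.2.2⟩
  rw [Finset.card_insert_of_notMem hpred, Finset.card_union_of_disjoint hIJS,
    Finset.card_union_of_disjoint hJS, Finset.card_image_of_injective _ (add_left_injective 1),
    Int.card_Icc, Int.card_Icc] at hlt
  omega

theorem notMem_or_notMem (E : EarSystem G C c v m Q) (H : CliqueCycle G C K c k v)
    (hk : k ≤ m + Q.card) :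
    (∀ i : ℤ, 1 ≤ i → i ≤ m → v i ∉ K) ∨ ∀ i : ℤ, 1 ≤ i → i ≤ m → v (-i) ∉ K := by
  classical
  by_contra! hcon
  obtain ⟨⟨a₀, ha₀, ha₀m, ha₀K⟩, b, hb, hbm, hbK⟩ := hcon
  obtain ⟨a, ha, hmin⟩ := Finset.exists_min_image {i ∈ Finset.Icc (1 : ℤ) m | v i ∈ K} id
    ⟨a₀, by simp [*]⟩
  simp only [Finset.mem_filter, Finset.mem_Icc, id] at ha hmin
  refine (E.add_card_lt H ha.1.1 ha.1.2 ha.2 (fun i hi hia hiK => ?_) hb hbm hbK).not_ge hk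
  have := hmin i ⟨⟨hi, by omega⟩, hiK⟩
  omega

theorem add_card_eq_and_mem_zero (E : EarSystem G C c v m Q) (H : CliqueCycle G C K c k v)
    (hk : k ≤ m + Q.card) : m + Q.card = k ∧ v 0 ∈ K := by
  have hcard : (Q.image fun q => (c : ℤ) - q).card = Q.card :=
    Finset.card_image_of_injective _ sub_right_injective
  rcases E.notMem_or_notMem H hk with h | h
  · exact ⟨E.card_eq H hk h, E.mem_zero H hk h⟩
  · rw [← hcard] at hk ⊢
    exact ⟨(E.neg H.toCycleParam).card_eq H.neg hk h,
      by simpa using (E.neg H.toCycleParam).mem_zero H.neg hk h⟩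

theorem exists_cliqueCycle (E : EarSystem G C c v m Q) (H : CliqueCycle G C K c k v)
    (hk : k ≤ m + Q.card) (hm : 2 ≤ m) :
    Q.card = 1 ∧ ∃ v', CliqueCycle G C K c k v' ∧ v' 0 = v 0 ∧ (∀ q ∈ Q, v' (m + 1) = v q) ∧
      ∀ i : ℤ, 0 ≤ i → i < c → (v' i ∈ K ↔ ¬(1 ≤ i ∧ i ≤ m)) := by
  have hcard : (Q.image fun q => (c : ℤ) - q).card = Q.card :=
    Finset.card_image_of_injective _ sub_right_injective
  rcases E.notMem_or_notMem H hk with h | h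
  · have hQ := E.eq_singleton H hk h hm
    exact ⟨by simp [hQ], v, H, rfl, by simp [hQ], fun i => E.mem_iff H hk h hm⟩
  · rw [← hcard] at hk ⊢
    have E' := E.neg H.toCycleParam
    have hQ := E'.eq_singleton H.neg hk h hm
    refine ⟨by simp [hQ], _, H.neg, by simp, fun q hq => ?_, fun i => E'.mem_iff H.neg hk h hm⟩
    have hmq : (c : ℤ) - q = m + 1 := by
      simpa [hQ] using Finset.mem_image_of_mem (fun q => (c : ℤ) - q) hq
    rw [← hmq, neg_sub, ← H.add_period, sub_add_cancel]

end EarSystem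

end EarSystems

section Components

variable {V : Type*} {G : SimpleGraph V} {C J K R s : Set V} {c k : ℕ} {v : ℤ → V}
  {a b u w x z : V}

theorem TwoConnected.exists_adj [Fintype V] (hG : TwoConnected G) (hJ : J.Nonempty) (hx : x ∉ J)
    (hw : w ≠ x) (hwJ : w ∉ J) : ∃ u ∈ J, ∃ z ∉ J, z ≠ x ∧ G.Adj u z := by
  obtain ⟨u, hu⟩ := hJ
  have hux : u ≠ x := fun h => hx (h ▸ hu)
  obtain ⟨p⟩ := (hG.2 x).preconnected ⟨u, by simpa using hux⟩ ⟨w, by simpa using hw⟩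
  obtain ⟨d, -, hd, hd'⟩ := p.exists_boundary_dart {z | z.1 ∈ J} hu hwJ
  have hadj := d.adj
  simp only [Subgraph.coe_adj, Subgraph.deleteVerts_adj, Subgraph.top_adj] at hadj
  exact ⟨_, hd, _, hd', hadj.2.2.2.1, hadj.2.2.2.2⟩

namespace IsCompOutside

theorem exists_neighborSet_inter_nonempty [Fintype V] (hR : IsCompOutside G C R)
    (hG : TwoConnected G) (hC : C.Nontrivial) (hx : x ∈ C) :
    ∃ b ∈ R, (G.neighborSet b ∩ (C \ {x})).Nonempty := by
  have hCR {w : V} (hw : w ∈ C) : w ∉ R := Set.disjoint_right.1 hR.2.1 hw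
  obtain ⟨w, hw, hwx⟩ := hC.exists_ne x
  obtain ⟨u, hu, z, hz, hzx, huz⟩ := hG.exists_adj hR.1 (hCR hx) hwx (hCR hw)
  exact ⟨u, hu, z, huz, (hR.2.2.2 u hu z huz).resolve_left hz, hzx⟩

theorem isAttached [Fintype V] (hR : IsCompOutside G C R) (hG : TwoConnected G)
    (hC : C.Nontrivial) (hx : x ∈ C) (ha : a ∈ R) (hxa : G.Adj x a) :
    IsAttached G R x (C \ {x}) where
  connected := hR.2.2.1
  left := ⟨a, ha, hxa⟩
  right := hR.exists_neighborSet_inter_nonempty hG hC hx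
  cut v hv J hJ := by
    have hxR : x ∉ R := Set.disjoint_right.1 hR.2.1 hx
    have hJR := hJ.subset_sdiff
    obtain ⟨u, hu, z, hz, hzv, huz⟩ := hG.exists_adj hJ.1 (fun h => (hJR h).2 rfl)
      (w := x) (fun h => hxR (h ▸ hv)) (fun h => hxR (hJR h).1)
    have hzC : z ∈ C := (hR.2.2.2 u (hJR hu).1 z huz).resolve_left
      fun hzR => hz (hJ.mem_of_adj hu hzR hzv huz)
    rcases eq_or_ne z x with rfl | hzx
    · exact .inl ⟨u, hu, huz.symm⟩
    · exact .inr ⟨u, hu, z, huz, hzC, hzx⟩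

theorem hasLongPath [Fintype V] (hR : IsCompOutside G C R) (hG : TwoConnected G)
    (hδ : ∀ u, k ≤ degN G u) (hC : C.Nontrivial) (hx : x ∈ C) (ha : a ∈ R) (hxa : G.Adj x a) :
    HasLongPath G R x (C \ {x}) k := by
  refine (hR.isAttached hG hC hx ha hxa).hasLongPath fun u hu => (hδ u).trans ?_
  refine Set.ncard_le_ncard fun w huw => ⟨huw, ?_⟩
  rw [← Set.union_insert, Set.insert_sdiff_singleton, Set.insert_eq_of_mem hx]
  exact hR.2.2.2 u hu w huw

end IsCompOutside

open Classical in
/-- The positions, on a cycle with vertex set `C` traversed by `v`, of the neighbours of `b` on the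
cycle other than `v 0`. -/
noncomputable def attachPositions (G : SimpleGraph V) (C : Set V) (c : ℕ) (v : ℤ → V) (b : V) :
    Finset ℤ :=
  {i ∈ Finset.Ico (0 : ℤ) c | v i ∈ G.neighborSet b ∩ (C \ {v 0})}

theorem mem_attachPositions {i : ℤ} : i ∈ attachPositions G C c v b ↔
    (0 ≤ i ∧ i < c) ∧ G.Adj b (v i) ∧ v i ∈ C ∧ v i ≠ v 0 := by
  classical
  simp [attachPositions]

theorem CycleParam.card_attachPositions (h : CycleParam G C c v) (hc : 0 < c) :
    (attachPositions G C c v b).card = (G.neighborSet b ∩ (C \ {v 0})).ncard := by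
  classical
  exact h.card_filter_mem hc (Set.inter_subset_right.trans Set.sdiff_subset)

theorem CycleParam.earSystem (h : CycleParam G C c v) (hc : 0 < c) (p : PathOn G s a b)
    (hs : Disjoint s C) (ha : G.Adj (v 0) a) (hb : (G.neighborSet b ∩ (C \ {v 0})).Nonempty) :
    EarSystem G C c v s.ncard (attachPositions G C c v b) := by
  have hadj {q : ℤ} (hq : q ∈ attachPositions G C c v b) : G.Adj b (v q) :=
    (mem_attachPositions.1 hq).2.1
  refine ⟨p.ncard_pos, fun q hq => ?_, ?_, fun q hq => ⟨s, a, b, hs, p, ha, hadj hq, le_rfl⟩,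
    fun q hq q' hq' _ => ear_one (Set.disjoint_left.1 hs p.right_mem) (hadj hq) (hadj hq')⟩
  · obtain ⟨hqc, -, -, hq0⟩ := mem_attachPositions.1 hq
    exact ⟨hqc.1.lt_of_ne fun h => hq0 (h ▸ rfl), hqc.2⟩
  · rw [← Finset.card_pos, h.card_attachPositions hc]
    exact (Set.ncard_pos ((h.finite hc).subset
      (Set.inter_subset_right.trans Set.sdiff_subset))).2 hb

namespace CliqueCycle

theorem exists_earSystem [Fintype V] (H : CliqueCycle G C K c k v) (hG : TwoConnected G)
    (hδ : ∀ u, k ≤ degN G u) (hR : IsCompOutside G C R) (ha : a ∈ R) (hxa : G.Adj (v 0) a) :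
    ∃ b ∈ R, EarSystem G C c v R.ncard (attachPositions G C c v b) ∧
      R.ncard + (attachPositions G C c v b).card = k := by
  obtain ⟨s, hs, a', b, p, hxa', hb, hk, hsR⟩ :=
    hR.hasLongPath hG hδ H.nontrivial (H.mem 0) ha hxa
  have hc := H.period_pos
  have E := H.earSystem hc p (hR.2.1.mono_left hs) hxa' hb
  rw [← H.card_attachPositions hc] at hk hsR
  have hcard := (E.add_card_eq_and_mem_zero H hk).1
  obtain rfl := hsR.resolve_right hcard.not_gt
  exact ⟨b, p.right_mem, E, hcard⟩

theorem mem_of_adj [Fintype V] (H : CliqueCycle G C K c k v) (hG : TwoConnected G)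
    (hδ : ∀ u, k ≤ degN G u) (hu : u ∉ C) (hz : z ∈ C) (huz : G.Adj u z) : z ∈ K := by
  obtain ⟨R, huR, hR⟩ := exists_isCompOutside (G := G) hu
  obtain ⟨v, H, rfl⟩ := H.exists_shift hz
  obtain ⟨b, -, E, hk⟩ := H.exists_earSystem hG hδ hR huR huz.symm
  exact (E.add_card_eq_and_mem_zero H hk.ge).2

end CliqueCycle

end Components

section IndependentOutside

variable {V : Type*} {G : SimpleGraph V} {C K N : Set V} {c k : ℕ} {v : ℤ → V} {i j q r : ℤ}
  {b u : V}

theorem exists_eq_erase_of_card_sdiff_le_one {α : Type*} [DecidableEq α] {P M : Finset α}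
    (hPM : (P \ M).card ≤ 1) (hM : M.card < k) (hP : k ≤ P.card) :
    P.card = k ∧ M.card + 1 = k ∧ ∃ j ∈ P, M = P.erase j := by
  have hsplit := Finset.card_sdiff_add_card_inter P M
  have hle := Finset.card_le_card (Finset.inter_subset_right (s₁ := P) (s₂ := M))
  have hMP : P ∩ M = M := Finset.eq_of_subset_of_card_le Finset.inter_subset_right (by omega)
  obtain ⟨j, hj⟩ := Finset.card_eq_one.1 (show (P \ M).card = 1 by omega)
  have hjP : j ∈ P := Finset.sdiff_subset (hj ▸ Finset.mem_singleton_self j)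
  refine ⟨by omega, by omega, j, hjP, ?_⟩
  rw [Finset.erase_eq, ← hj, sdiff_sdiff_right_self, Finset.inf_eq_inter, hMP]

namespace CliqueCycle

theorem exists_notMem_iff (H : CliqueCycle G C K c k v) (hc : 0 < c) (hN : N ⊆ C)
    (hear : ∀ x ∈ N, ∀ y ∈ N, Ear G C x y 1) (hk : k ≤ N.ncard) :
    N.ncard = k ∧ (C \ K).ncard + 1 = k ∧
      ∃ x ∈ N, ∀ i, v (i + 1) ∉ K ↔ v i ∈ N ∧ v i ≠ x := by
  classical
  set P := {i ∈ Finset.Ico (0 : ℤ) c | v i ∈ N} with hP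
  set M := {i ∈ Finset.Ico (0 : ℤ) c | v (1 + i) ∈ C \ K} with hM
  have hPc : P.card = N.ncard := H.card_filter_mem hc hN
  have hMc : M.card = (C \ K).ncard := (H.shift 1).card_filter_mem hc Set.sdiff_subset
  have hPM : (P \ M).card ≤ 1 := by
    rw [Finset.card_le_one]
    intro i hi j hj
    by_contra hne
    wlog hij : i < j generalizing i j
    · exact this j hj i hi (Ne.symm hne) (by omega)
    simp only [P, M, Finset.mem_sdiff, Finset.mem_filter, Finset.mem_Ico, not_and, Set.mem_sdiff,
      not_not] at hi hj
    have := H.ear_clique (hear _ hi.1.2 _ hj.1.2) (a := 1 + i) (b := 1 + j) (by omega) (by omega)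
      (by omega) (by omega) (hi.2 hi.1.1 (H.mem _)) (hj.2 hj.1.1 (H.mem _))
    omega
  obtain ⟨hPk, hMk, j, hj, hMP⟩ :=
    exists_eq_erase_of_card_sdiff_le_one hPM (hMc ▸ H.missing) (hPc ▸ hk)
  rw [hP, Finset.mem_filter, Finset.mem_Ico] at hj
  refine ⟨by omega, by omega, v j, hj.2, fun i => ?_⟩
  obtain ⟨r, hr0, hrc, hr⟩ := H.exists_index hc (H.mem i)
  have hri : v (1 + r) = v (i + 1) := by
    rw [H.eq_iff] at hr ⊢
    rwa [add_comm i, add_sub_add_left_eq_sub]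
  have hrj : v r ≠ v j ↔ r ≠ j :=
    not_congr ⟨fun h => H.eq_of_eq h (by omega) (by omega), congrArg v⟩
  have hrMP := Finset.ext_iff.1 hMP r
  simp only [hM, hP, Finset.mem_erase, Finset.mem_filter, Finset.mem_Ico, Set.mem_sdiff, hr0, hrc,
    H.mem, hri, ← hrj, hr, true_and] at hrMP
  rw [hrMP, and_comm]

theorem exists_add_two_mem (H : CliqueCycle G C K c k v) (hc : 0 < c) (hN : N ⊆ C)
    (hear : ∀ x ∈ N, ∀ y ∈ N, Ear G C x y 1) (hk : k ≤ N.ncard) :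
    ∃ v', CliqueCycle G C K c k v' ∧ v' 0 ∈ N ∧
      (∀ i, v' (i + 1) ∉ K ↔ v' i ∈ N ∧ v' i ≠ v' 0) ∧
      ∀ i, v' i ∈ N → v' i ≠ v' 0 → v' (i + 2) ∈ N := by
  obtain ⟨-, -, x, hx, hxK⟩ := H.exists_notMem_iff hc hN hear hk
  obtain ⟨j, rfl⟩ := (H.mem_iff x).1 (hN hx)
  have hK (i : ℤ) : v (j + (i + 1)) ∉ K ↔ v (j + i) ∈ N ∧ v (j + i) ≠ v (j + 0) := by
    rw [← add_assoc, hxK, add_zero]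
  obtain ⟨-, -, y, -, hyK⟩ := (H.shift j).neg.exists_notMem_iff hc hN hear hk
  refine ⟨_, H.shift j, by rwa [add_zero], hK, fun i hi hi0 => ?_⟩
  have hi1 := (hK i).2 ⟨hi, hi0⟩
  have := (hyK (-(i + 2))).1 (by rwa [show -(-(i + 2) + 1) = i + 1 by ring])
  simpa using this.1

theorem not_adj_of_adj_succ (H : CliqueCycle G C K c k v) (he : Ear G C (v q) (v 0) 1)
    (hr : 1 ≤ r) (hrq : r < q) (hqc : q < c) (hr1 : G.Adj (v (r + 1)) (v 1)) :
    ¬G.Adj (v (q + 1)) (v r) := by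
  intro hadj
  -- The path `v q, …, v (r + 1), v 1, …, v r, v (q + 1), …, v c` covers the cycle.
  have p₁ := H.pathOn_Icc (a := r + 1) (b := q) (by omega) (by omega)
  have p₂ := H.pathOn_Icc (a := 1) (b := r) (by omega) (by omega)
  have p₃ := H.pathOn_Icc (a := q + 1) (b := 0 + c) (by omega) (by omega)
  have d₁₂ := (H.disjoint_image_Icc (a := 1) (a' := r + 1) (lt_add_one r) (b' := q)
    (by omega)).symm
  have d₂₃ := H.disjoint_image_Icc (a := 1) (b := r) (a' := q + 1) (b' := 0 + c) (by omega)
    (by omega)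
  have d₁₃ := H.disjoint_image_Icc (a := r + 1) (a' := q + 1) (b' := 0 + c) (lt_add_one q)
    (by omega)
  have hd := Set.disjoint_union_left.2 ⟨d₁₃, d₂₃⟩
  have p := (p₁.symm.join p₂ hr1 d₁₂).join p₃ hadj.symm hd
  rw [H.add_period] at p
  have hle := H.ear_le he (Set.union_subset (Set.union_subset (H.image_subset _)
    (H.image_subset _)) (H.image_subset _)) p
  rw [Set.ncard_union_eq hd (p₁.finite.union p₂.finite) p₃.finite,
    Set.ncard_union_eq d₁₂ p₁.finite p₂.finite] at hle
  have h₁ := H.ncard_image_Icc (a := r + 1) (b := q) (by omega)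
  have h₂ := H.ncard_image_Icc (a := 1) (b := r) (by omega)
  have h₃ := H.ncard_image_Icc (a := q + 1) (b := 0 + c) (by omega)
  omega

theorem mem_or_succ_mem (H : CliqueCycle G C K c k v)
    (hstep : ∀ i, v i ∈ N → v i ≠ v 0 → v (i + 2) ∈ N) (hi : 0 < i) (hij : i ≤ j) (hjc : j < c)
    (hiN : v i ∈ N) : v j ∈ N ∨ v (j + 1) ∈ N := by
  induction j, hij using Int.leInduction with
  | base => exact .inl hiN
  | succ j hij ih =>
    have hne : v j ≠ v 0 := fun h => by
      have := H.eq_of_eq h (by omega) (by omega)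
      omega
    rw [add_assoc, one_add_one_eq_two]
    exact (ih (by omega)).symm.imp_right fun h => hstep j h hne

theorem neighborSet_subset (H : CliqueCycle G C K c k v)
    (hear : ∀ x ∈ N, ∀ y ∈ N, Ear G C x y 1) (h0 : v 0 ∈ N)
    (hK : ∀ i, v (i + 1) ∉ K ↔ v i ∈ N ∧ v i ≠ v 0)
    (hstep : ∀ i, v i ∈ N → v i ≠ v 0 → v (i + 2) ∈ N) (hq : 0 < q) (hqc : q < c)
    (hqN : v q ∈ N) (hs : G.neighborSet (v (q + 1)) ⊆ C) : G.neighborSet (v (q + 1)) ⊆ N := by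
  intro z hz
  rw [mem_neighborSet] at hz
  obtain ⟨r, hr0, hrc, rfl⟩ := H.exists_index (by omega) (hs hz)
  by_contra hrN
  have hr0 : 0 < r := hr0.lt_of_ne fun h => hrN (h ▸ h0)
  have hadj {i j : ℤ} (hij : i < j) (hji : j < i + c) (hi : v i ∈ N) (hj : v j ∈ N) :
      ¬G.Adj (v (i + 1)) (v (j + 1)) := fun h => by
    have := H.ear_dist (hear _ hi _ hj) hij hji
    have := H.ear_adj (hear _ hi _ hj) (by omega) (by omega) (by omega) (by omega) h
    omega
  have hr1 : v (r - 1) ∉ N := by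
    intro h
    rw [← sub_add_cancel r 1] at hz
    rcases lt_trichotomy q (r - 1) with hlt | rfl | hlt
    · exact hadj hlt (by omega) hqN h hz
    · exact G.irrefl hz
    · exact hadj hlt (by omega) h hqN hz.symm
  have hrq : r < q := by
    by_contra! hle
    have hqr : q ≠ r := fun h => hrN (h ▸ hqN)
    have := H.mem_or_succ_mem hstep hq (j := r - 1) (by omega) (by omega) hqN
    rw [sub_add_cancel] at this
    exact this.elim hr1 hrN
  have hrK : v (r + 1) ∈ K := of_not_not fun h => hrN ((hK r).1 h).1
  have h1K : v 1 ∈ K := of_not_not fun h => ((hK 0).1 (by simpa using h)).2 rfl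
  refine H.not_adj_of_adj_succ (hear _ hqN _ h0) hr0 hrq hqc (H.clique hrK h1K fun h => ?_) hz
  have := H.eq_of_eq h (by omega) (by omega)
  omega

theorem neighborSet_subset_of_notMem (H : CliqueCycle G C K c k v) (hc : 0 < c) (hNK : N ⊆ K)
    (hear : ∀ x ∈ N, ∀ y ∈ N, Ear G C x y 1) (hk : k ≤ N.ncard) (huC : u ∈ C) (hu : u ∉ K)
    (huN : G.neighborSet u ⊆ C) : G.neighborSet u ⊆ N := by
  obtain ⟨v, H, h0, hK, hstep⟩ := H.exists_add_two_mem hc (hNK.trans H.subset) hear hk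
  obtain ⟨i, hi0, hic, rfl⟩ := H.exists_index hc huC
  obtain ⟨q, rfl⟩ : ∃ q, i = q + 1 := ⟨i - 1, by omega⟩
  obtain ⟨hqN, hq0⟩ := (hK q).1 hu
  have hne0 : q + 1 ≠ 0 := fun h => hu (hNK (by rwa [h]))
  have hne : q ≠ 0 := fun h => hq0 (by rw [h])
  exact H.neighborSet_subset hear h0 hK hstep (by omega) (by omega) hqN huN

end CliqueCycle

theorem TwoConnected.two_le_degN [Fintype V] (hG : TwoConnected G) (u : V) : 2 ≤ degN G u := by
  classical
  have hex (x : V) (hx : x ≠ u) : ∃ z, z ≠ x ∧ G.Adj u z := by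
    obtain ⟨w, -, hw⟩ := Finset.exists_mem_notMem_of_card_lt_card
      (s := {u, x}) (t := Finset.univ) (Finset.card_le_two.trans_lt hG.1)
    simp only [Finset.mem_insert, Finset.mem_singleton, not_or] at hw
    obtain ⟨_, rfl, z, -, hzx, huz⟩ := hG.exists_adj (Set.singleton_nonempty u) hx hw.2 hw.1
    exact ⟨z, hzx, huz⟩
  have : Nontrivial V := Fintype.one_lt_card_iff_nontrivial.1 (by linarith [hG.1])
  obtain ⟨x, hx⟩ := exists_ne u
  obtain ⟨y, -, huy⟩ := hex x hx
  obtain ⟨z, hzy, huz⟩ := hex y huy.ne'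
  exact (Set.one_lt_ncard).2 ⟨z, huz, y, huy, hzy⟩

theorem CliqueCycle.exists_neighborSet_eq [Fintype V] (H : CliqueCycle G C K c k v)
    (hG : TwoConnected G) (hδ : ∀ u, k ≤ degN G u) (hb : b ∉ C)
    (hind : ∀ u ∉ C, ∀ w ∉ C, ¬G.Adj u w) :
    K.ncard + k = c + 1 ∧ ∃ T ⊆ K, T.ncard = k ∧ ∀ u ∉ K, G.neighborSet u = T := by
  have hc := H.period_pos
  have hNC {u : V} (hu : u ∉ C) : G.neighborSet u ⊆ C :=
    fun w huw => by_contra fun hw => hind u hu w hw huw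
  have hNK {u : V} (hu : u ∉ C) : G.neighborSet u ⊆ K :=
    fun w huw => H.mem_of_adj hG hδ hu (hNC hu huw) huw
  have hear {u : V} (hu : u ∉ C) : ∀ x ∈ G.neighborSet u, ∀ y ∈ G.neighborSet u, Ear G C x y 1 :=
    fun x hx y hy => ear_one hu hx hy
  have hcard {u : V} (hu : u ∉ C) : (G.neighborSet u).ncard = k :=
    (H.exists_notMem_iff hc (hNC hu) (hear hu) (hδ u)).1
  have hsN {s : V} (hs : s ∈ C \ K) : G.neighborSet s ⊆ C :=
    fun w hsw => by_contra fun hw => hs.2 (H.mem_of_adj hG hδ hw hs.1 hsw.symm)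
  have heq {s u : V} (hs : s ∈ C \ K) (hu : u ∉ C) : G.neighborSet s = G.neighborSet u :=
    Set.eq_of_subset_of_ncard_le
      (H.neighborSet_subset_of_notMem hc (hNK hu) (hear hu) (hδ u) hs.1 hs.2 (hsN hs))
      ((hcard hu).trans_le (hδ s))
  have hmissing := (H.exists_notMem_iff hc (hNC hb) (hear hb) (hδ b)).2.1
  have hCK := Set.ncard_sdiff_add_ncard_of_subset H.subset (H.finite hc)
  have hk2 : 2 ≤ k := hcard hb ▸ hG.two_le_degN b
  obtain ⟨s, hs⟩ := Set.nonempty_of_ncard_ne_zero (s := C \ K) (by omega)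
  refine ⟨by rw [H.ncard_eq hc] at hCK; omega, _, hNK hb, hcard hb, fun u hu => ?_⟩
  by_cases huC : u ∈ C
  · exact heq ⟨huC, hu⟩ hb
  · exact (heq hs huC).symm.trans (heq hs hb)

end IndependentOutside

section AdjacentOutside

variable {V : Type*} {G : SimpleGraph V} {B C K R : Set V} {c k m : ℕ} {v : ℤ → V} {i j : ℤ}
  {u w x y z : V}

/-- A `CliqueCycle` in which the vertices outside the clique form a segment of the cycle that can be
replaced by an ear of the same size. -/
structure EarSegment (G : SimpleGraph V) (C K : Set V) (c k m : ℕ) (v : ℤ → V) : Prop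
    extends CliqueCycle G C K c k v where
  pos : 1 ≤ m
  lt : m + 1 < c
  ear : Ear G C (v 0) (v (m + 1)) m
  mem_clique_iff (i : ℤ) : 0 ≤ i → i < c → (v i ∈ K ↔ ¬(1 ≤ i ∧ i ≤ m))

theorem CliqueCycle.exists_earSegment [Fintype V] (H : CliqueCycle G C K c k v)
    (hG : TwoConnected G) (hδ : ∀ u, k ≤ degN G u) (hu : u ∉ C) (hw : w ∉ C) (huw : G.Adj u w) :
    ∃ m v', m + 1 = k ∧ EarSegment G C K c k m v' := by
  obtain ⟨R, huR, hR⟩ := exists_isCompOutside (G := G) hu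
  have hwR : w ∈ R := (hR.2.2.2 u huR w huw).resolve_right hw
  have hR2 : 2 ≤ R.ncard := (Set.one_lt_ncard).2 ⟨u, huR, w, hwR, huw.ne⟩
  obtain ⟨a, ha, x, hax, hx, -⟩ := hR.exists_neighborSet_inter_nonempty hG H.nontrivial (H.mem 0)
  obtain ⟨v, H, rfl⟩ := H.exists_shift hx
  obtain ⟨b, -, E, hcard⟩ := H.exists_earSystem hG hδ hR ha hax.symm
  obtain ⟨hQ, v', H', hv0, hvm, hK⟩ := E.exists_cliqueCycle H hcard.ge hR2
  obtain ⟨q, hq⟩ := E.nonempty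
  have hb := E.bounds H hq
  have hear := E.left q hq
  rw [← hv0, ← hvm q hq] at hear
  exact ⟨R.ncard, v', hQ ▸ hcard, H', E.pos, by omega, hear, hK⟩

namespace EarSegment

theorem mem_of_lt (S : EarSegment G C K c k m v) (hm : m < i) (hic : i ≤ c) : v i ∈ K := by
  rcases hic.eq_or_lt with rfl | hic
  · rw [← zero_add (c : ℤ), S.add_period, S.mem_clique_iff 0 le_rfl (by omega)]
    omega
  · rw [S.mem_clique_iff i (by omega) hic]
    omega

theorem zero_mem (S : EarSegment G C K c k m v) : v 0 ∈ K := by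
  rw [← S.add_period, zero_add]
  exact S.mem_of_lt (by have := S.lt; omega) le_rfl

theorem succ_mem (S : EarSegment G C K c k m v) : v (m + 1) ∈ K :=
  S.mem_of_lt (by omega) (by have := S.lt; omega)

theorem zero_ne_succ (S : EarSegment G C K c k m v) : v 0 ≠ v (m + 1) := fun h => by
  have hlt := S.lt
  have := S.eq_of_eq h (by omega) (by omega)
  omega

theorem image_Icc_eq (S : EarSegment G C K c k m v) : v '' Set.Icc 1 m = C \ K := by
  have hlt := S.lt
  ext w
  constructor
  · rintro ⟨i, ⟨hi, him⟩, rfl⟩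
    refine ⟨S.mem i, ?_⟩
    rw [S.mem_clique_iff i (by omega) (by omega)]
    omega
  · rintro ⟨hwC, hwK⟩
    obtain ⟨i, hi0, hic, rfl⟩ := S.exists_index (by omega) hwC
    rw [S.mem_clique_iff i hi0 hic, not_not] at hwK
    exact ⟨i, hwK, rfl⟩

theorem ncard_sdiff (S : EarSegment G C K c k m v) : (C \ K).ncard = m := by
  have hlt := S.lt
  have := S.ncard_image_Icc (a := 1) (b := m) (by omega)
  rw [S.image_Icc_eq] at this
  omega

theorem eq_of_ear (S : EarSegment G C K c k m v) (hi : 0 ≤ i) (hij : i < j) (hj : j < c)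
    (hiK : v i ∈ K) (hjK : v j ∈ K) (he : Ear G C (v i) (v j) 1) : i = 0 ∧ j = m + 1 := by
  rw [S.mem_clique_iff i hi (by omega)] at hiK
  rw [S.mem_clique_iff j (by omega) hj] at hjK
  have hm := S.pos
  rcases hi.eq_or_lt with rfl | hi
  · refine ⟨rfl, ?_⟩
    by_contra hne
    have hlast : v (-1) ∈ K := by
      rw [← S.add_period]
      exact S.mem_of_lt (by omega) (by omega)
    have := S.ear_clique' he (a := -1) (b := j - 1) (by omega) (by omega) (by omega) (by omega)
      hlast (S.mem_of_lt (by omega) (by omega))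
    omega
  · have := S.ear_clique he (a := i + 1) (b := j + 1) (by omega) (by omega) (by omega) (by omega)
      (S.mem_of_lt (by omega) (by omega)) (S.mem_of_lt (by omega) (by omega))
    omega

theorem eq_or_eq_of_adj [Fintype V] (S : EarSegment G C K c k m v) (hG : TwoConnected G)
    (hδ : ∀ u, k ≤ degN G u) (hR : IsCompOutside G C R) (hu : u ∈ R) (hz : z ∈ C)
    (huz : G.Adj u z) : (z = v 0 ∨ z = v (m + 1)) ∧ ∃ a ∈ R, G.Adj (v 0) a := by
  have hRC {w : V} (hw : w ∈ R) : w ∉ C := Set.disjoint_left.1 hR.2.1 hw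
  obtain ⟨b, hb, z', hbz', hz', hzz'⟩ :=
    hR.exists_neighborSet_inter_nonempty hG S.nontrivial hz
  obtain ⟨s, hs, p⟩ := exists_pathOn_of_connected hR.2.2.1 hu hb
  have hzK := S.mem_of_adj hG hδ (hRC hu) hz huz
  have hzK' := S.mem_of_adj hG hδ (hRC hb) hz' hbz'
  have he : Ear G C z z' 1 := ⟨s, u, b, hR.2.1.mono_left hs, p, huz.symm, hbz', p.ncard_pos⟩
  obtain ⟨i, hi0, hic, rfl⟩ := S.exists_index S.period_pos hz
  obtain ⟨j, hj0, hjc, rfl⟩ := S.exists_index S.period_pos hz'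
  rcases lt_trichotomy i j with hij | rfl | hij
  · obtain ⟨rfl, rfl⟩ := S.eq_of_ear hi0 hij hjc hzK hzK' he
    exact ⟨.inl rfl, u, hu, huz.symm⟩
  · exact absurd rfl hzz'
  · obtain ⟨rfl, rfl⟩ := S.eq_of_ear hj0 hij hic hzK' hzK he.symm
    exact ⟨.inr rfl, b, hb, hbz'.symm⟩

theorem ncard_add_one [Fintype V] (S : EarSegment G C K c k m v) (hG : TwoConnected G)
    (hδ : ∀ u, k ≤ degN G u) (hR : IsCompOutside G C R) : R.ncard + 1 = k := by
  obtain ⟨b, hb, z, hbz, hz, -⟩ :=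
    hR.exists_neighborSet_inter_nonempty hG S.nontrivial (S.mem 0)
  obtain ⟨-, a, ha, h0a⟩ := S.eq_or_eq_of_adj hG hδ hR hb hz hbz
  obtain ⟨d, hd, E, hcard⟩ := S.exists_earSystem hG hδ hR ha h0a
  have hsub : G.neighborSet d ∩ (C \ {v 0}) ⊆ {v (m + 1)} := fun w ⟨hdw, hw, hw0⟩ =>
    (S.eq_or_eq_of_adj hG hδ hR hd hw hdw).1.resolve_left hw0
  have hle := Set.ncard_le_ncard hsub
  rw [Set.ncard_singleton, ← S.card_attachPositions S.period_pos] at hle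
  have := Finset.card_pos.2 E.nonempty
  omega

theorem not_adj_of_lt (S : EarSegment G C K c k m v) (hi : 1 ≤ i) (him : i ≤ m) (hj : m + 2 ≤ j)
    (hjc : j < c) : ¬G.Adj (v i) (v j) := by
  intro hij
  -- The path `v 0, …, v i, v j, …, v (c - 1), v (j - 1), …, v (m + 1)` is too long for the ear.
  have p₁ := S.pathOn_Icc (a := 0) (b := i) (by omega) (by omega)
  have p₂ := S.pathOn_Icc (a := j) (b := c - 1) (by omega) (by omega)
  have p₃ := S.pathOn_Icc (a := m + 1) (b := j - 1) (by omega) (by omega)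
  have d₁₂ := S.disjoint_image_Icc (a := 0) (b := i) (a' := j) (b' := c - 1) (by omega) (by omega)
  have d₁₃ := S.disjoint_image_Icc (a := 0) (b := i) (a' := m + 1) (b' := j - 1) (by omega)
    (by omega)
  have d₂₃ := (S.disjoint_image_Icc (a := m + 1) (b := j - 1) (a' := j) (b' := c - 1) (by omega)
    (by omega)).symm
  have hd := Set.disjoint_union_left.2 ⟨d₁₃, d₂₃⟩
  have hadj : G.Adj (v (c - 1)) (v (j - 1)) := by
    refine S.clique (S.mem_of_lt (by omega) (by omega)) (S.mem_of_lt (by omega) (by omega))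
      fun h => ?_
    have := S.eq_of_eq h (by omega) (by omega)
    omega
  have hle := S.ear_le S.ear (Set.union_subset (Set.union_subset (S.image_subset _)
    (S.image_subset _)) (S.image_subset _)) ((p₁.join p₂ hij d₁₂).join p₃.symm hadj hd)
  rw [Set.ncard_union_eq hd (p₁.finite.union p₂.finite) p₃.finite,
    Set.ncard_union_eq d₁₂ p₁.finite p₂.finite] at hle
  have h₁ := S.ncard_image_Icc (a := 0) (b := i) (by omega)
  have h₂ := S.ncard_image_Icc (a := j) (b := c - 1) (by omega)
  have h₃ := S.ncard_image_Icc (a := m + 1) (b := j - 1) (by omega)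
  omega

theorem neighborSet_subset [Fintype V] (S : EarSegment G C K c k m v) (hG : TwoConnected G)
    (hδ : ∀ u, k ≤ degN G u) (hw : w ∈ C \ K) :
    G.neighborSet w ⊆ insert (v 0) (insert (v (m + 1)) (C \ K)) := by
  intro z hwz
  have hzC : z ∈ C := by_contra fun hz => hw.2 (S.mem_of_adj hG hδ hz hw.1 hwz.symm)
  rw [← S.image_Icc_eq] at hw ⊢
  obtain ⟨i, ⟨hi, him⟩, rfl⟩ := hw
  obtain ⟨j, hj0, hjc, rfl⟩ := S.exists_index S.period_pos hzC
  rcases hj0.eq_or_lt with rfl | hj0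
  · exact .inl rfl
  rcases lt_trichotomy j (m + 1) with hj | rfl | hj
  · exact .inr (.inr ⟨j, ⟨hj0, by omega⟩, rfl⟩)
  · exact .inr (.inl rfl)
  · exact absurd hwz (S.not_adj_of_lt hi him (by omega) hjc)

end EarSegment

theorem neighborSet_eq_of_ncard_le [Finite V] (hx : x ∉ B) (hy : y ∉ B) (hxy : x ≠ y) (hw : w ∈ B)
    (hN : G.neighborSet w ⊆ insert x (insert y B)) (hB : B.ncard + 1 ≤ (G.neighborSet w).ncard) :
    G.neighborSet w = insert x (insert y B) \ {w} := by
  refine Set.eq_of_subset_of_ncard_le (fun z hz => ⟨hN hz, fun h => G.irrefl (h ▸ hz)⟩) ?_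
  rw [Set.ncard_sdiff_singleton_of_mem (by simp [hw]), Set.ncard_insert_of_notMem (by simp [*]),
    Set.ncard_insert_of_notMem hy]
  exact hB

theorem CliqueCycle.exists_blocks [Fintype V] (H : CliqueCycle G C K c k v)
    (hG : TwoConnected G) (hδ : ∀ u, k ≤ degN G u) (hu : u ∉ C) (hw : w ∉ C) (huw : G.Adj u w) :
    K.ncard + k = c + 1 ∧ ∃ x ∈ K, ∃ y ∈ K, x ≠ y ∧ ∀ u ∉ K, ∃ B, u ∈ B ∧ B.ncard + 1 = k ∧
      Disjoint B K ∧ ∀ w ∈ B, G.neighborSet w = insert x (insert y B) \ {w} := by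
  obtain ⟨m, v, hmk, S⟩ := H.exists_earSegment hG hδ hu hw huw
  refine ⟨?_, v 0, S.zero_mem, v (m + 1), S.succ_mem, S.zero_ne_succ, fun u hu => ?_⟩
  · have := Set.ncard_sdiff_add_ncard_of_subset S.subset (S.finite S.period_pos)
    rw [S.ncard_sdiff, S.ncard_eq S.period_pos] at this
    omega
  obtain ⟨B, huB, hB, hBK, hN⟩ : ∃ B, u ∈ B ∧ B.ncard + 1 = k ∧ Disjoint B K ∧
      ∀ w ∈ B, G.neighborSet w ⊆ insert (v 0) (insert (v (m + 1)) B) := by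
    by_cases huC : u ∈ C
    · exact ⟨C \ K, ⟨huC, hu⟩, by rw [S.ncard_sdiff, hmk], Set.disjoint_sdiff_left,
        fun w => S.neighborSet_subset hG hδ⟩
    · obtain ⟨R, huR, hR⟩ := exists_isCompOutside (G := G) huC
      refine ⟨R, huR, S.ncard_add_one hG hδ hR, hR.2.1.mono_right S.subset, fun w hw z hwz => ?_⟩
      rcases hR.2.2.2 w hw z hwz with hz | hz
      · exact .inr (.inr hz)
      · exact (S.eq_or_eq_of_adj hG hδ hR hw hz hwz).1.imp_right .inl
  refine ⟨B, huB, hB, hBK, fun w hw => ?_⟩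
  exact neighborSet_eq_of_ncard_le (hBK.notMem_of_mem_right S.zero_mem)
    (hBK.notMem_of_mem_right S.succ_mem) S.zero_ne_succ hw (hN w hw) (hB.trans_le (hδ w))

end AdjacentOutside

section Numbering

variable {V : Type*} {κ : V → ℕ} {i j m : ℕ}

theorem exists_equiv_fin_lt_ncard_iff [Fintype V] (κ : V → ℕ) : ∃ e : V ≃ Fin (Fintype.card V),
    ∀ v j, (e v).val < {u | κ u < j}.ncard ↔ κ v < j := by
  classical
  let e₀ := Fintype.equivFin V
  let e := e₀.trans (Tuple.sort (κ ∘ e₀.symm)).symm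
  have hmono : Monotone (κ ∘ e.symm) := Tuple.monotone_sort (κ ∘ e₀.symm)
  refine ⟨e, fun v j => ?_⟩
  have hcard : {u | κ u < j}.ncard = ({i | (κ ∘ e.symm) i < j} : Finset _).card := by
    rw [← Set.ncard_coe_finset, ← Set.ncard_image_of_injective _ e.symm.injective]
    congr 1
    ext u
    simp
  rw [hcard, Tuple.lt_card_lt_iff_apply_lt_of_monotone hmono, Function.comp_apply,
    e.symm_apply_apply]

theorem ncard_lt_succ [Finite V] (κ : V → ℕ) (j : ℕ) :
    {u | κ u < j + 1}.ncard = {u | κ u < j}.ncard + {u | κ u = j}.ncard := by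
  rw [← Set.ncard_union_eq (Set.disjoint_left.2 fun u hu hu' => hu.ne hu')]
  congr 1
  ext u
  exact Nat.lt_succ_iff_lt_or_eq

theorem exists_ncard_lt_eq_add_mul [Finite V] (hκ : ∀ v, i ≤ κ v → {u | κ u = κ v}.ncard = m)
    (hij : i ≤ j) :
    ∃ t, {u | κ u < j}.ncard = {u | κ u < i}.ncard + t * m := by
  induction j, hij using Nat.le_induction with
  | base => exact ⟨0, by simp⟩
  | succ j hij ih =>
    obtain ⟨t, ht⟩ := ih
    rcases Set.eq_empty_or_nonempty {u | κ u = j} with h | ⟨v, rfl⟩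
    · exact ⟨t, by rw [ncard_lt_succ, h, ht, Set.ncard_empty, add_zero]⟩
    · exact ⟨t + 1, by rw [ncard_lt_succ, hκ v hij, ht]; ring⟩

theorem div_eq_div_iff_of_lt_ncard_iff [Finite V] {e : V → ℕ} {u w : V}
    (he : ∀ v j, e v < {u | κ u < j}.ncard ↔ κ v < j)
    (hκ : ∀ v, i ≤ κ v → {u | κ u = κ v}.ncard = m) (hu : i ≤ κ u) (hw : i ≤ κ w) :
    (e u - {u | κ u < i}.ncard) / m = (e w - {u | κ u < i}.ncard) / m ↔ κ u = κ w := by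
  have hm : 0 < m := by
    rw [← hκ u hu]
    exact (Set.ncard_pos).2 ⟨u, rfl⟩
  have hdiv {v : V} {t : ℕ} (hv : i ≤ κ v)
      (ht : {u | κ u < κ v}.ncard = {u | κ u < i}.ncard + t * m) :
      (e v - {u | κ u < i}.ncard) / m = t := by
    have h₁ := he v (κ v)
    have h₂ := he v (κ v + 1)
    rw [ncard_lt_succ, hκ v hv] at h₂
    exact Nat.div_eq_of_lt_le (by omega) (by rw [add_one_mul]; omega)
  obtain ⟨t, ht⟩ := exists_ncard_lt_eq_add_mul hκ hu
  obtain ⟨t', ht'⟩ := exists_ncard_lt_eq_add_mul hκ hw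
  rw [hdiv hu ht, hdiv hw ht']
  refine ⟨fun h => ?_, fun h => ?_⟩
  · rw [h, ← ht'] at ht
    have hu' := he u (κ u)
    have hw' := he w (κ w)
    have huw := he u (κ w)
    have hwu := he w (κ u)
    omega
  · rw [h, ht'] at ht
    exact Nat.eq_of_mul_eq_mul_right hm (by omega)

theorem exists_equiv_fin_of_subset [Fintype V] {β : Type*} [Countable β] {T K : Set V}
    (hTK : T ⊆ K) (f : V → β) : ∃ e : V ≃ Fin (Fintype.card V), (∀ v, (e v).val < T.ncard ↔ v ∈ T) ∧
      (∀ v, (e v).val < K.ncard ↔ v ∈ K) ∧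
      ∀ m, (∀ u ∉ K, {w | w ∉ K ∧ f w = f u}.ncard = m) → ∀ u ∉ K, ∀ w ∉ K,
        (((e u).val - K.ncard) / m = ((e w).val - K.ncard) / m ↔ f u = f w) := by
  classical
  obtain ⟨g, hg⟩ := exists_injective_nat β
  let κ (v : V) : ℕ := if v ∈ T then 0 else if v ∈ K then 1 else g (f v) + 2
  have hT (v : V) : κ v < 1 ↔ v ∈ T := by grind
  have hK (v : V) : κ v < 2 ↔ v ∈ K := by grind
  have hf {u w : V} (hu : u ∉ K) : κ w = κ u ↔ w ∉ K ∧ f w = f u := by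
    have := hg.eq_iff (a := f w) (b := f u)
    grind
  obtain ⟨e, he⟩ := exists_equiv_fin_lt_ncard_iff κ
  have hTcard : T.ncard = {v | κ v < 1}.ncard := by simp only [hT, Set.ofPred_mem_eq]
  have hKcard : K.ncard = {v | κ v < 2}.ncard := by simp only [hK, Set.ofPred_mem_eq]
  refine ⟨e, fun v => by rw [hTcard, he, hT], fun v => by rw [hKcard, he, hK],
    fun m hm u hu w hw => ?_⟩
  have hfib (v : V) (hv : 2 ≤ κ v) : {u | κ u = κ v}.ncard = m := by
    have hvK : v ∉ K := fun h => hv.not_gt ((hK v).2 h)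
    simp only [hf hvK, hm v hvK]
  rw [hKcard, div_eq_div_iff_of_lt_ncard_iff he hfib (not_lt.1 fun h => hu ((hK u).1 h))
    (not_lt.1 fun h => hw ((hK w).1 h)), hf hw, and_iff_right hu]

end Numbering

section Isomorphisms

variable {V : Type*} {G : SimpleGraph V} {K T : Set V} {c k : ℕ} {x y : V}

theorem nonempty_iso_Wgraph [Fintype V] (hK : G.IsClique K) (hc : c - k + 1 = K.ncard) (hTK : T ⊆ K)
    (hT : T.ncard = k) (hN : ∀ u ∉ K, G.neighborSet u = T) :
    Nonempty (G ≃g Wgraph (Fintype.card V) k c) := by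
  obtain ⟨e, heT, heK, -⟩ := exists_equiv_fin_of_subset hTK id
  have hadj {u w : V} (hu : u ∉ K) : G.Adj u w ↔ w ∈ T := by
    rw [← hN u hu, mem_neighborSet]
  rw [hT] at heT
  refine ⟨⟨e, fun {u w} => ?_⟩⟩
  simp only [Wgraph, fromRel_adj, hc, heT, heK, ne_eq, e.injective.eq_iff]
  by_cases hu : u ∈ K
  · by_cases hw : w ∈ K
    · simp only [hu, hw, true_or, and_true]
      exact ⟨hK hu hw, Adj.ne⟩
    · rw [G.adj_comm, hadj hw]
      grind
  · rw [hadj hu]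
    grind

theorem exists_fibers_of_blocks (hx : x ∈ K) (hy : y ∈ K)
    (hB : ∀ u ∉ K, ∃ B, u ∈ B ∧ B.ncard + 1 = k ∧ Disjoint B K ∧
      ∀ w ∈ B, G.neighborSet w = insert x (insert y B) \ {w}) :
    ∃ f : V → Set V, ∀ u ∉ K, {w | w ∉ K ∧ f w = f u}.ncard = k - 1 ∧
      ∀ w, G.Adj u w ↔ u ≠ w ∧ (w = x ∨ w = y ∨ w ∉ K ∧ f w = f u) := by
  let f (u : V) : Set V := insert u (G.neighborSet u) \ {x, y}
  refine ⟨f, fun u hu => ?_⟩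
  obtain ⟨B, huB, hBk, hBK, hN⟩ := hB u hu
  have hf {w : V} (hw : w ∈ B) : f w = B := by
    have := Set.disjoint_left.1 hBK
    simp only [f, hN w hw]
    grind
  have hmem (w : V) : w ∉ K ∧ f w = f u ↔ w ∈ B := by
    refine ⟨fun h => ?_, fun h => ⟨hBK.notMem_of_mem_left h, by rw [hf h, hf huB]⟩⟩
    rw [← hf huB, ← h.2]
    grind
  refine ⟨?_, fun w => ?_⟩
  · simp only [hmem, Set.ofPred_mem_eq]
    omega
  · rw [hmem, ← mem_neighborSet, hN u huB]
    grind

theorem nonempty_iso_Zgraph [Fintype V] (hK : G.IsClique K) (hc : c - k + 1 = K.ncard) (hx : x ∈ K)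
    (hy : y ∈ K) (hxy : x ≠ y)
    (hB : ∀ u ∉ K, ∃ B, u ∈ B ∧ B.ncard + 1 = k ∧ Disjoint B K ∧
      ∀ w ∈ B, G.neighborSet w = insert x (insert y B) \ {w}) :
    Nonempty (G ≃g Zgraph (Fintype.card V) k c) := by
  obtain ⟨f, hf⟩ := exists_fibers_of_blocks hx hy hB
  obtain ⟨e, hexy, heK, hef⟩ := exists_equiv_fin_of_subset (Set.pair_subset hx hy) f
  rw [Set.ncard_pair hxy] at hexy
  have hexy' (v : V) : (e v).val ≤ 1 ↔ v = x ∨ v = y := Nat.lt_succ_iff.symm.trans (hexy v)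
  have heK' (v : V) : K.ncard ≤ (e v).val ↔ v ∉ K := by rw [← heK v, not_lt]
  refine ⟨⟨e, fun {u w} => ?_⟩⟩
  simp only [Zgraph, fromRel_adj, hc, hexy', heK, heK', ne_eq, e.injective.eq_iff]
  by_cases hu : u ∈ K
  · by_cases hw : w ∈ K
    · simp only [hu, hw, true_or, and_true]
      exact ⟨hK hu hw, Adj.ne⟩
    · rw [G.adj_comm, (hf w hw).2]
      grind
  · rw [(hf u hu).2]
    by_cases hw : w ∈ K
    · grind
    · have := hef (k - 1) (fun u hu => (hf u hu).1) u hu w hw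
      grind

end Isomorphisms

section LocallyMaximal

variable {V : Type*} {G : SimpleGraph V} {C K : Set V} {c k : ℕ}

theorem IsLocallyMaximal.exists_cliqueCycle [Finite V] {u : V} {p : G.Walk u u}
    (hC : IsLocallyMaximal G p) (hKC : K ⊆ {u | u ∈ p.support}) (hK : G.IsClique K)
    (hKc : p.length - k + 1 ≤ K.ncard) :
    ∃ v, CliqueCycle G {u | u ∈ p.support} K p.length k v := by
  obtain ⟨v, hv⟩ := exists_cycleParam_of_isCycle hC.1
  refine ⟨v, hv, hC.ncard_add_le, hK, hKC, ?_⟩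
  have hcard := Set.ncard_sdiff_add_ncard_of_subset hKC
  rw [hv.ncard_eq hv.period_pos] at hcard
  have := hv.period_pos
  omega

theorem CliqueCycle.nonempty_iso [Fintype V] {v : ℤ → V} (H : CliqueCycle G C K c k v)
    (hG : TwoConnected G) (hδ : ∀ u, k ≤ degN G u) (hc : c < Fintype.card V) :
    Nonempty (G ≃g Wgraph (Fintype.card V) k c) ∨ Nonempty (G ≃g Zgraph (Fintype.card V) k c) := by
  obtain ⟨b, hb⟩ : ∃ b, b ∉ C := by
    rw [← Set.ne_univ_iff_exists_notMem]
    rintro rfl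
    rw [← H.ncard_eq H.period_pos, Set.ncard_univ, Nat.card_eq_fintype_card] at hc
    exact hc.false
  by_cases hadj : ∃ u ∉ C, ∃ w ∉ C, G.Adj u w
  · obtain ⟨u, hu, w, hw, huw⟩ := hadj
    obtain ⟨hKk, x, hx, y, hy, hxy, hB⟩ := H.exists_blocks hG hδ hu hw huw
    have := (Set.ncard_pos).2 ⟨x, hx⟩
    exact .inr (nonempty_iso_Zgraph H.clique (by omega) hx hy hxy hB)
  · push Not at hadj
    obtain ⟨hKk, T, hTK, hT, hN⟩ := H.exists_neighborSet_eq hG hδ hb hadj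
    have := Set.ncard_le_ncard hTK
    exact .inl (nonempty_iso_Wgraph H.clique (by omega) hTK hT hN)

end LocallyMaximal

/-- If `G` is 2-connected on `n` vertices with minimum degree at least `k`, `C` is a
locally maximal cycle of length `c ≤ n-1`, and the clique number of `G[V(C)]` is at least
`c-k+1`, then `G` is isomorphic to `W_{n,k,c}` or to `Z_{n,k,c}`. -/
theorem stmt17 {V : Type*} [Fintype V] (G : SimpleGraph V) (n k c : ℕ)
    (hn : Fintype.card V = n) (hG : TwoConnected G)
    (hδ : ∀ v : V, k ≤ degN G v)
    (v0 : V) (p : G.Walk v0 v0) (hC : IsLocallyMaximal G p) (hc : p.length = c)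
    (hcn : c ≤ n - 1)
    (hclique : ∃ K : Finset V, (K : Set V) ⊆ {x | x ∈ p.support} ∧
      G.IsClique (K : Set V) ∧ c - k + 1 ≤ K.card) :
    Nonempty (G ≃g Wgraph n k c) ∨ Nonempty (G ≃g Zgraph n k c) := by
  subst hn hc
  obtain ⟨K, hKC, hK, hKc⟩ := hclique
  rw [← Set.ncard_coe_finset] at hKc
  obtain ⟨v, H⟩ := hC.exists_cliqueCycle hKC hK hKc
  have hV := hG.1
  exact H.nonempty_iso hG hδ (by omega)
end

section
/- Let G be a 2-connected graph on n vertices and C a longest cycle in G of length c with 10 ≤ c ≤ n-1. If the number of edges of G with at most one endpoint in V(C) exceeds (⌊c/2⌋ - 1)(n - c), then there exists a vertex u in V(G) \ V(C) such that u has no neighbors outside V(C) and u has exactly ⌊c/2⌋ neighbors on C. -/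
open SimpleGraph

/-!
Counting twice the edges with an end off `C`, a minimal set `D` of vertices off `C` violating the
density bound satisfies two things: every vertex of `D` has at least `⌊c/2⌋` neighbours in `D ∪ C`,
and every union of components of `G[D]` has a vertex `v` with `|N_D(v)| + 2|N_C(v)| > 2(⌊c/2⌋ - 1)`.

A path of length `ℓ` leaving `C` at `a` and ending off `C` at `z` satisfies
`ℓ + |N(z) ∩ (C - a)| ≤ ⌊c/2⌋`, since otherwise some arc of `C` could be replaced by a longer path.
With `C - a` contracted to a single vertex, this bound and the degrees in `D` are the tight case of
Dirac's path argument, and induction over minimal lobes shows that some union of components `Q` of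
`G[D]` is a clique completely joined to `a`. Running through all of `Q` gives
`|Q| + |N_C(v)| ≤ ⌊c/2⌋ + 1` for `v ∈ Q`; with the density of `Q` this leaves `|Q| ≤ 2`. If `Q`
were an edge, the neighbours of an end on `C` would be at distance at least 3 along `C`, hence too
few for the degree bound. So `Q` is a single vertex with `⌊c/2⌋` neighbours on `C`, and an edge from
it to another vertex off `C` would again give an ear that is too long.
-/

section

open scoped Finset

variable {V : Type*} {G : SimpleGraph V}

open scoped Classical in
/-- The neighbours of `v` in the vertex set `T`. -/
noncomputable def neighborsIn (G : SimpleGraph V) (T : Finset V) (v : V) : Finset V :=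
  {t ∈ T | G.Adj v t}

@[simp]
theorem mem_neighborsIn {T : Finset V} {v t : V} : t ∈ neighborsIn G T v ↔ t ∈ T ∧ G.Adj v t := by
  classical exact Finset.mem_filter

theorem neighborsIn_subset (T : Finset V) (v : V) : neighborsIn G T v ⊆ T := fun _ ht =>
  (mem_neighborsIn.1 ht).1

section

variable [DecidableEq V]

theorem neighborsIn_union (S T : Finset V) (v : V) :
    neighborsIn G (S ∪ T) v = neighborsIn G S v ∪ neighborsIn G T v := by
  ext u
  simp only [mem_neighborsIn, Finset.mem_union]
  tauto

theorem card_neighborsIn_union {S T : Finset V} (hST : Disjoint S T) (v : V) :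
    #(neighborsIn G (S ∪ T) v) = #(neighborsIn G S v) + #(neighborsIn G T v) := by
  rw [neighborsIn_union, Finset.card_union_of_disjoint
    (hST.mono (neighborsIn_subset S v) (neighborsIn_subset T v))]

theorem neighborsIn_erase (T : Finset V) (a v : V) :
    neighborsIn G (T.erase a) v = (neighborsIn G T v).erase a := by
  ext u
  simp only [mem_neighborsIn, Finset.mem_erase, and_assoc]

end

/-- There is a path of length `ℓ` from `x` to `y` all of whose vertices after the initial vertex
`x` lie in `S`; the vertex `x` itself may or may not belong to `S`. -/
def HasPathIn (G : SimpleGraph V) (S : Finset V) (x y : V) (ℓ : ℕ) : Prop :=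
  ∃ p : G.Walk x y, p.IsPath ∧ p.length = ℓ ∧ ∀ v ∈ p.support.tail, v ∈ S

namespace HasPathIn

variable {S T : Finset V} {x y z : V} {ℓ m : ℕ}

theorem refl (G : SimpleGraph V) (S : Finset V) (x : V) : HasPathIn G S x x 0 :=
  ⟨Walk.nil, Walk.IsPath.nil, rfl, by simp⟩

theorem mono (h : HasPathIn G S x y ℓ) (hST : S ⊆ T) : HasPathIn G T x y ℓ :=
  let ⟨p, hp, hl, hpS⟩ := h
  ⟨p, hp, hl, fun v hv => hST (hpS v hv)⟩

theorem pos_of_ne (h : HasPathIn G S x y ℓ) (hxy : x ≠ y) : 0 < ℓ := by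
  obtain ⟨p, -, rfl, -⟩ := h
  exact Nat.pos_of_ne_zero fun h => hxy (Walk.eq_of_length_eq_zero h)

theorem exists_walk (h : HasPathIn G S x y ℓ) (hx : x ∈ S) :
    ∃ p : G.Walk x y, ∀ v ∈ p.support, v ∈ S := by
  obtain ⟨p, -, -, hpS⟩ := h
  exact ⟨p, fun v hv => (p.mem_support_iff.1 hv).elim (fun h => h ▸ hx) (hpS v)⟩

theorem exists_of_walk (p : G.Walk x y) (hp : ∀ v ∈ p.support, v ∈ S) :
    ∃ ℓ, HasPathIn G S x y ℓ := by
  classical exact ⟨_, p.bypass, p.bypass_isPath, rfl, fun v hv =>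
    hp v (p.support_bypass_subset_support (List.mem_of_mem_tail hv))⟩

theorem exists_of_common_start (hxy : HasPathIn G S x y ℓ) (hxz : HasPathIn G S x z m)
    (hx : x ∈ S) : ∃ k, HasPathIn G S y z k := by
  obtain ⟨p, hp⟩ := hxy.exists_walk hx
  obtain ⟨q, hq⟩ := hxz.exists_walk hx
  exact exists_of_walk (p.reverse.append q) fun v hv => by
    rw [Walk.mem_support_append_iff, Walk.support_reverse, List.mem_reverse] at hv
    exact hv.elim (hp v) (hq v)

theorem exists_of_forall_exit (A F : Finset V) (hx : x ∈ A)
    (hexit : ∀ K ⊆ A, x ∈ K → ∃ u ∈ K, ∃ w, (w ∈ A ∨ w ∈ F) ∧ G.Adj u w ∧ w ∉ K) :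
    ∃ z ∈ A, ∃ ℓ, HasPathIn G A x z ℓ ∧ (neighborsIn G F z).Nonempty := by
  classical
  obtain ⟨u, hu, w, hw, huw, hwK⟩ := hexit {z ∈ A | ∃ ℓ, HasPathIn G A x z ℓ}
    (Finset.filter_subset _ _) (Finset.mem_filter.2 ⟨hx, 0, refl G A x⟩)
  obtain ⟨huA, ℓ, hℓ⟩ := Finset.mem_filter.1 hu
  refine ⟨u, huA, ℓ, hℓ, w, mem_neighborsIn.2 ⟨?_, huw⟩⟩
  refine hw.resolve_left fun hwA => hwK (Finset.mem_filter.2 ⟨hwA, ?_⟩)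
  obtain ⟨p, hp⟩ := hℓ.exists_walk hx
  refine exists_of_walk (p.concat huw) fun v hv => ?_
  rw [Walk.support_concat, List.mem_append, List.mem_singleton] at hv
  exact hv.elim (hp v) fun h => h ▸ hwA

theorem add_one_le_of_adj {c : ℕ} (hc : ∀ (w : V) (r : G.Walk w w), r.IsCycle → r.length ≤ c)
    (h : HasPathIn G S x y ℓ) (hyx : G.Adj y x) (hℓ : 2 ≤ ℓ) : ℓ + 1 ≤ c := by
  obtain ⟨p, hp, rfl, -⟩ := h
  refine hc y (Walk.cons hyx p) ((Walk.cons_isCycle_iff p hyx).2 ⟨hp, fun he => ?_⟩)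
  have := hp.length_eq_one_of_mem_edges (Sym2.eq_swap ▸ he)
  omega

section

variable [DecidableEq V]

theorem cons (hxy : G.Adj x y) (h : HasPathIn G S y z ℓ) (hx : x ∉ S) :
    HasPathIn G (insert y S) x z (ℓ + 1) := by
  obtain ⟨p, hp, rfl, hpS⟩ := h
  have hsupp : ∀ v ∈ p.support, v ∈ insert y S := fun v hv => by
    exact Finset.mem_insert.2 ((p.mem_support_iff.1 hv).imp_right (hpS v))
  refine ⟨Walk.cons hxy p, hp.cons fun h => ?_, p.length_cons hxy, hsupp⟩
  exact (Finset.mem_insert.1 (hsupp x h)).elim hxy.ne hx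

theorem append (h : HasPathIn G S x y ℓ) (h' : HasPathIn G T y z m)
    (hST : Disjoint (insert x S) T) : HasPathIn G (S ∪ T) x z (ℓ + m) := by
  obtain ⟨p, hp, rfl, hpS⟩ := h
  obtain ⟨q, hq, rfl, hqT⟩ := h'
  have hpS' : ∀ v ∈ p.support, v ∈ insert x S := fun v hv => by
    exact Finset.mem_insert.2 ((p.mem_support_iff.1 hv).imp_right (hpS v))
  refine ⟨p.append q, ?_, Walk.length_append p q, fun v hv => ?_⟩
  · rw [Walk.isPath_def, Walk.support_append, List.nodup_append']
    exact ⟨hp.support_nodup, hq.support_nodup.tail, fun v hv hv' =>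
      Finset.disjoint_left.1 hST (hpS' v hv) (hqT v hv')⟩
  · rw [Walk.tail_support_append, List.mem_append] at hv
    exact Finset.mem_union.2 (hv.imp (hpS v) (hqT v))

theorem erase (h : HasPathIn G S x y ℓ) : HasPathIn G (S.erase x) x y ℓ := by
  obtain ⟨p, hp, hl, hpS⟩ := h
  refine ⟨p, hp, hl, fun v hv => Finset.mem_erase.2 ⟨?_, hpS v hv⟩⟩
  rintro rfl
  exact (List.nodup_cons.1 (p.cons_tail_support.symm ▸ hp.support_nodup)).1 hv

theorem reverse (h : HasPathIn G S x y ℓ) : HasPathIn G (insert x S) y x ℓ := by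
  obtain ⟨p, hp, rfl, hpS⟩ := h
  refine ⟨p.reverse, hp.reverse, p.length_reverse, fun v hv => ?_⟩
  have hv' : v ∈ p.support := by simpa using List.mem_of_mem_tail hv
  exact Finset.mem_insert.2 ((p.mem_support_iff.1 hv').imp_right (hpS v))

end

theorem of_adj (h : G.Adj x y) : HasPathIn G {y} x y 1 := by
  classical exact (HasPathIn.refl G ∅ y).cons h (Finset.notMem_empty x)

theorem of_isClique {Q : Finset V} (hQ : G.IsClique Q) (hy : y ∈ Q) (hx : x ∉ Q)
    (hxQ : ∀ q ∈ Q, G.Adj x q) : HasPathIn G Q x y #Q := by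
  classical
  induction hn : #Q generalizing Q x with
  | zero => simp_all
  | succ n ih =>
    by_cases hQy : (Q.erase y).Nonempty
    · obtain ⟨q, hq⟩ := hQy
      obtain ⟨hqy, hqQ⟩ := Finset.mem_erase.1 hq
      have hpath : HasPathIn G (Q.erase q) q y n := by
        refine ih (hQ.subset (by simp)) (by simp [hy, hqy.symm]) (by simp)
          (fun a ha => hQ hqQ (Finset.mem_of_mem_erase ha) (Finset.ne_of_mem_erase ha).symm)
          (by rw [Finset.card_erase_of_mem hqQ, hn, Nat.add_sub_cancel])
      rw [← Finset.insert_erase hqQ]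
      exact hpath.cons (hxQ q hqQ) fun h => hx (Finset.mem_of_mem_erase h)
    · obtain rfl : Q = {y} := by
        rw [← Finset.insert_erase hy, Finset.not_nonempty_iff_eq_empty.1 hQy, insert_empty_eq]
      obtain rfl : n = 0 := by simpa using hn.symm
      exact of_adj (hxQ y hy)

end HasPathIn

/-- `B` is the vertex set of a vertex outside `K` of the graph obtained by contracting `T` to a
single vertex in a graph on `A ∪ T`. -/
def IsContractedVertex (T A K B : Finset V) : Prop :=
  B = T ∨ ∃ w ∈ A, w ∉ K ∧ B = {w}

section

variable [DecidableEq V]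

/-- The setting of a Dirac-type argument for paths from a root `x` through `S` to `T`, where `T` is
thought of as contracted to a single vertex: no vertex separates a set meeting `D` from the rest,
the vertices of `D` have degree at least `d`, and paths ending at a neighbour of `T` are short. -/
structure RootedSystem (G : SimpleGraph V) (d : ℕ) (x : V) (S D T : Finset V) : Prop where
  subset : D ⊆ S
  nonempty : D.Nonempty
  root_notMem : x ∉ S
  disjoint : Disjoint S T
  le_degree : ∀ v ∈ D, d ≤ #(neighborsIn G (insert x (D ∪ T)) v)
  exists_exit : ∀ K ⊆ S, (K ∩ D).Nonempty → ∀ B, IsContractedVertex T (insert x S) K B →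
    ∃ u ∈ K, ∃ w ∈ insert x (S ∪ T), G.Adj u w ∧ w ∉ K ∧ w ∉ B
  length_add_card_le : ∀ z ∈ S, ∀ ℓ, HasPathIn G S x z ℓ → (neighborsIn G T z).Nonempty →
    ℓ + #(neighborsIn G T z) ≤ d

/-- `Q` is a clique and a union of components of `G[D]`, all of its vertices are adjacent to `x`,
and all of them have neighbours in `T`. -/
structure IsJoinedClique (G : SimpleGraph V) (x : V) (D T Q : Finset V) : Prop where
  subset : Q ⊆ D
  nonempty : Q.Nonempty
  isClique : G.IsClique (Q : Set V)
  closed : ∀ a ∈ Q, ∀ b ∈ D, G.Adj a b → b ∈ Q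
  adj_root : ∀ a ∈ Q, G.Adj x a
  nonempty_neighborsIn : ∀ a ∈ Q, (neighborsIn G T a).Nonempty

/-- `L` is cut off from the rest of the rooted system by the root `x` and one further vertex `B`
of the graph with `T` contracted. -/
structure IsLobe (G : SimpleGraph V) (x : V) (S D T L B : Finset V) : Prop where
  subset : L ⊆ S
  nonempty : (L ∩ D).Nonempty
  isContractedVertex : IsContractedVertex T S L B
  mem_or : ∀ u ∈ L, ∀ w ∈ insert x (S ∪ T), G.Adj u w → w ∈ L ∨ w = x ∨ w ∈ B

variable {d : ℕ} {x v : V} {S D T L B Q : Finset V}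

namespace IsJoinedClique

omit [DecidableEq V] in
theorem hasPathIn (hQ : IsJoinedClique G x D T Q) (hv : v ∈ Q) : HasPathIn G Q x v #Q :=
  .of_isClique hQ.isClique hv (fun h => (hQ.adj_root x h).ne rfl) hQ.adj_root

theorem neighborsIn_subset_erase (hQ : IsJoinedClique G x D T Q) (hv : v ∈ Q) :
    neighborsIn G D v ⊆ Q.erase v := fun u hu => by
  obtain ⟨huD, hvu⟩ := mem_neighborsIn.1 hu
  exact Finset.mem_erase.2 ⟨hvu.ne', hQ.closed v hv u huD hvu⟩

theorem root_mem {y y' : V} {Q' : Finset V} (hQ : IsJoinedClique G y (D.erase y) T Q)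
    (hy : y ∈ D) (hy' : y' ∈ Q) (hQ' : IsJoinedClique G y' (D.erase y') T Q') : y ∈ Q' := by
  obtain ⟨q, hq⟩ := hQ'.nonempty
  have hqD := Finset.mem_of_mem_erase (hQ'.subset hq)
  obtain rfl | hqy := eq_or_ne q y
  · exact hq
  · have hqQ := hQ.closed y' hy' q (Finset.mem_erase.2 ⟨hqy, hqD⟩) (hQ'.adj_root q hq)
    exact hQ'.closed q hq y (Finset.mem_erase.2 ⟨(hQ.adj_root y' hy').ne, hy⟩)
      (hQ.adj_root q hqQ).symm

theorem mem_of_adj {y y' b : V} {Q' : Finset V} (hQ : IsJoinedClique G y (D.erase y) T Q)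
    (hy : y ∈ D) (hy' : y' ∈ Q) (hQ' : IsJoinedClique G y' (D.erase y') T Q') (hb : b ∈ D)
    (hyb : G.Adj y b) : b ∈ Q := by
  obtain rfl | hby' := eq_or_ne b y'
  · exact hy'
  · have hbQ' := hQ'.closed y (hQ.root_mem hy hy' hQ') b (Finset.mem_erase.2 ⟨hby', hb⟩) hyb
    exact hQ.closed y' hy' b (Finset.mem_erase.2 ⟨hyb.ne', hb⟩) (hQ'.adj_root b hbQ')

end IsJoinedClique

namespace RootedSystem

theorem exists_exit_not_root (h : RootedSystem G d x S D T) {K : Finset V} (hK : K ⊆ S)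
    (hKD : (K ∩ D).Nonempty) : ∃ u ∈ K, ∃ w, (w ∈ S ∨ w ∈ T) ∧ G.Adj u w ∧ w ∉ K ∧ w ≠ x := by
  obtain ⟨u, hu, w, hw, huw, hwK, hwx⟩ := h.exists_exit K hK hKD {x}
    (.inr ⟨x, Finset.mem_insert_self x S, fun hx => h.root_notMem (hK hx), rfl⟩)
  rw [Finset.mem_singleton] at hwx
  exact ⟨u, hu, w, Finset.mem_union.1 (Finset.mem_of_mem_insert_of_ne hw hwx), huw, hwK, hwx⟩

theorem two_le (h : RootedSystem G d x S D T) : 2 ≤ d := by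
  obtain ⟨v, hv⟩ := h.nonempty
  obtain ⟨z, hz, ℓ, hvz, hzT⟩ := HasPathIn.exists_of_forall_exit (G := G) S T (h.subset hv)
    fun K hK hvK => by
      obtain ⟨u, hu, w, hw, huw, hwK, -⟩ :=
        h.exists_exit_not_root hK ⟨v, Finset.mem_inter.2 ⟨hvK, hv⟩⟩
      exact ⟨u, hu, w, hw, huw, hwK⟩
  obtain ⟨y, hy, m, hvy, x', hx'⟩ := HasPathIn.exists_of_forall_exit (G := G) S {x} (h.subset hv)
    fun K hK hvK => by
      obtain ⟨u, hu, w, hw, huw, hwK, hwT⟩ :=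
        h.exists_exit K hK ⟨v, Finset.mem_inter.2 ⟨hvK, hv⟩⟩ T (.inl rfl)
      refine ⟨u, hu, w, ?_, huw, hwK⟩
      simp only [Finset.mem_insert, Finset.mem_union, Finset.mem_singleton] at hw ⊢
      tauto
  obtain ⟨hx', hyx⟩ := mem_neighborsIn.1 hx'
  rw [Finset.mem_singleton.1 hx'] at hyx
  obtain ⟨k, hyz⟩ := hvy.exists_of_common_start hvz (h.subset hv)
  have hxz := hyz.cons hyx.symm h.root_notMem
  rw [Finset.insert_eq_of_mem hy] at hxz
  have hle := h.length_add_card_le z hz (k + 1) hxz hzT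
  have hpos := hzT.card_pos
  omega

theorem exists_minimal_isLobe (h : RootedSystem G d x S D T) :
    ∃ L B, IsLobe G x S D T L B ∧ ∀ L' ⊂ L, ∀ B', ¬ IsLobe G x S D T L' B' := by
  have hS : IsLobe G x S D T S T := by
    refine ⟨subset_rfl, ?_, .inl rfl, fun u _ w hw _ => ?_⟩
    · rw [Finset.inter_eq_right.2 h.subset]
      exact h.nonempty
    · simp only [Finset.mem_insert, Finset.mem_union] at hw
      tauto
  obtain ⟨L, ⟨B, hL⟩, hmin⟩ :=
    exists_minimal_of_wellFoundedLT (fun L => ∃ B, IsLobe G x S D T L B) ⟨S, T, hS⟩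
  exact ⟨L, B, hL, fun L' hL' B' h' => hL'.not_subset (hmin ⟨B', h'⟩ hL'.subset)⟩

end RootedSystem

namespace IsLobe

theorem root_notMem (h : RootedSystem G d x S D T) (hL : IsLobe G x S D T L B) : x ∉ L :=
  fun hx => h.root_notMem (hL.subset hx)

theorem disjoint (h : RootedSystem G d x S D T) (hL : IsLobe G x S D T L B) : Disjoint L B := by
  obtain rfl | ⟨w, -, hwL, rfl⟩ := hL.isContractedVertex
  · exact h.disjoint.mono_left hL.subset
  · exact Finset.disjoint_singleton_right.2 hwL

theorem exists_adj_root (h : RootedSystem G d x S D T) (hL : IsLobe G x S D T L B) :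
    ∃ x₁ ∈ L, G.Adj x x₁ := by
  obtain ⟨u, hu, w, hw, huw, hwL, hwB⟩ := h.exists_exit L hL.subset hL.nonempty B
    (hL.isContractedVertex.imp_right fun ⟨w, hw, hwL⟩ => ⟨w, Finset.mem_insert_of_mem hw, hwL⟩)
  obtain hwL' | rfl | hwB' := hL.mem_or u hu w hw huw
  · exact absurd hwL' hwL
  · exact ⟨u, hu, huw.symm⟩
  · exact absurd hwB' hwB

theorem neighborsIn_subset_union (h : RootedSystem G d x S D T) (hL : IsLobe G x S D T L B)
    (hv : v ∈ L) : neighborsIn G (insert x (D ∪ T)) v ⊆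
      neighborsIn G {x} v ∪ neighborsIn G (L ∩ D) v ∪ neighborsIn G B v := by
  intro u hu
  obtain ⟨huDT, hvu⟩ := mem_neighborsIn.1 hu
  have hu' : u ∈ insert x (S ∪ T) :=
    Finset.insert_subset_insert x (Finset.union_subset_union_left h.subset) huDT
  have hTL := Finset.disjoint_left.1 (h.disjoint.mono_left hL.subset)
  have := hL.mem_or v hv u hu' hvu
  simp only [Finset.mem_insert, Finset.mem_union, Finset.mem_inter, Finset.mem_singleton,
    mem_neighborsIn] at huDT ⊢
  have hTu := @hTL u
  tauto

/-- Minimality of the lobe makes it a rooted system of its own, with the far end `B` of the lobe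
as the new target. -/
theorem rootedSystem (h : RootedSystem G (d + 1) x S D T) (hL : IsLobe G x S D T L B)
    (hmin : ∀ L' ⊂ L, ∀ B', ¬ IsLobe G x S D T L' B') {x' : V} (hx' : x' ∈ L)
    (hne : ((L ∩ D).erase x').Nonempty)
    (hlen : ∀ z ∈ L, ∀ ℓ, HasPathIn G (L.erase x') x' z ℓ → (neighborsIn G B z).Nonempty →
      ℓ + #(neighborsIn G B z) ≤ d) :
    RootedSystem G d x' (L.erase x') ((L ∩ D).erase x') B where
  subset := Finset.erase_subset_erase x' Finset.inter_subset_left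
  nonempty := hne
  root_notMem := Finset.notMem_erase x' L
  disjoint := (hL.disjoint h).mono_left (Finset.erase_subset x' L)
  le_degree v hv := by
    obtain ⟨hvL, hvD⟩ := Finset.mem_inter.1 (Finset.mem_of_mem_erase hv)
    have hsub : neighborsIn G (insert x (D ∪ T)) v ⊆
        insert x (neighborsIn G (insert x' ((L ∩ D).erase x' ∪ B)) v) := by
      refine (hL.neighborsIn_subset_union h hvL).trans fun u => ?_
      simp only [Finset.mem_union, Finset.mem_insert, Finset.mem_erase, Finset.mem_singleton,
        mem_neighborsIn]
      tauto
    have := (h.le_degree v hvD).trans (Finset.card_le_card hsub)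
    exact Nat.le_of_succ_le_succ (this.trans (Finset.card_insert_le _ _))
  exists_exit K hK hKD B' hB' := by
    rw [Finset.insert_erase hx'] at hB'
    by_contra! hcon
    have hKL := hK.trans (Finset.erase_subset x' L)
    have hlobe : IsLobe G x S D T K B' := by
      refine ⟨hKL.trans hL.subset, ?_, ?_, fun u hu w hw huw => ?_⟩
      · exact hKD.mono (Finset.inter_subset_inter_left
          ((Finset.erase_subset x' _).trans Finset.inter_subset_right))
      · obtain rfl | ⟨w, hw, hwK, rfl⟩ := hB'
        · exact hL.isContractedVertex.imp_right fun ⟨w, hw, hwL, hB⟩ =>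
            ⟨w, hw, fun hwK => hwL (hKL hwK), hB⟩
        · exact .inr ⟨w, hL.subset hw, hwK, rfl⟩
      · have := hcon u hu w
        have := hL.mem_or u (hKL hu) w hw huw
        simp only [Finset.mem_insert, Finset.mem_union, Finset.mem_erase] at *
        tauto
    exact hmin K (hK.trans_ssubset (Finset.erase_ssubset hx')) B' hlobe
  length_add_card_le z hz := hlen z (Finset.mem_of_mem_erase hz)

theorem hasPathIn_cons (h : RootedSystem G d x S D T) (hL : IsLobe G x S D T L B) {y z : V} {ℓ : ℕ}
    (hy : y ∈ L) (hxy : G.Adj x y) (hyz : HasPathIn G (L.erase y) y z ℓ) :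
    HasPathIn G L x z (ℓ + 1) := by
  rw [← Finset.insert_erase hy]
  exact hyz.cons hxy fun hx => hL.root_notMem h (Finset.mem_of_mem_erase hx)

theorem exists_hasPathIn_sdiff (h : RootedSystem G d x S D T) {w : V}
    (hL : IsLobe G x S D T L {w}) (hw : w ∈ S \ L) :
    ∃ z ∈ S \ L, ∃ ℓ, HasPathIn G (S \ L) w z ℓ ∧ (neighborsIn G T z).Nonempty := by
  refine HasPathIn.exists_of_forall_exit _ _ hw fun K hK hwK => ?_
  obtain ⟨u, hu, w', hw', huw', hw'K, hw'x⟩ := h.exists_exit_not_root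
    (Finset.union_subset (hK.trans Finset.sdiff_subset) hL.subset)
    (hL.nonempty.mono (Finset.inter_subset_inter_right Finset.subset_union_right))
  rw [Finset.mem_union, not_or] at hw'K
  obtain huK | huL := Finset.mem_union.1 hu
  · exact ⟨u, huK, w', hw'.imp_left fun hw'S => Finset.mem_sdiff.2 ⟨hw'S, hw'K.2⟩, huw', hw'K.1⟩
  · have hw'm : w' ∈ insert x (S ∪ T) := Finset.mem_insert_of_mem (Finset.mem_union.2 hw')
    obtain hw'L | rfl | hw'w := hL.mem_or u huL w' hw'm huw'
    · exact absurd hw'L hw'K.2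
    · exact absurd rfl hw'x
    · exact absurd (Finset.mem_singleton.1 hw'w ▸ hwK) hw'K.1

theorem add_two_le (h : RootedSystem G (d + 1) x S D T) {w y z : V} {ℓ : ℕ}
    (hL : IsLobe G x S D T L {w}) (hw : w ∈ S \ L) (hy : y ∈ L) (hxy : G.Adj x y) (hz : z ∈ L)
    (hyz : HasPathIn G (L.erase y) y z ℓ) (hzw : G.Adj z w) : ℓ + 2 ≤ d := by
  obtain ⟨t, ht, m, hwt, htT⟩ := hL.exists_hasPathIn_sdiff h hw
  have hzt := hwt.cons hzw fun hzS => (Finset.mem_sdiff.1 hzS).2 hz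
  rw [Finset.insert_eq_of_mem hw] at hzt
  have hdisj : Disjoint (insert x L) (S \ L) := by
    rw [Finset.disjoint_insert_left]
    exact ⟨fun hx => h.root_notMem (Finset.mem_sdiff.1 hx).1, Finset.disjoint_sdiff⟩
  have hxt := ((hL.hasPathIn_cons h hy hxy hyz).append hzt hdisj).mono
    (Finset.union_subset hL.subset Finset.sdiff_subset)
  have hle := h.length_add_card_le t (Finset.mem_sdiff.1 ht).1 _ hxt htT
  have hpos := htT.card_pos
  omega

theorem length_add_card_le (h : RootedSystem G (d + 1) x S D T) (hL : IsLobe G x S D T L B)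
    {y z : V} {ℓ : ℕ} (hy : y ∈ L) (hxy : G.Adj x y) (hz : z ∈ L)
    (hyz : HasPathIn G (L.erase y) y z ℓ) (hzB : (neighborsIn G B z).Nonempty) :
    ℓ + #(neighborsIn G B z) ≤ d := by
  obtain rfl | ⟨w, hwS, hwL, rfl⟩ := hL.isContractedVertex
  · have := h.length_add_card_le z (hL.subset hz) (ℓ + 1)
      ((hL.hasPathIn_cons h hy hxy hyz).mono hL.subset) hzB
    omega
  · obtain ⟨w', hw'⟩ := hzB
    obtain ⟨hw'w, hzw⟩ := mem_neighborsIn.1 hw'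
    rw [Finset.mem_singleton.1 hw'w] at hzw
    have hcard := Finset.card_le_card (neighborsIn_subset (G := G) {w} z)
    rw [Finset.card_singleton] at hcard
    have := hL.add_two_le h (Finset.mem_sdiff.2 ⟨hwS, hwL⟩) hy hxy hz hyz hzw
    omega

theorem exists_isJoinedClique (h : RootedSystem G (d + 1) x S D T) (hL : IsLobe G x S D T L B)
    (hmin : ∀ L' ⊂ L, ∀ B', ¬ IsLobe G x S D T L' B')
    (ih : ∀ {x S D T}, RootedSystem G d x S D T → ∃ Q, IsJoinedClique G x D T Q) {y : V}
    (hy : y ∈ L) (hxy : G.Adj x y) (hne : ((L ∩ D).erase y).Nonempty) :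
    ∃ Q, IsJoinedClique G y ((L ∩ D).erase y) B Q :=
  ih <| hL.rootedSystem h hmin hy hne fun _ hz _ hyz hzB =>
    hL.length_add_card_le h hy hxy hz hyz hzB

theorem card_add_card_le (h : RootedSystem G (d + 1) x S D T) (hL : IsLobe G x S D T L B) {y : V}
    (hy : y ∈ L) (hxy : G.Adj x y) (hQ : IsJoinedClique G y ((L ∩ D).erase y) B Q) (hv : v ∈ Q) :
    #Q + #(neighborsIn G B v) ≤ d := by
  have hQL : Q ⊆ L.erase y :=
    hQ.subset.trans (Finset.erase_subset_erase y Finset.inter_subset_left)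
  exact hL.length_add_card_le h hy hxy (Finset.mem_of_mem_erase (hQL hv))
    ((hQ.hasPathIn hv).mono hQL) (hQ.nonempty_neighborsIn v hv)

theorem le_card_add (h : RootedSystem G (d + 1) x S D T) (hL : IsLobe G x S D T L B) {y : V}
    (hQ : IsJoinedClique G y ((L ∩ D).erase y) B Q) (hv : v ∈ Q) :
    d + 1 ≤ #(neighborsIn G (insert x ({y} ∩ D)) v) + (#Q - 1) + #(neighborsIn G B v) := by
  obtain ⟨hvL, hvD⟩ := Finset.mem_inter.1 (Finset.mem_of_mem_erase (hQ.subset hv))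
  have hsub : neighborsIn G (insert x (D ∪ T)) v ⊆
      neighborsIn G (insert x ({y} ∩ D)) v ∪ Q.erase v ∪ neighborsIn G B v := by
    refine (hL.neighborsIn_subset_union h hvL).trans fun u hu => ?_
    have hQu : u ∈ neighborsIn G _ v → u ∈ Q.erase v := fun hu => hQ.neighborsIn_subset_erase hv hu
    simp only [Finset.mem_union, Finset.mem_insert, Finset.mem_erase, Finset.mem_singleton,
      Finset.mem_inter, mem_neighborsIn] at hu hQu ⊢
    tauto
  refine (h.le_degree v hvD).trans ((Finset.card_le_card hsub).trans ?_)
  rw [← Finset.card_erase_of_mem hv]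
  exact (Finset.card_union_le _ _).trans (Nat.add_le_add_right (Finset.card_union_le _ _) _)

theorem mem_and_le_card (h : RootedSystem G (d + 1) x S D T) (hL : IsLobe G x S D T L B)
    {y : V} (hempty : (L ∩ D).erase y = ∅) : y ∈ L ∩ D ∧ d ≤ #(neighborsIn G B y) := by
  have hLD : L ∩ D = {y} := (Finset.erase_eq_empty_iff _ _).1 hempty |>.resolve_left
    hL.nonempty.ne_empty
  have hy : y ∈ L ∩ D := hLD ▸ Finset.mem_singleton_self y
  obtain ⟨hyL, hyD⟩ := Finset.mem_inter.1 hy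
  refine ⟨hy, ?_⟩
  have hsub : neighborsIn G (insert x (D ∪ T)) y ⊆ insert x (neighborsIn G B y) := by
    refine (hL.neighborsIn_subset_union h hyL).trans fun u hu => ?_
    have hyu : G.Adj y u → u ≠ y := fun hyu => hyu.ne'
    simp only [hLD, Finset.mem_union, Finset.mem_insert, Finset.mem_singleton,
      mem_neighborsIn] at hu ⊢
    tauto
  have := (h.le_degree y hyD).trans (Finset.card_le_card hsub)
  exact Nat.le_of_succ_le_succ (this.trans (Finset.card_insert_le _ _))

theorem eq_target (h : RootedSystem G (d + 1) x S D T) (hL : IsLobe G x S D T L B)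
    (hmin : ∀ L' ⊂ L, ∀ B', ¬ IsLobe G x S D T L' B')
    (ih : ∀ {x S D T}, RootedSystem G d x S D T → ∃ Q, IsJoinedClique G x D T Q) : B = T := by
  refine hL.isContractedVertex.resolve_right ?_
  rintro ⟨w, hwS, hwL, rfl⟩
  have hw : w ∈ S \ L := Finset.mem_sdiff.2 ⟨hwS, hwL⟩
  have hcard (v : V) : #(neighborsIn G {w} v) ≤ 1 := Finset.card_le_card (neighborsIn_subset {w} v)
  have hadj {v : V} (hv : (neighborsIn G {w} v).Nonempty) : G.Adj v w := by
    obtain ⟨w', hw'⟩ := hv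
    rw [mem_neighborsIn, Finset.mem_singleton] at hw'
    exact hw'.1 ▸ hw'.2
  obtain ⟨y, hy, hxy⟩ := hL.exists_adj_root h
  obtain hempty | hne := ((L ∩ D).erase y).eq_empty_or_nonempty
  · have hd := h.two_le
    have hle := (hL.mem_and_le_card h hempty).2
    have hyw := hadj (Finset.card_pos.1 (by omega : 0 < #(neighborsIn G {w} y)))
    have := hL.add_two_le h hw hy hxy hy (.refl G _ y) hyw
    have := hcard y
    omega
  · obtain ⟨Q, hQ⟩ := hL.exists_isJoinedClique h hmin ih hy hxy hne
    obtain ⟨v, hv⟩ := hQ.nonempty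
    have hQL : Q ⊆ L.erase y :=
      hQ.subset.trans (Finset.erase_subset_erase y Finset.inter_subset_left)
    have hlen := hL.add_two_le h hw hy hxy (Finset.mem_of_mem_erase (hQL hv))
      ((hQ.hasPathIn hv).mono hQL) (hadj (hQ.nonempty_neighborsIn v hv))
    have hle := hL.le_card_add h hQ hv
    have htwo : #(neighborsIn G (insert x ({y} ∩ D)) v) ≤ 2 :=
      (Finset.card_le_card (neighborsIn_subset _ v)).trans <| (Finset.card_insert_le _ _).trans <|
        Nat.succ_le_succ (Finset.card_le_card Finset.inter_subset_left)
    have := hcard v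
    have := hQ.nonempty.card_pos
    omega

theorem mem_of_adj (h : RootedSystem G d x S D T) (hL : IsLobe G x S D T L T) {a b : V}
    (ha : a ∈ L) (hb : b ∈ D) (hab : G.Adj a b) : b ∈ L := by
  have hbS := h.subset hb
  obtain hbL | rfl | hbT := hL.mem_or a ha b
    (Finset.mem_insert_of_mem (Finset.mem_union_left T hbS)) hab
  · exact hbL
  · exact absurd hbS h.root_notMem
  · exact absurd hbT (Finset.disjoint_left.1 h.disjoint hbS)

theorem isJoinedClique_singleton (h : RootedSystem G (d + 1) x S D T)
    (hL : IsLobe G x S D T L T) {y : V} (hxy : G.Adj x y) (hempty : (L ∩ D).erase y = ∅) :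
    IsJoinedClique G x D T {y} := by
  obtain ⟨hy, hle⟩ := hL.mem_and_le_card h hempty
  obtain ⟨hyL, hyD⟩ := Finset.mem_inter.1 hy
  refine ⟨by simpa using hyD, by simp, by simp, fun a ha b hb hab => ?_, by simpa using hxy, ?_⟩
  · obtain rfl := Finset.mem_singleton.1 ha
    have hbLD := Finset.mem_inter.2 ⟨hL.mem_of_adj h hyL hb hab, hb⟩
    exact absurd (Finset.mem_erase.2 ⟨hab.ne', hbLD⟩) (hempty ▸ Finset.notMem_empty b)
  · have hd := h.two_le
    have hpos : 0 < #(neighborsIn G T y) := by omega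
    simpa using Finset.card_pos.1 hpos

/-- A clique joined to `y` meets the degree condition only if it is joined to `x` too and `y` lies
in `D`. -/
theorem adj_root_and_mem (h : RootedSystem G (d + 1) x S D T) (hL : IsLobe G x S D T L T) {y : V}
    (hy : y ∈ L) (hxy : G.Adj x y) (hQ : IsJoinedClique G y ((L ∩ D).erase y) T Q) (hv : v ∈ Q) :
    G.Adj x v ∧ y ∈ D := by
  by_contra hcon
  have hone : #(neighborsIn G (insert x ({y} ∩ D)) v) ≤ 1 := by
    refine Finset.card_le_one.2 fun u hu u' hu' => ?_
    simp only [mem_neighborsIn, Finset.mem_insert, Finset.mem_inter, Finset.mem_singleton,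
      G.adj_comm v] at hu hu'
    grind
  have hle := hL.le_card_add h hQ hv
  have hlen := hL.card_add_card_le h hy hxy hQ hv
  have := hQ.nonempty.card_pos
  omega

/-- Applying the induction hypothesis again at a vertex `y'` of the clique found at `y` gives a
second clique, which contains `y`; hence `y` itself can be added to the first one. -/
theorem isJoinedClique_insert (h : RootedSystem G (d + 1) x S D T) (hL : IsLobe G x S D T L T)
    {y y' : V} {Q' : Finset V} (hy : y ∈ L) (hxy : G.Adj x y)
    (hQ : IsJoinedClique G y ((L ∩ D).erase y) T Q) (hy' : y' ∈ Q)
    (hQ' : IsJoinedClique G y' ((L ∩ D).erase y') T Q') :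
    IsJoinedClique G x D T (insert y Q) := by
  have hroot (v : V) (hv : v ∈ Q) := hL.adj_root_and_mem h hy hxy hQ hv
  have hyD : y ∈ D := (hroot y' hy').2
  have hQL (v : V) (hv : v ∈ Q) : v ∈ L ∩ D := Finset.mem_of_mem_erase (hQ.subset hv)
  have hyLD : y ∈ L ∩ D := Finset.mem_inter.2 ⟨hy, hyD⟩
  have hyclosed (b : V) (hb : b ∈ D) (hyb : G.Adj y b) : b ∈ Q :=
    hQ.mem_of_adj hyLD hy' hQ' (Finset.mem_inter.2 ⟨hL.mem_of_adj h hy hb hyb, hb⟩) hyb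
  refine ⟨Finset.insert_subset hyD fun v hv => (Finset.mem_inter.1 (hQL v hv)).2,
    Finset.insert_nonempty y Q, ?_, ?_, ?_, ?_⟩
  · rw [Finset.coe_insert, isClique_insert]
    exact ⟨hQ.isClique, fun b hb _ => hQ.adj_root b hb⟩
  · rw [Finset.forall_mem_insert]
    refine ⟨fun b hb hyb => Finset.mem_insert_of_mem (hyclosed b hb hyb), fun a ha b hb hab => ?_⟩
    rw [Finset.mem_insert, or_iff_not_imp_left]
    have hbL := hL.mem_of_adj h (Finset.mem_inter.1 (hQL a ha)).1 hb hab
    exact fun hby => hQ.closed a ha b (Finset.mem_erase.2 ⟨hby, Finset.mem_inter.2 ⟨hbL, hb⟩⟩) hab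
  · exact Finset.forall_mem_insert _ _ _ |>.2 ⟨hxy, fun v hv => (hroot v hv).1⟩
  · exact Finset.forall_mem_insert _ _ _ |>.2
      ⟨hQ'.nonempty_neighborsIn y (hQ.root_mem hyLD hy' hQ'), hQ.nonempty_neighborsIn⟩

end IsLobe

theorem RootedSystem.exists_isJoinedClique (h : RootedSystem G d x S D T) :
    ∃ Q, IsJoinedClique G x D T Q := by
  induction d generalizing x S D T with
  | zero => exact absurd h.two_le (by omega)
  | succ d ih =>
    obtain ⟨L, B, hL, hmin⟩ := h.exists_minimal_isLobe
    obtain rfl := hL.eq_target h hmin ih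
    obtain ⟨y, hy, hxy⟩ := hL.exists_adj_root h
    obtain hempty | hne := ((L ∩ D).erase y).eq_empty_or_nonempty
    · exact ⟨{y}, hL.isJoinedClique_singleton h hxy hempty⟩
    · obtain ⟨Q, hQ⟩ := hL.exists_isJoinedClique h hmin ih hy hxy hne
      obtain ⟨y', hy'⟩ := hQ.nonempty
      obtain ⟨hy'ne, hy'LD⟩ := Finset.mem_erase.1 (hQ.subset hy')
      obtain ⟨hxy', hyD⟩ := hL.adj_root_and_mem h hy hxy hQ hy'
      have hyne : y ∈ (L ∩ D).erase y' :=
        Finset.mem_erase.2 ⟨hy'ne.symm, Finset.mem_inter.2 ⟨hy, hyD⟩⟩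
      obtain ⟨Q', hQ'⟩ :=
        hL.exists_isJoinedClique h hmin ih (Finset.mem_inter.1 hy'LD).1 hxy' ⟨y, hyne⟩
      exact ⟨insert y Q, hL.isJoinedClique_insert h hy hxy hQ hy' hQ'⟩

end

/-- `f` runs periodically around a longest cycle of `G`, of length `c` and with vertex set `C`. -/
structure IsLongestCycleParam (G : SimpleGraph V) (C : Finset V) (c : ℕ) (f : ℕ → V) : Prop where
  three_le : 3 ≤ c
  adj : ∀ i, G.Adj (f i) (f (i + 1))
  eq_iff : ∀ i j, f i = f j ↔ i ≡ j [MOD c]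
  mem_iff : ∀ v, v ∈ C ↔ ∃ i, f i = v
  length_le : ∀ (w : V) (r : G.Walk w w), r.IsCycle → r.length ≤ c

theorem IsLongestCycle.isLongestCycleParam [DecidableEq V] {v₀ : V} {p : G.Walk v₀ v₀}
    (hp : IsLongestCycle G p) :
    IsLongestCycleParam G p.support.toFinset p.length fun i => p.getVert (i % p.length) := by
  have hpos : 0 < p.length := by have := hp.1.three_le_length; omega
  refine ⟨hp.1.three_le_length, fun i => ?_, fun i j => ⟨fun h => ?_, fun h => ?_⟩, fun v => ?_,
    hp.2⟩
  · have hadj := p.adj_getVert_succ (Nat.mod_lt i hpos)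
    obtain hlast | hlast := (Nat.succ_le_of_lt (Nat.mod_lt i hpos)).eq_or_lt
    · have hzero : (i + 1) % p.length = 0 := by
        rw [← Nat.mod_add_mod, ← Nat.succ_eq_add_one, hlast, Nat.mod_self]
      simpa only [hzero, ← Nat.succ_eq_add_one, hlast, Walk.getVert_length, Walk.getVert_zero]
        using hadj
    · rwa [← Nat.mod_add_mod, Nat.mod_eq_of_lt hlast]
  · exact hp.1.getVert_injOn' (Nat.le_sub_one_of_lt (Nat.mod_lt i hpos))
      (Nat.le_sub_one_of_lt (Nat.mod_lt j hpos)) h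
  · exact congrArg p.getVert h
  · rw [List.mem_toFinset, Walk.mem_support_iff_exists_getVert]
    refine ⟨fun ⟨k, hk, hkp⟩ => ⟨k, ?_⟩, fun ⟨i, hi⟩ => ⟨_, hi, (Nat.mod_lt i hpos).le⟩⟩
    obtain rfl | hlt := hkp.eq_or_lt
    · rwa [Nat.mod_self, Walk.getVert_zero, ← p.getVert_length]
    · rwa [Nat.mod_eq_of_lt hlt]

theorem TwoConnected.exists_adj_ne [Fintype V] (hG : TwoConnected G) {K : Finset V}
    (hK : K.Nonempty) {t w : V} (ht : t ∉ K) (hw : w ∉ K) (htw : t ≠ w) :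
    ∃ u ∈ K, ∃ v, v ∉ K ∧ v ≠ w ∧ G.Adj u v := by
  obtain ⟨u, hu⟩ := hK
  have huw : u ≠ w := fun h => hw (h ▸ hu)
  obtain ⟨p⟩ := (hG.2 w).preconnected ⟨u, by simpa using huw⟩ ⟨t, by simpa using htw⟩
  obtain ⟨e, -, he, he'⟩ := p.exists_boundary_dart {v | v.1 ∈ K} hu ht
  have hadj := e.adj
  rw [Subgraph.coe_adj, Subgraph.deleteVerts_adj] at hadj
  exact ⟨_, he, _, he', by simpa using hadj.2.2.2.1, hadj.2.2.2.2⟩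

theorem exists_minimal_closed [Finite V] [DecidableEq V] {C D : Finset V} (hD : D.Nonempty)
    (hDC : Disjoint D C) :
    ∃ S, Disjoint S C ∧ (S ∩ D).Nonempty ∧ (∀ u ∈ S, ∀ w, G.Adj u w → w ∉ C → w ∈ S) ∧
      ∀ K ⊂ S, (K ∩ D).Nonempty → ∃ u ∈ K, ∃ w ∈ S, G.Adj u w ∧ w ∉ K := by
  cases nonempty_fintype V
  obtain ⟨S, ⟨hSC, hSD, hcl⟩, hmin⟩ := exists_minimal_of_wellFoundedLT
    (fun S : Finset V =>
      Disjoint S C ∧ (S ∩ D).Nonempty ∧ ∀ u ∈ S, ∀ w, G.Adj u w → w ∉ C → w ∈ S)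
    ⟨Cᶜ, disjoint_compl_left,
      by rwa [Finset.inter_eq_right.2 (Finset.subset_compl_iff_disjoint_right.2 hDC)],
      fun _ _ _ _ hw => Finset.mem_compl.2 hw⟩
  refine ⟨S, hSC, hSD, hcl, fun K hKS hKD => ?_⟩
  by_contra! hK
  exact hKS.2 (hmin ⟨hSC.mono_left hKS.1, hKD,
    fun u hu w huw hw => hK u hu w (hcl u (hKS.1 hu) w huw hw) huw⟩ hKS.1)

theorem mul_card_le_of_forall_add_le {J : Finset ℕ} {g lo hi : ℕ}
    (hJ : ∀ j ∈ J, lo ≤ j ∧ j ≤ hi) (hgap : ∀ i ∈ J, ∀ j ∈ J, i < j → i + g ≤ j) :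
    g * #J ≤ hi + g - lo := by
  have hdisj : (J : Set ℕ).PairwiseDisjoint fun j => Finset.Ico j (j + g) := by
    intro i hi j hj hij
    refine Finset.disjoint_left.2 fun k hk hk' => ?_
    rw [Finset.mem_Ico] at hk hk'
    obtain h | h := hij.lt_or_gt
    · have := hgap i hi j hj h
      omega
    · have := hgap j hj i hi h
      omega
  calc g * #J = #(J.biUnion fun j => Finset.Ico j (j + g)) := by
        rw [Finset.card_biUnion hdisj]
        simp [mul_comm]
    _ ≤ #(Finset.Ico lo (hi + g)) := Finset.card_le_card fun k hk => by
        obtain ⟨j, hj, hk⟩ := Finset.mem_biUnion.1 hk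
        rw [Finset.mem_Ico] at hk ⊢
        have := hJ j hj
        omega
    _ = hi + g - lo := Nat.card_Ico lo (hi + g)

namespace IsLongestCycleParam

variable {C S : Finset V} {c i j ℓ : ℕ} {f : ℕ → V} {a z : V}

theorem mem (hf : IsLongestCycleParam G C c f) (i : ℕ) : f i ∈ C := (hf.mem_iff _).2 ⟨i, rfl⟩

theorem periodic (hf : IsLongestCycleParam G C c f) (i : ℕ) : f (i + c) = f i :=
  (hf.eq_iff _ _).2 (Nat.add_mod_right i c)

theorem ne_of_lt (hf : IsLongestCycleParam G C c f) (hij : i < j) (hj : j < i + c) :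
    f i ≠ f j := fun h => by
  have := Nat.le_of_dvd (by omega) ((Nat.modEq_iff_dvd' hij.le).1 ((hf.eq_iff i j).1 h))
  omega

theorem exists_lt (hf : IsLongestCycleParam G C c f) (ha : a ∈ C) : ∃ j < c, f j = a := by
  obtain ⟨j, rfl⟩ := (hf.mem_iff a).1 ha
  have := hf.three_le
  exact ⟨j % c, Nat.mod_lt j (by omega), (hf.eq_iff _ _).2 (Nat.mod_modEq j c)⟩

theorem exists_shift (hf : IsLongestCycleParam G C c f) (ha : a ∈ C) :
    ∃ g, IsLongestCycleParam G C c g ∧ g 0 = a := by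
  obtain ⟨k, hk, rfl⟩ := hf.exists_lt ha
  refine ⟨fun i => f (k + i), ⟨hf.three_le, fun i => hf.adj (k + i), fun i j => ?_, fun v => ?_,
    hf.length_le⟩, rfl⟩
  · exact (hf.eq_iff _ _).trans ⟨Nat.ModEq.add_left_cancel' k, Nat.ModEq.add_left k⟩
  · rw [hf.mem_iff]
    refine ⟨fun ⟨i, hi⟩ => ⟨c - k + i, ?_⟩, fun ⟨i, hi⟩ => ⟨k + i, hi⟩⟩
    rw [← hi, ← hf.periodic i]
    congr 1
    omega

theorem card_eq (hf : IsLongestCycleParam G C c f) : #C = c := by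
  rw [← Finset.card_range c]
  refine (Finset.card_nbij f (fun i _ => hf.mem i) (fun i hi j hj hij => ?_) fun v hv => ?_).symm
  · rw [Finset.coe_range, Set.mem_Iio] at hi hj
    exact ((hf.eq_iff i j).1 hij).eq_of_lt_of_lt hi hj
  · obtain ⟨j, hj, rfl⟩ := hf.exists_lt hv
    exact Set.mem_image_of_mem f (Finset.mem_coe.2 (Finset.mem_range.2 hj))

section

variable [DecidableEq V]

theorem hasPathIn_arc (hf : IsLongestCycleParam G C c f) (hij : i ≤ j) (hj : j < i + c) :
    HasPathIn G (C.erase (f i)) (f i) (f j) (j - i) := by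
  suffices HasPathIn G ((Finset.Ioc i j).image f) (f i) (f j) (j - i) from
    (this.mono (Finset.image_subset_iff.2 fun k _ => hf.mem k)).erase
  induction j, hij using Nat.le_induction with
  | base => simpa using HasPathIn.refl G _ (f i)
  | succ j hij ih =>
    have hdisj : Disjoint (insert (f i) ((Finset.Ioc i j).image f)) {f (j + 1)} := by
      rw [← Finset.image_insert, Finset.disjoint_singleton_right, Finset.mem_image]
      rintro ⟨k, hk, hkj⟩
      rw [Finset.mem_insert, Finset.mem_Ioc] at hk
      exact hf.ne_of_lt (by omega) (by omega) hkj
    have hpath := (ih (by omega)).append (.of_adj (hf.adj j)) hdisj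
    rw [← Finset.image_singleton, ← Finset.image_union, ← Nat.sub_add_comm hij] at hpath
    exact hpath.mono (Finset.image_subset_image fun k => by
      simp only [Finset.mem_union, Finset.mem_Ioc, Finset.mem_singleton]
      omega)

omit [DecidableEq V] in
/-- Both ways of closing up the ear by an arc of the cycle give a cycle of length at most `c`. -/
theorem ear_bounds (hf : IsLongestCycleParam G C c f) (hear : HasPathIn G S (f i) z ℓ)
    (hSC : Disjoint S C) (hz : z ∈ S) (hzj : G.Adj z (f j)) (hij : i < j) (hj : j < i + c) :
    i + ℓ + 1 ≤ j ∧ j + ℓ + 1 ≤ i + c := by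
  classical
  have hℓ : 0 < ℓ := hear.pos_of_ne fun h => Finset.disjoint_left.1 hSC hz (h ▸ hf.mem i)
  constructor
  · have harc := hf.hasPathIn_arc hj.le (by omega : i + c < j + c)
    rw [hf.periodic] at harc
    have hdisj : Disjoint (insert (f j) (C.erase (f j))) S := by
      rw [Finset.insert_erase (hf.mem j)]
      exact hSC.symm
    have := (harc.append hear hdisj).add_one_le_of_adj hf.length_le hzj (by omega)
    omega
  · have harc := hf.hasPathIn_arc hij.le hj
    have hdisj : Disjoint (insert z (insert (f i) S)) (C.erase (f i)) := by
      rw [Finset.insert_comm, Finset.insert_eq_of_mem hz, Finset.disjoint_insert_left]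
      exact ⟨Finset.notMem_erase _ _, hSC.mono_right (Finset.erase_subset _ _)⟩
    have := (hear.reverse.append harc hdisj).add_one_le_of_adj hf.length_le hzj.symm (by omega)
    omega

omit [DecidableEq V] in
theorem mul_card_le (hf : IsLongestCycleParam G C c f) {N : Finset V} (hN : N ⊆ C) {g lo hi : ℕ}
    (hwin : ∀ j < c, f j ∈ N → lo ≤ j ∧ j ≤ hi)
    (hgap : ∀ i j, i < j → j < c → f i ∈ N → f j ∈ N → i + g ≤ j) : g * #N ≤ hi + g - lo := by
  classical
  have hsub : N ⊆ ({j ∈ Finset.range c | f j ∈ N}).image f := by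
    intro v hv
    obtain ⟨j, hj, rfl⟩ := hf.exists_lt (hN hv)
    exact Finset.mem_image_of_mem f (Finset.mem_filter.2 ⟨Finset.mem_range.2 hj, hv⟩)
  have hcard := (Finset.card_le_card hsub).trans Finset.card_image_le
  refine (Nat.mul_le_mul_left g hcard).trans (mul_card_le_of_forall_add_le ?_ ?_)
  · simpa using hwin
  · intro i hi j hj hij
    rw [Finset.mem_filter, Finset.mem_range] at hi hj
    exact hgap i j hij hj.1 hi.2 hj.2

theorem bounds_of_mem_neighborsIn (hf : IsLongestCycleParam G C c f)
    (hear : HasPathIn G S (f 0) z ℓ) (hSC : Disjoint S C) (hz : z ∈ S) (hj : j < c)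
    (hjN : f j ∈ neighborsIn G (C.erase (f 0)) z) : ℓ + 1 ≤ j ∧ j ≤ c - (ℓ + 1) := by
  rw [mem_neighborsIn, Finset.mem_erase] at hjN
  have hj0 : 0 < j := Nat.pos_of_ne_zero fun h => hjN.1.1 (h ▸ rfl)
  have := hf.ear_bounds hear hSC hz hjN.2 hj0 (by omega)
  omega

theorem length_add_card_le (hf : IsLongestCycleParam G C c f) (ha : a ∈ C)
    (hear : HasPathIn G S a z ℓ) (hSC : Disjoint S C) (hz : z ∈ S)
    (hne : (neighborsIn G (C.erase a) z).Nonempty) :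
    ℓ + #(neighborsIn G (C.erase a) z) ≤ c / 2 := by
  obtain ⟨g, hg, rfl⟩ := hf.exists_shift ha
  have hwin (j : ℕ) (hj : j < c) (hjN : g j ∈ neighborsIn G (C.erase (g 0)) z) :=
    hg.bounds_of_mem_neighborsIn hear hSC hz hj hjN
  have hgap (i j : ℕ) (hij : i < j) (hj : j < c) (hi : g i ∈ neighborsIn G (C.erase (g 0)) z)
      (hjN : g j ∈ neighborsIn G (C.erase (g 0)) z) : i + 2 ≤ j := by
    have hzC : Disjoint {z} C := Finset.disjoint_singleton_left.2 (Finset.disjoint_left.1 hSC hz)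
    exact (hg.ear_bounds (.of_adj (mem_neighborsIn.1 hi).2.symm) hzC (Finset.mem_singleton_self z)
      (mem_neighborsIn.1 hjN).2 hij (by omega)).1
  have hN : neighborsIn G (C.erase (g 0)) z ⊆ C :=
    (neighborsIn_subset _ z).trans (Finset.erase_subset _ _)
  obtain ⟨t, ht⟩ := hne
  obtain ⟨j, hj, rfl⟩ := hg.exists_lt (hN ht)
  have := hwin j hj ht
  have := hg.mul_card_le hN hwin hgap
  omega

theorem neighborsIn_erase_subset (hf : IsLongestCycleParam G C c f) {v₁ v₂ : V} (ha : a ∈ C)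
    (hv₁ : v₁ ∉ C) (hv₂ : v₂ ∉ C) (hv : G.Adj v₁ v₂) (ha₂ : G.Adj a v₂)
    (hle : c / 2 ≤ #(neighborsIn G (C.erase a) v₂) + 2) :
    neighborsIn G (C.erase a) v₁ ⊆ neighborsIn G (C.erase a) v₂ := by
  intro t ht
  obtain ⟨hta, hv₁t⟩ := mem_neighborsIn.1 ht
  have htC := Finset.mem_of_mem_erase hta
  by_contra hcon
  have hv₂t : ¬ G.Adj v₂ t := fun h => hcon (mem_neighborsIn.2 ⟨hta, h⟩)
  have hear : HasPathIn G {v₁, v₂} t v₂ 2 :=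
    (HasPathIn.of_adj hv).cons hv₁t.symm fun h => hv₂ (Finset.mem_singleton.1 h ▸ htC)
  have hdisj : Disjoint {v₁, v₂} C := by simp [hv₁, hv₂]
  have hsub : insert a (neighborsIn G (C.erase a) v₂) ⊆ neighborsIn G (C.erase t) v₂ := by
    intro s hs
    have hst : G.Adj v₂ s → s ≠ t := fun h hst => hv₂t (hst ▸ h)
    have has : s = a → s ∈ C ∧ G.Adj v₂ s := fun h => h ▸ ⟨ha, ha₂.symm⟩
    simp only [Finset.mem_insert, mem_neighborsIn, Finset.mem_erase] at hs ⊢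
    tauto
  have hle' := Finset.card_le_card hsub
  rw [Finset.card_insert_of_notMem (by simp)] at hle'
  have := hf.length_add_card_le htC hear hdisj (by simp) (Finset.card_pos.1 (by omega))
  omega

/-- Neighbours of `v₁` are at distance at least 3 along the cycle, since the ear between two of
them may run through the edge `v₁ v₂`. -/
theorem three_mul_card_add_three_le (hf : IsLongestCycleParam G C c f) {v₁ v₂ : V} (ha : a ∈ C)
    (hv₁ : v₁ ∉ C) (hv₂ : v₂ ∉ C) (hv : G.Adj v₁ v₂) (ha₂ : G.Adj a v₂)
    (hle : c / 2 ≤ #(neighborsIn G (C.erase a) v₂) + 2) :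
    3 * #(neighborsIn G (C.erase a) v₁) + 3 ≤ c := by
  have hsub := hf.neighborsIn_erase_subset ha hv₁ hv₂ hv ha₂ hle
  have hdisj : Disjoint {v₁, v₂} C := by simp [hv₁, hv₂]
  have hthree := hf.three_le
  obtain ⟨g, hg, rfl⟩ := hf.exists_shift ha
  have hwin (j : ℕ) (hj : j < c) (hjN : g j ∈ neighborsIn G (C.erase (g 0)) v₁) :
      3 ≤ j ∧ j ≤ c - 3 := by
    have hear : HasPathIn G {v₁, v₂} (g 0) v₁ 2 := by
      rw [Finset.pair_comm]
      exact (HasPathIn.of_adj hv.symm).cons ha₂ fun h => hv₁ (Finset.mem_singleton.1 h ▸ ha)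
    exact hg.bounds_of_mem_neighborsIn hear hdisj (by simp) hj hjN
  have hgap (i j : ℕ) (hij : i < j) (hj : j < c) (hi : g i ∈ neighborsIn G (C.erase (g 0)) v₁)
      (hjN : g j ∈ neighborsIn G (C.erase (g 0)) v₁) : i + 3 ≤ j := by
    have hear : HasPathIn G {v₁, v₂} (g i) v₂ 2 := (HasPathIn.of_adj hv).cons
      (mem_neighborsIn.1 hi).2.symm fun h => hv₂ (Finset.mem_singleton.1 h ▸ hg.mem i)
    exact (hg.ear_bounds hear hdisj (by simp) (mem_neighborsIn.1 (hsub hjN)).2 hij (by omega)).1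
  have := hg.mul_card_le ((neighborsIn_subset _ v₁).trans (Finset.erase_subset _ _)) hwin hgap
  omega

omit [DecidableEq V] in
theorem exists_adj_ne [Fintype V] (hf : IsLongestCycleParam G C c f) (hG : TwoConnected G)
    {K : Finset V} (hK : K.Nonempty) (hKC : Disjoint K C) {w : V} (hw : w ∉ K) :
    ∃ u ∈ K, ∃ v, v ∉ K ∧ v ≠ w ∧ G.Adj u v := by
  have hnotMem (i : ℕ) : f i ∉ K := Finset.disjoint_right.1 hKC (hf.mem i)
  obtain h | h : f 0 ≠ w ∨ f 1 ≠ w := by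
    by_contra! hcon
    exact (hf.adj 0).ne (hcon.1.trans hcon.2.symm)
  · exact hG.exists_adj_ne hK (hnotMem 0) hw h
  · exact hG.exists_adj_ne hK (hnotMem 1) hw h

theorem exists_hasPathIn_of_adj [Fintype V] (hf : IsLongestCycleParam G C c f)
    (hG : TwoConnected G) {v z : V} (hv : v ∉ C) (hz : z ∉ C) (hvz : G.Adj v z) :
    ∃ b ∈ C, ∃ ℓ, 2 ≤ ℓ ∧ HasPathIn G Cᶜ b v ℓ := by
  obtain ⟨y, hy, ℓ, hzy, b, hb⟩ := HasPathIn.exists_of_forall_exit (G := G) (Cᶜ.erase v) C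
    (Finset.mem_erase.2 ⟨hvz.ne', Finset.mem_compl.2 hz⟩) fun K hK hzK => by
      obtain ⟨u, hu, w, hwK, hwv, huw⟩ := hf.exists_adj_ne hG ⟨z, hzK⟩
        (disjoint_compl_left.mono_left (hK.trans (Finset.erase_subset _ _)))
        fun hvK => Finset.notMem_erase v Cᶜ (hK hvK)
      refine ⟨u, hu, w, ?_, huw, hwK⟩
      simp only [Finset.mem_erase, Finset.mem_compl]
      tauto
  obtain ⟨hbC, hyb⟩ := mem_neighborsIn.1 hb
  have hvy := hzy.cons hvz (Finset.notMem_erase v _)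
  rw [Finset.insert_eq_of_mem (Finset.mem_erase.2 ⟨hvz.ne', Finset.mem_compl.2 hz⟩)] at hvy
  have hyv := hvy.reverse
  rw [Finset.insert_erase (Finset.mem_compl.2 hv)] at hyv
  have hbv := hyv.cons hyb.symm fun hbC' => Finset.mem_compl.1 hbC' hbC
  rw [Finset.insert_eq_of_mem (Finset.mem_of_mem_erase hy)] at hbv
  exact ⟨b, hbC, ℓ + 1 + 1, by omega, hbv⟩

omit [DecidableEq V] in
theorem exists_adj_compl [Fintype V] (hf : IsLongestCycleParam G C c f) (hG : TwoConnected G)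
    (hS : S.Nonempty) (hSC : Disjoint S C) (hcl : ∀ u ∈ S, ∀ w, G.Adj u w → w ∉ C → w ∈ S) :
    ∃ a ∈ C, ∃ s ∈ S, G.Adj s a := by
  obtain ⟨u, hu, w, hwS, -, huw⟩ := hf.exists_adj_ne hG hS hSC
    (Finset.disjoint_right.1 hSC (hf.mem 0))
  exact ⟨w, by_contra fun hwC => hwS (hcl u hu w huw hwC), u, hu, huw⟩

theorem rootedSystem [Fintype V] (hf : IsLongestCycleParam G C c f) (hG : TwoConnected G)
    {D : Finset V} (hDC : Disjoint D C) (hdeg : ∀ v ∈ D, c / 2 ≤ #(neighborsIn G (D ∪ C) v))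
    (hSC : Disjoint S C) (hSD : (S ∩ D).Nonempty)
    (hcl : ∀ u ∈ S, ∀ w, G.Adj u w → w ∉ C → w ∈ S)
    (hexit : ∀ K ⊂ S, (K ∩ D).Nonempty → ∃ u ∈ K, ∃ w ∈ S, G.Adj u w ∧ w ∉ K)
    {s : V} (ha : a ∈ C) (hs : s ∈ S) (hsa : G.Adj s a) :
    RootedSystem G (c / 2) a S (S ∩ D) (C.erase a) where
  subset := Finset.inter_subset_left
  nonempty := hSD
  root_notMem := Finset.disjoint_right.1 hSC ha
  disjoint := hSC.mono_right (Finset.erase_subset a C)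
  le_degree v hv := by
    obtain ⟨hvS, hvD⟩ := Finset.mem_inter.1 hv
    refine (hdeg v hvD).trans (Finset.card_le_card fun u hu => ?_)
    have huC : u ∈ D → u ∉ C := fun h => Finset.disjoint_left.1 hDC h
    have := hcl v hvS u
    simp only [mem_neighborsIn, Finset.mem_insert, Finset.mem_union, Finset.mem_inter,
      Finset.mem_erase] at hu ⊢
    tauto
  exists_exit K hK hKD B hB := by
    have hKD' : (K ∩ D).Nonempty :=
      hKD.mono (Finset.inter_subset_inter_left Finset.inter_subset_right)
    have hKC : Disjoint K C := hSC.mono_left hK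
    obtain rfl | ⟨w₀, -, hw₀, rfl⟩ := hB
    · obtain rfl | hKS := hK.eq_or_ssubset
      · exact ⟨s, hs, a, by simp, hsa, Finset.disjoint_right.1 hSC ha, Finset.notMem_erase a C⟩
      · obtain ⟨u, hu, w, hw, huw, hwK⟩ := hexit K hKS hKD'
        exact ⟨u, hu, w, by simp [hw], huw, hwK,
          fun h => Finset.disjoint_left.1 hSC hw (Finset.mem_of_mem_erase h)⟩
    · obtain ⟨u, hu, w, hwK, hww₀, huw⟩ :=
        hf.exists_adj_ne hG (hKD'.mono Finset.inter_subset_left) hKC hw₀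
      refine ⟨u, hu, w, ?_, huw, hwK, fun h => hww₀ (Finset.mem_singleton.1 h)⟩
      have := hcl u (hK hu) w huw
      simp only [Finset.mem_insert, Finset.mem_union, Finset.mem_erase]
      tauto
  length_add_card_le _ hz _ hpath hne := hf.length_add_card_le ha hpath hSC hz hne

theorem exists_isJoinedClique [Fintype V] (hf : IsLongestCycleParam G C c f)
    (hG : TwoConnected G) {D : Finset V} (hD : D.Nonempty) (hDC : Disjoint D C)
    (hdeg : ∀ v ∈ D, c / 2 ≤ #(neighborsIn G (D ∪ C) v)) :
    ∃ a ∈ C, ∃ Q, IsJoinedClique G a D (C.erase a) Q := by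
  obtain ⟨S, hSC, hSD, hcl, hexit⟩ := exists_minimal_closed (G := G) hD hDC
  obtain ⟨a, ha, s, hs, hsa⟩ :=
    hf.exists_adj_compl hG (hSD.mono Finset.inter_subset_left) hSC hcl
  obtain ⟨Q, hQ⟩ := (hf.rootedSystem hG hDC hdeg hSC hSD hcl hexit ha hs hsa).exists_isJoinedClique
  refine ⟨a, ha, Q, { hQ with
    subset := hQ.subset.trans Finset.inter_subset_right
    closed := fun u hu w hw huw => hQ.closed u hu w (Finset.mem_inter.2 ⟨?_, hw⟩) huw }⟩
  exact hcl u (Finset.mem_inter.1 (hQ.subset hu)).1 w huw (Finset.disjoint_left.1 hDC hw)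

end

end IsLongestCycleParam

/-- Twice the number of edges that `v` contributes when each edge inside `D` is shared equally
between its ends and each edge from `D` to `C` is charged to its end in `D`. -/
noncomputable def twiceEdgeShare (G : SimpleGraph V) (D C : Finset V) (v : V) : ℕ :=
  #(neighborsIn G D v) + 2 * #(neighborsIn G C v)

section

variable [DecidableEq V] {C D Q : Finset V} {c : ℕ} {f : ℕ → V} {a v : V}

namespace IsJoinedClique

theorem card_neighborsIn_add_one_le (hQ : IsJoinedClique G a D (C.erase a) Q) (hv : v ∈ Q) :
    #(neighborsIn G D v) + 1 ≤ #Q := by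
  have hle := Finset.card_le_card (hQ.neighborsIn_subset_erase hv)
  have := hQ.nonempty.card_pos
  rw [Finset.card_erase_of_mem hv] at hle
  omega

theorem card_neighborsIn_erase_add_one (hQ : IsJoinedClique G a D (C.erase a) Q) (ha : a ∈ C)
    (hv : v ∈ Q) : #(neighborsIn G (C.erase a) v) + 1 = #(neighborsIn G C v) := by
  rw [neighborsIn_erase]
  exact Finset.card_erase_add_one (mem_neighborsIn.2 ⟨ha, (hQ.adj_root v hv).symm⟩)

theorem card_add_card_neighborsIn_le (hQ : IsJoinedClique G a D (C.erase a) Q)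
    (hf : IsLongestCycleParam G C c f) (hDC : Disjoint D C) (ha : a ∈ C) (hv : v ∈ Q) :
    #Q + #(neighborsIn G C v) ≤ c / 2 + 1 := by
  have hle := hf.length_add_card_le ha (hQ.hasPathIn hv) (hDC.mono_left hQ.subset) hv
    (hQ.nonempty_neighborsIn v hv)
  have := hQ.card_neighborsIn_erase_add_one ha hv
  omega

theorem one_lt_card_neighborsIn (hQ : IsJoinedClique G a D (C.erase a) Q) (ha : a ∈ C)
    (hv : v ∈ Q) : 1 < #(neighborsIn G C v) := by
  rw [← hQ.card_neighborsIn_erase_add_one ha hv]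
  exact Nat.succ_lt_succ (hQ.nonempty_neighborsIn v hv).card_pos

theorem card_neighborsIn_eq (hQ : IsJoinedClique G a D (C.erase a) Q)
    (hf : IsLongestCycleParam G C c f) (hDC : Disjoint D C) (ha : a ∈ C)
    (hdeg : c / 2 ≤ #(neighborsIn G (D ∪ C) v)) (hone : #Q = 1) (hv : v ∈ Q) :
    #(neighborsIn G C v) = c / 2 := by
  have := hQ.card_neighborsIn_add_one_le hv
  have := hQ.card_add_card_neighborsIn_le hf hDC ha hv
  rw [card_neighborsIn_union hDC] at hdeg
  omega

theorem card_le_two (hQ : IsJoinedClique G a D (C.erase a) Q)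
    (hf : IsLongestCycleParam G C c f) (hDC : Disjoint D C) (ha : a ∈ C) (hv : v ∈ Q)
    (hshare : 2 * (c / 2 - 1) < twiceEdgeShare G D C v) : #Q ≤ 2 := by
  have := hQ.card_neighborsIn_add_one_le hv
  have := hQ.card_add_card_neighborsIn_le hf hDC ha hv
  rw [twiceEdgeShare] at hshare
  omega

theorem card_ne_two (hQ : IsJoinedClique G a D (C.erase a) Q)
    (hf : IsLongestCycleParam G C c f) (hc6 : c ≠ 6) (hc7 : c ≠ 7) (hc9 : c ≠ 9)
    (hDC : Disjoint D C) (ha : a ∈ C)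
    (hdeg : ∀ v ∈ Q, c / 2 ≤ #(neighborsIn G (D ∪ C) v)) : #Q ≠ 2 := by
  intro htwo
  obtain ⟨v₁, v₂, hne, rfl⟩ := Finset.card_eq_two.1 htwo
  have hcard (v : V) (hv : v ∈ ({v₁, v₂} : Finset V)) :
      c / 2 = #(neighborsIn G (C.erase a) v) + 2 := by
    have := hQ.card_neighborsIn_add_one_le hv
    have := hQ.card_add_card_neighborsIn_le hf hDC ha hv
    have := hQ.card_neighborsIn_erase_add_one ha hv
    have := hdeg v hv
    rw [card_neighborsIn_union hDC] at this
    omega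
  have hv₁ : v₁ ∈ ({v₁, v₂} : Finset V) := by simp
  have hv₂ : v₂ ∈ ({v₁, v₂} : Finset V) := by simp
  have hC := Finset.disjoint_left.1 (hDC.mono_left hQ.subset)
  have hle := hf.three_mul_card_add_three_le ha (hC hv₁) (hC hv₂) (hQ.isClique hv₁ hv₂ hne)
    (hQ.adj_root v₂ hv₂) (hcard v₂ hv₂).le
  have hpos := (hQ.nonempty_neighborsIn v₁ hv₁).card_pos
  have := hcard v₁ hv₁
  -- `3 * (c / 2 - 2) + 3 ≤ c` and `3 ≤ c / 2` hold together only for `c = 6`, `7` and `9`.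
  omega

theorem card_eq_one (hQ : IsJoinedClique G a D (C.erase a) Q)
    (hf : IsLongestCycleParam G C c f) (hc6 : c ≠ 6) (hc7 : c ≠ 7) (hc9 : c ≠ 9)
    (hDC : Disjoint D C) (ha : a ∈ C)
    (hdeg : ∀ v ∈ Q, c / 2 ≤ #(neighborsIn G (D ∪ C) v)) (hv : v ∈ Q)
    (hshare : 2 * (c / 2 - 1) < twiceEdgeShare G D C v) : #Q = 1 := by
  have := hQ.card_le_two hf hDC ha hv hshare
  have := hQ.card_ne_two hf hc6 hc7 hc9 hDC ha hdeg
  have := hQ.nonempty.card_pos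
  omega

end IsJoinedClique

omit [DecidableEq V] in
/-- An edge `v z` off the cycle would extend to an ear of length at least 2 ending at `v`. -/
theorem IsLongestCycleParam.mem_of_adj [Fintype V] (hf : IsLongestCycleParam G C c f)
    (hG : TwoConnected G) (hv : v ∉ C) (hone : 1 < #(neighborsIn G C v))
    (hle : c / 2 ≤ #(neighborsIn G C v)) {z : V} (hvz : G.Adj v z) : z ∈ C := by
  classical
  by_contra hz
  obtain ⟨b, hb, ℓ, hℓ, hbv⟩ := hf.exists_hasPathIn_of_adj hG hv hz hvz
  have hcard : #(neighborsIn G C v) - 1 ≤ #(neighborsIn G (C.erase b) v) := by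
    rw [neighborsIn_erase]
    exact Finset.pred_card_le_card_erase
  have := hf.length_add_card_le hb hbv disjoint_compl_left (Finset.mem_compl.2 hv)
    (Finset.card_pos.1 (by omega))
  omega

end
section

variable [DecidableEq V] {A C D Q : Finset V} {d : ℕ}

omit [DecidableEq V] in
theorem sum_card_neighborsIn_comm (S T : Finset V) :
    ∑ v ∈ S, #(neighborsIn G T v) = ∑ v ∈ T, #(neighborsIn G S v) := by
  classical
  convert Finset.sum_card_bipartiteAbove_eq_sum_card_bipartiteBelow G.Adj (s := S) (t := T)
    using 3 with v _ v
  · exact (Finset.filter_congr_decidable _ _ _).symm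
  · ext u
    rw [mem_neighborsIn, Finset.mem_bipartiteBelow, G.adj_comm]

theorem sum_twiceEdgeShare_eq (C : Finset V) (hQD : Q ⊆ D) :
    ∑ v ∈ D, twiceEdgeShare G D C v =
      ∑ v ∈ Q, (twiceEdgeShare G D C v + #(neighborsIn G (D \ Q) v)) +
        ∑ v ∈ D \ Q, twiceEdgeShare G (D \ Q) C v := by
  have hsplit (v : V) : twiceEdgeShare G D C v =
      #(neighborsIn G Q v) + twiceEdgeShare G (D \ Q) C v := by
    have := card_neighborsIn_union (G := G) (Finset.disjoint_sdiff (s := Q) (t := D)) v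
    rw [Finset.union_sdiff_of_subset hQD] at this
    rw [twiceEdgeShare, twiceEdgeShare, this, add_assoc]
  calc ∑ v ∈ D, twiceEdgeShare G D C v
      = ∑ v ∈ Q, twiceEdgeShare G D C v + ∑ v ∈ D \ Q, twiceEdgeShare G D C v := by
        rw [add_comm, Finset.sum_sdiff hQD]
    _ = ∑ v ∈ Q, twiceEdgeShare G D C v + (∑ v ∈ D \ Q, #(neighborsIn G Q v) +
          ∑ v ∈ D \ Q, twiceEdgeShare G (D \ Q) C v) := by
        simp only [hsplit, Finset.sum_add_distrib]
    _ = _ := by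
        rw [sum_card_neighborsIn_comm (D \ Q) Q, Finset.sum_add_distrib, add_assoc]

/-- For `D` minimal, deleting any nonempty `Q` from `D` destroys the density. -/
theorem exists_forall_subset_lt_sum (hA : 2 * d * #A < ∑ v ∈ A, twiceEdgeShare G A C v) :
    ∃ D ⊆ A, D.Nonempty ∧ ∀ Q ⊆ D, Q.Nonempty →
      2 * d * #Q < ∑ v ∈ Q, (twiceEdgeShare G D C v + #(neighborsIn G (D \ Q) v)) := by
  obtain ⟨D, hDA, hD⟩ := exists_minimal_le_of_wellFoundedLT
    (fun D => 2 * d * #D < ∑ v ∈ D, twiceEdgeShare G D C v) A hA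
  refine ⟨D, hDA, Finset.nonempty_iff_ne_empty.2 fun h => ?_, fun Q hQ hQne => ?_⟩
  · simpa [h] using hD.prop
  · have hsmall := hD.not_prop_of_lt (Finset.sdiff_ssubset hQ hQne)
    have hlt := hD.prop
    rw [sum_twiceEdgeShare_eq C hQ, ← Finset.card_sdiff_add_card_eq_card hQ, mul_add] at hlt
    omega

theorem exists_dense_subset (hAC : Disjoint A C)
    (hA : 2 * d * #A < ∑ v ∈ A, twiceEdgeShare G A C v) :
    ∃ D ⊆ A, D.Nonempty ∧ (∀ v ∈ D, d + 1 ≤ #(neighborsIn G (D ∪ C) v)) ∧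
      ∀ Q ⊆ D, Q.Nonempty → (∀ u ∈ Q, ∀ w ∈ D, G.Adj u w → w ∈ Q) →
        ∃ v ∈ Q, 2 * d < twiceEdgeShare G D C v := by
  obtain ⟨D, hDA, hDne, hD⟩ := exists_forall_subset_lt_sum hA
  refine ⟨D, hDA, hDne, fun v hv => ?_, fun Q hQ hQne hcl => ?_⟩
  · have hlt := hD {v} (Finset.singleton_subset_iff.2 hv) (Finset.singleton_nonempty v)
    have hle : #(neighborsIn G (D \ {v}) v) ≤ #(neighborsIn G D v) := by
      rw [← Finset.erase_eq, neighborsIn_erase]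
      exact Finset.card_erase_le
    rw [Finset.sum_singleton, Finset.card_singleton, twiceEdgeShare] at hlt
    rw [card_neighborsIn_union (hAC.mono_left hDA)]
    omega
  · have hempty : ∀ v ∈ Q, neighborsIn G (D \ Q) v = ∅ := by
      refine fun v hv => Finset.eq_empty_of_forall_notMem fun w hw => ?_
      rw [mem_neighborsIn, Finset.mem_sdiff] at hw
      exact hw.1.2 (hcl v hv w hw.1.1 hw.2)
    refine Finset.exists_lt_of_sum_lt ?_
    calc ∑ _v ∈ Q, 2 * d = 2 * d * #Q := by rw [Finset.sum_const, smul_eq_mul, mul_comm]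
      _ < _ := hD Q hQ hQne
      _ = _ := Finset.sum_congr rfl fun v hv => by rw [hempty v hv, Finset.card_empty, add_zero]

theorem two_mul_ncard_edges_eq [Fintype V] (C : Finset V) :
    2 * {e ∈ G.edgeSet | ¬ ∀ x ∈ e, x ∈ C}.ncard = ∑ v ∈ Cᶜ, twiceEdgeShare G Cᶜ C v := by
  classical
  let H := G.deleteEdges {e | ∀ x ∈ e, x ∈ C}
  have hadj (v w : V) : H.Adj v w ↔ G.Adj v w ∧ (v ∈ C → w ∉ C) := by
    simp only [H, deleteEdges_adj, Set.mem_ofPred_eq, Sym2.ball, not_and]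
  have hdeg : ∀ v ∈ C, H.degree v = #(neighborsIn G Cᶜ v) := fun v hv => by
    rw [← card_neighborFinset_eq_degree]
    congr 1
    ext w
    simp [hadj, hv, and_comm]
  have hdeg' : ∀ v ∈ Cᶜ, H.degree v = #(neighborsIn G Cᶜ v) + #(neighborsIn G C v) := fun v hv => by
    rw [← card_neighborsIn_union disjoint_compl_left, ← card_neighborFinset_eq_degree]
    congr 1
    ext w
    simp only [mem_neighborFinset, hadj, Finset.mem_compl.1 hv, mem_neighborsIn, Finset.union_comm,
      Finset.union_compl, Finset.mem_univ, false_imp_iff, true_and, and_true]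
  have hedges : {e ∈ G.edgeSet | ¬ ∀ x ∈ e, x ∈ C} = H.edgeFinset := by
    rw [coe_edgeFinset, edgeSet_deleteEdges]
    rfl
  rw [hedges, Set.ncard_coe_finset, ← sum_degrees_eq_twice_card_edges,
    ← Finset.sum_add_sum_compl C, Finset.sum_congr rfl hdeg, Finset.sum_congr rfl hdeg',
    sum_card_neighborsIn_comm C, ← Finset.sum_add_distrib]
  exact Finset.sum_congr rfl fun v _ => by rw [twiceEdgeShare]; ring

end

end

open scoped Finset in
theorem stmt18_general {V : Type*} [Fintype V] (G : SimpleGraph V) (n c : ℕ)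
    (hn : Fintype.card V = n) (hG : TwoConnected G)
    (v0 : V) (p : G.Walk v0 v0) (hC : IsLongestCycle G p) (hc : p.length = c)
    (hc6 : c ≠ 6) (hc7 : c ≠ 7) (hc9 : c ≠ 9)
    (hedges : (c / 2 - 1) * (n - c) <
      {e ∈ G.edgeSet | ¬ ∀ x ∈ e, x ∈ p.support}.ncard) :
    ∃ u : V, u ∉ p.support ∧ (∀ w : V, G.Adj u w → w ∈ p.support) ∧
      {w : V | w ∈ p.support ∧ G.Adj u w}.ncard = c / 2 := by
  classical
  subst hn hc
  have hf := hC.isLongestCycleParam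
  simp only [← List.mem_toFinset] at hedges ⊢
  generalize p.support.toFinset = C at *
  have hcard : #Cᶜ = Fintype.card V - p.length := by rw [Finset.card_compl, hf.card_eq]
  have hdense : 2 * (p.length / 2 - 1) * #Cᶜ < ∑ v ∈ Cᶜ, twiceEdgeShare G Cᶜ C v := by
    rw [← two_mul_ncard_edges_eq, hcard, mul_assoc]
    omega
  obtain ⟨D, hDA, hDne, hdeg, hshare⟩ := exists_dense_subset disjoint_compl_left hdense
  have hDC : Disjoint D C := disjoint_compl_left.mono_left hDA
  have hdeg' (v : V) (hv : v ∈ D) : p.length / 2 ≤ #(neighborsIn G (D ∪ C) v) :=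
    (by omega : _ ≤ _).trans (hdeg v hv)
  obtain ⟨a, ha, Q, hQ⟩ := hf.exists_isJoinedClique hG hDne hDC hdeg'
  obtain ⟨u, hu, hushare⟩ := hshare Q hQ.subset hQ.nonempty hQ.closed
  have hone : #Q = 1 :=
    hQ.card_eq_one hf hc6 hc7 hc9 hDC ha (fun v hv => hdeg' v (hQ.subset hv)) hu hushare
  have huC : u ∉ C := Finset.disjoint_left.1 hDC (hQ.subset hu)
  have hcardu := hQ.card_neighborsIn_eq hf hDC ha (hdeg' u (hQ.subset hu)) hone hu
  refine ⟨u, huC, fun w huw => ?_, ?_⟩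
  · exact hf.mem_of_adj hG huC (hQ.one_lt_card_neighborsIn ha hu) hcardu.ge huw
  · rw [← hcardu, ← Set.ncard_coe_finset]
    congr 1
    ext w
    simp

/-- If `G` is 2-connected on `n` vertices, `C` a longest cycle of length `c` with
`10 ≤ c ≤ n-1`, and the number of edges with at most one endpoint on `C` exceeds
`(⌊c/2⌋-1)(n-c)`, then some vertex outside `C` has all its neighbours on `C` and has
exactly `⌊c/2⌋` neighbours on `C`. -/
theorem stmt18 {V : Type*} [Fintype V] (G : SimpleGraph V) (n c : ℕ)
    (hn : Fintype.card V = n) (hG : TwoConnected G)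
    (v0 : V) (p : G.Walk v0 v0) (hC : IsLongestCycle G p) (hc : p.length = c)
    (h10 : 10 ≤ c) (hcn : c ≤ n - 1)
    (hedges : (c / 2 - 1) * (n - c) <
      {e ∈ G.edgeSet | ¬ ∀ x ∈ e, x ∈ p.support}.ncard) :
    ∃ u : V, u ∉ p.support ∧ (∀ w : V, G.Adj u w → w ∈ p.support) ∧
      {w : V | w ∈ p.support ∧ G.Adj u w}.ncard = c / 2 :=
  stmt18_general G n c hn hG v0 p hC hc (by omega) (by omega) (by omega) hedges
end
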